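/- arXiv:2010.09502 — 2 statements merged into one kernel-verified Lean document; each statement's English description precedes it below -/
import Mathlib

section
/- For every u ∈ [−π, π] with u ≠ 0 and every n ∈ ℕ, n ≥ 1, the improper integral ∫₀^∞ x · K₀ˢ(2x·cosh u) · Im[J_{in/2}(x)²] dx converges and equals sinh(πn/2) · ( 2·sin(nu)/(π·sinh(πn)·sinh(2u)) − 1/(2π·cosh(πn/2)·cosh u) ). -/
open MeasureTheory Filter Topology

/-- Bessel function of the first kind of complex order `ν` at real `x > 0`. -/
noncomputable def besselJ (ν : ℂ) (x : ℝ) : ℂ :=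
  ∑' k : ℕ, ((-1 : ℂ) ^ k * Complex.exp ((ν + 2 * k) * (Real.log (x / 2) : ℂ))) /
    ((Nat.factorial k : ℂ) * Complex.Gamma (ν + k + 1))

/-- Bessel function of the second kind of complex order `ν` at real `x > 0`. -/
noncomputable def besselY (ν : ℂ) (x : ℝ) : ℂ :=
  (besselJ ν x * Complex.cos (Real.pi * ν) - besselJ (-ν) x) / Complex.sin (Real.pi * ν)

/-- Bessel function of the first kind of order `0` (real-valued). -/
noncomputable def besselJ0 (x : ℝ) : ℝ :=
  ∑' k : ℕ, (-1 : ℝ) ^ k * (x / 2) ^ (2 * k) / (Nat.factorial k : ℝ) ^ 2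

/-- Lommel function `S_{-1,0}` for `x > 0`. -/
noncomputable def lommelS (x : ℝ) : ℝ :=
  ∫ t in Set.Ioi (0 : ℝ), t * Real.exp (-x * Real.sinh t)

/-- Struve function `K₀` for `x > 0`. -/
noncomputable def struveK0 (x : ℝ) : ℝ :=
  (2 / Real.pi) * ∫ t in Set.Ioi (0 : ℝ), Real.exp (-x * Real.sinh t)

/-- Bessel function of the second kind of order `0` (real-valued, for `x > 0`). -/
noncomputable def besselY0 (x : ℝ) : ℝ :=
  (2 / Real.pi) * ((Real.log (x / 2) + Real.eulerMascheroniConstant) * besselJ0 x +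
    ∑' k : ℕ, (-1 : ℝ) ^ k * ((harmonic (k + 1) : ℚ) : ℝ) * (x / 2) ^ (2 * (k + 1)) /
      (Nat.factorial (k + 1) : ℝ) ^ 2)

/-- Struve function `H₀`: `H₀ = K₀ˢ + Y₀`. -/
noncomputable def struveH0 (x : ℝ) : ℝ := struveK0 x + besselY0 x


noncomputable def bPhi (ν z : ℂ) : ℂ :=
  ∑' k : ℕ, (-z) ^ k / ((Nat.factorial k : ℂ) * Complex.Gamma (ν + k + 1))

lemma gamma_lower (ν : ℂ) (hν : 0 ≤ ν.re) (k : ℕ) :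
    ‖Complex.Gamma (ν + 1)‖ * (Nat.factorial k : ℝ) ≤ ‖Complex.Gamma (ν + k + 1)‖ := by
  induction k with
  | zero => simp
  | succ k ih =>
    have hne : ν + k + 1 ≠ 0 := by
      intro h
      have := congrArg Complex.re h
      simp at this
      have : (0:ℝ) ≤ k := Nat.cast_nonneg k
      linarith
    have h1 : Complex.Gamma (ν + (k + 1 : ℕ) + 1) = (ν + k + 1) * Complex.Gamma (ν + k + 1) := by
      rw [← Complex.Gamma_add_one _ hne]; push_cast; ring_nf
    rw [h1, norm_mul, Nat.factorial_succ]
    have h2 : ((k:ℝ) + 1) ≤ ‖ν + k + 1‖ := by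
      refine le_trans ?_ (Complex.re_le_norm _)
      simp; linarith
    push_cast
    calc _ = ((k:ℝ)+1) * (‖Complex.Gamma (ν + 1)‖ * (Nat.factorial k : ℝ)) := by ring
      _ ≤ _ := by gcongr

lemma gamma_ne (ν : ℂ) (hν : 0 ≤ ν.re) (k : ℕ) : Complex.Gamma (ν + k + 1) ≠ 0 := by
  apply Complex.Gamma_ne_zero_of_re_pos
  simp
  have : (0:ℝ) ≤ k := Nat.cast_nonneg k
  linarith

lemma gamma_ne1 (ν : ℂ) (hν : 0 ≤ ν.re) : Complex.Gamma (ν + 1) ≠ 0 := by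
  simpa using gamma_ne ν hν 0

lemma bterm_bound (ν : ℂ) (hν : 0 ≤ ν.re) (k : ℕ) :
    ‖1 / ((Nat.factorial k : ℂ) * Complex.Gamma (ν + k + 1))‖
      ≤ ‖Complex.Gamma (ν + 1)‖⁻¹ * ((Nat.factorial k : ℝ)⁻¹ * (Nat.factorial k : ℝ)⁻¹) := by
  have hG : 0 < ‖Complex.Gamma (ν + 1)‖ := norm_pos_iff.mpr (gamma_ne1 ν hν)
  have h := gamma_lower ν hν k
  have hk : (0:ℝ) < Nat.factorial k := by positivity
  rw [norm_div, norm_mul, norm_one, Complex.norm_natCast, one_div, mul_inv]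
  calc _ ≤ (Nat.factorial k : ℝ)⁻¹ * (‖Complex.Gamma (ν + 1)‖ * (Nat.factorial k : ℝ))⁻¹ := by
        gcongr
    _ = _ := by rw [mul_inv]; ring

lemma bterm_bound' (ν z : ℂ) (hν : 0 ≤ ν.re) (k : ℕ) :
    ‖(-z) ^ k / ((Nat.factorial k : ℂ) * Complex.Gamma (ν + k + 1))‖
      ≤ ‖Complex.Gamma (ν + 1)‖⁻¹ * (‖z‖ ^ k / (Nat.factorial k : ℝ)) := by
  have h := bterm_bound ν hν k
  have e : (-z) ^ k / ((Nat.factorial k : ℂ) * Complex.Gamma (ν + k + 1))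
     = (-z) ^ k * (1 / ((Nat.factorial k : ℂ) * Complex.Gamma (ν + k + 1))) := by ring
  rw [e, norm_mul, norm_pow, norm_neg]
  have h1 : (Nat.factorial k : ℝ)⁻¹ ≤ 1 := by
    apply inv_le_one_of_one_le₀
    exact_mod_cast Nat.one_le_iff_ne_zero.mpr (Nat.factorial_ne_zero k)
  calc _ ≤ ‖z‖^k * (‖Complex.Gamma (ν + 1)‖⁻¹ * ((Nat.factorial k : ℝ)⁻¹ * 1)) := by
        gcongr
        exact h.trans (by gcongr)
    _ = _ := by ring

lemma bsummable (ν z : ℂ) (hν : 0 ≤ ν.re) :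
    Summable (fun k : ℕ => ‖(-z) ^ k / ((Nat.factorial k : ℂ) * Complex.Gamma (ν + k + 1))‖) := by
  refine Summable.of_nonneg_of_le (fun _ => norm_nonneg _) (fun k => bterm_bound' ν z hν k) ?_
  exact (Real.summable_pow_div_factorial ‖z‖).mul_left _

lemma bPhi_rec (ν z : ℂ) (hν : 0 ≤ ν.re) :
    bPhi ν z = (ν + 1) * bPhi (ν + 1) z - z * bPhi (ν + 2) z := by
  have hν1 : 0 ≤ (ν + 1).re := by simp; linarith
  have hν2 : 0 ≤ (ν + 2).re := by simp; linarith
  have s0 := (bsummable ν z hν).of_norm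
  have s1 := (bsummable (ν+1) z hν1).of_norm
  have s2 := (bsummable (ν+2) z hν2).of_norm
  have key : ∀ k : ℕ, (-z) ^ k / ((Nat.factorial k : ℂ) * Complex.Gamma (ν + k + 1))
      - (ν + 1) * ((-z) ^ k / ((Nat.factorial k : ℂ) * Complex.Gamma (ν + 1 + k + 1)))
      = k * ((-z) ^ k / ((Nat.factorial k : ℂ) * Complex.Gamma (ν + 1 + k + 1))) := by
    intro k
    have hne : ν + k + 1 ≠ 0 := by
      intro h
      have := congrArg Complex.re h
      simp at this
      have : (0:ℝ) ≤ k := Nat.cast_nonneg k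
      linarith
    have h1 : Complex.Gamma (ν + 1 + k + 1) = (ν + k + 1) * Complex.Gamma (ν + k + 1) := by
      rw [← Complex.Gamma_add_one _ hne]; ring_nf
    have h2 := gamma_ne ν hν k
    have h3 : (Nat.factorial k : ℂ) ≠ 0 := by exact_mod_cast Nat.factorial_ne_zero k
    rw [h1]; field_simp; ring
  have s3 : Summable (fun k : ℕ => (k:ℂ) * ((-z) ^ k / ((Nat.factorial k : ℂ) * Complex.Gamma (ν + 1 + k + 1)))) := by
    simpa only [key] using s0.sub (s1.mul_left (ν+1))
  have e : bPhi ν z - (ν+1) * bPhi (ν+1) z = - z * bPhi (ν+2) z := by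
    unfold bPhi
    rw [← tsum_mul_left, ← (s0.tsum_sub (s1.mul_left (ν+1)))]
    simp only [key]
    rw [s3.tsum_eq_zero_add, ← tsum_mul_left]
    have z0 : ((0:ℕ):ℂ) * ((-z) ^ 0 / ((Nat.factorial 0 : ℂ) * Complex.Gamma (ν + 1 + ((0:ℕ):ℂ) + 1))) = 0 := by simp
    rw [z0, zero_add]
    congr 1; ext k
    have h3 : (Nat.factorial k : ℂ) ≠ 0 := by exact_mod_cast Nat.factorial_ne_zero k
    have h4 : ((k:ℂ) + 1) ≠ 0 := by exact_mod_cast Nat.succ_ne_zero k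
    have h5 := gamma_ne (ν+2) hν2 k
    have h6 : ν + 1 + ((k + 1 : ℕ) : ℂ) + 1 = ν + 2 + k + 1 := by push_cast; ring
    rw [h6, Nat.factorial_succ]
    push_cast
    field_simp
    ring
  linear_combination e

lemma bPhi_deriv (ν z : ℂ) (hν : 0 ≤ ν.re) : HasDerivAt (bPhi ν) (- bPhi (ν + 1) z) z := by
  have hν1 : 0 ≤ (ν + 1).re := by simp; linarith
  set R : ℝ := ‖z‖ + 1
  have hR : 0 ≤ R := by positivity
  set C := ‖Complex.Gamma (ν + 1)‖⁻¹
  have hsum : Summable (fun k : ℕ => C * ((k:ℝ) * R ^ (k-1) / (Nat.factorial k : ℝ))) := by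
    apply Summable.mul_left
    rw [← summable_nat_add_iff 1]
    refine (Real.summable_pow_div_factorial R).congr ?_
    intro k
    rw [Nat.factorial_succ]; push_cast
    have : ((k:ℝ)+1) ≠ 0 := by positivity
    field_simp
  have := hasDerivAt_tsum_of_isPreconnected (𝕜 := ℂ) (t := Metric.ball (0:ℂ) R)
    (g := fun (k:ℕ) z => (-z) ^ k / ((Nat.factorial k : ℂ) * Complex.Gamma (ν + k + 1)))
    (g' := fun (k:ℕ) z => (k:ℂ) * (-z) ^ (k-1) * (-1) / ((Nat.factorial k : ℂ) * Complex.Gamma (ν + k + 1)))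
    (y₀ := 0) (y := z) hsum Metric.isOpen_ball (convex_ball (0:ℂ) R).isPreconnected ?_ ?_ ?_
    (bsummable ν 0 hν).of_norm ?_
  · refine this.congr_deriv ?_
    have s : Summable (fun (k:ℕ) => (k:ℂ) * (-z) ^ (k-1) * (-1) / ((Nat.factorial k : ℂ) * Complex.Gamma (ν + k + 1))) := by
      rw [← summable_nat_add_iff 1]
      refine ((bsummable (ν+1) z hν1).of_norm.neg).congr ?_
      intro k
      have h3 : (Nat.factorial k : ℂ) ≠ 0 := by exact_mod_cast Nat.factorial_ne_zero k
      have h4 : ((k:ℂ) + 1) ≠ 0 := by exact_mod_cast Nat.succ_ne_zero k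
      have h5 := gamma_ne (ν+1) hν1 k
      have h6 : ν + ((k + 1 : ℕ) : ℂ) + 1 = ν + 1 + k + 1 := by push_cast; ring
      rw [h6, Nat.factorial_succ]
      push_cast
      field_simp
    rw [s.tsum_eq_zero_add]
    unfold bPhi
    rw [← tsum_neg]
    simp only [Nat.cast_zero, zero_mul, zero_div, zero_add]
    congr 1; ext k
    have h3 : (Nat.factorial k : ℂ) ≠ 0 := by exact_mod_cast Nat.factorial_ne_zero k
    have h4 : ((k:ℂ) + 1) ≠ 0 := by exact_mod_cast Nat.succ_ne_zero k
    have h5 := gamma_ne (ν+1) hν1 k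
    have h6 : ν + ((k + 1 : ℕ) : ℂ) + 1 = ν + 1 + k + 1 := by push_cast; ring
    rw [h6, Nat.factorial_succ]
    push_cast
    field_simp
  · intro k y _
    apply HasDerivAt.div_const
    exact ((hasDerivAt_id y).neg).pow k
  · intro k y hy
    have hy' : ‖y‖ ≤ R := by simpa using (Metric.mem_ball.mp hy).le
    have hb := bterm_bound ν hν k
    have e : (k:ℂ) * (-y) ^ (k-1) * (-1) / ((Nat.factorial k : ℂ) * Complex.Gamma (ν + k + 1))
      = -((k:ℂ) * (-y) ^ (k-1)) * (1 / ((Nat.factorial k : ℂ) * Complex.Gamma (ν + k + 1))) := by ring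
    rw [e, norm_mul, norm_neg, norm_mul, norm_pow, norm_neg, Complex.norm_natCast]
    have h1 : (Nat.factorial k : ℝ)⁻¹ ≤ 1 := by
      apply inv_le_one_of_one_le₀
      exact_mod_cast Nat.one_le_iff_ne_zero.mpr (Nat.factorial_ne_zero k)
    calc _ ≤ ((k:ℝ) * R^(k-1)) * (C * ((Nat.factorial k : ℝ)⁻¹ * 1)) := by
          gcongr
          exact hb.trans (by gcongr)
      _ = _ := by ring
  · simp [R]; positivity
  · simp [R]

lemma besselJ_eq (ν : ℂ) (x : ℝ) (hx : 0 < x) :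
    besselJ ν x = Complex.exp (ν * (Real.log (x / 2) : ℂ)) * bPhi ν (((x/2)^2 : ℝ) : ℂ) := by
  unfold besselJ bPhi
  rw [← tsum_mul_left]
  congr 1; ext k
  have h : Complex.exp ((Real.log (x/2) : ℝ) : ℂ) = ((x/2 : ℝ) : ℂ) := by
    rw [← Complex.ofReal_exp, Real.exp_log (by positivity)]
  have : Complex.exp ((ν + 2 * k) * (Real.log (x / 2) : ℂ))
     = Complex.exp (ν * (Real.log (x / 2) : ℂ)) * (((x/2)^2 : ℝ) : ℂ) ^ k := by
    rw [add_mul, Complex.exp_add]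
    congr 1
    have : (2 * (k:ℂ) * (Real.log (x / 2) : ℂ)) = ((2 * k : ℕ) : ℂ) * (Real.log (x / 2) : ℂ) := by push_cast; ring
    rw [this, Complex.exp_nat_mul, h, pow_mul]; push_cast; rfl
  rw [this, neg_pow]
  ring

lemma bPhi_real_deriv (ν : ℂ) (hν : 0 ≤ ν.re) (x : ℝ) :
    HasDerivAt (fun x : ℝ => bPhi ν (((x/2)^2 : ℝ) : ℂ))
      (- bPhi (ν + 1) (((x/2)^2 : ℝ) : ℂ) * (x / 2 : ℂ)) x := by
  have h1 := bPhi_deriv ν (((x/2)^2 : ℝ) : ℂ) hν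
  have h2 : HasDerivAt (fun x : ℝ => (((x/2)^2 : ℝ) : ℂ)) ((x/2 : ℝ) : ℂ) x := by
    apply HasDerivAt.ofReal_comp
    have := ((hasDerivAt_id' x).div_const 2).pow 2
    refine this.congr_deriv ?_
    simp; ring
  have := h1.comp x h2
  refine this.congr_deriv ?_
  push_cast; rfl

noncomputable def wA (ν : ℂ) (x : ℝ) : ℂ :=
  Complex.exp (ν * (Real.log (x / 2) : ℂ) + (1/2) * (Real.log x : ℂ))
noncomputable def bw (ν : ℂ) (x : ℝ) : ℂ := wA ν x * bPhi ν (((x/2)^2 : ℝ) : ℂ)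
noncomputable def bw' (ν : ℂ) (x : ℝ) : ℂ :=
  wA ν x * ((ν + 1/2) / x * bPhi ν (((x/2)^2 : ℝ) : ℂ) - (x/2) * bPhi (ν+1) (((x/2)^2 : ℝ) : ℂ))

lemma wA_deriv (ν : ℂ) (x : ℝ) (hx : 0 < x) : HasDerivAt (wA ν) ((ν + 1/2) / x * wA ν x) x := by
  have h1 : HasDerivAt (fun x : ℝ => (Real.log (x / 2) : ℂ)) ((x⁻¹ : ℝ) : ℂ) x := by
    apply HasDerivAt.ofReal_comp
    have := ((hasDerivAt_id' x).div_const 2).log (by positivity)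
    refine this.congr_deriv ?_
    field_simp
  have h2 : HasDerivAt (fun x : ℝ => (Real.log x : ℂ)) ((x⁻¹ : ℝ) : ℂ) x :=
    (Real.hasDerivAt_log hx.ne').ofReal_comp
  have := ((h1.const_mul ν).add (h2.const_mul (1/2))).cexp
  refine this.congr_deriv ?_
  have e : wA ν x = Complex.exp (ν * (Real.log (x / 2) : ℂ) + (1/2) * (Real.log x : ℂ)) := rfl
  rw [e]
  simp only [Pi.add_apply]
  push_cast; ring

lemma bw_deriv (ν : ℂ) (hν : 0 ≤ ν.re) (x : ℝ) (hx : 0 < x) : HasDerivAt (bw ν) (bw' ν x) x := by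
  have := (wA_deriv ν x hx).mul (bPhi_real_deriv ν hν x)
  refine this.congr_deriv ?_
  simp only [bw']; ring

lemma bw'_deriv (ν : ℂ) (hν : 0 ≤ ν.re) (x : ℝ) (hx : 0 < x) :
    HasDerivAt (bw' ν) (-(1 + (1/4 - ν^2)/x^2) * bw ν x) x := by
  have hν1 : 0 ≤ (ν + 1).re := by simp; linarith
  have hxc : (x:ℂ) ≠ 0 := by exact_mod_cast hx.ne'
  have h0 : HasDerivAt (fun x : ℝ => (x:ℂ)) 1 x := (hasDerivAt_id x).ofReal_comp
  have h1 : HasDerivAt (fun x : ℝ => (ν + 1/2) / (x:ℂ)) (-(ν+1/2)/(x:ℂ)^2) x := by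
    have := (hasDerivAt_const x (ν + 1/2)).div h0 hxc
    refine this.congr_deriv ?_
    ring
  have := (wA_deriv ν x hx).mul ((h1.mul (bPhi_real_deriv ν hν x)).sub
    ((h0.div_const 2).mul (bPhi_real_deriv (ν+1) hν1 x)))
  refine this.congr_deriv ?_
  have hrec := bPhi_rec ν (((x/2)^2 : ℝ) : ℂ) hν
  have e2 : ν + 1 + 1 = ν + 2 := by ring
  simp only [bw, e2, Pi.mul_apply, Pi.sub_apply]
  have e3 : ((((x/2)^2 : ℝ)) : ℂ) = (x:ℂ)^2/4 := by push_cast; ring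
  rw [e3] at hrec ⊢
  generalize bPhi ν ((x:ℂ)^2/4) = p0 at hrec ⊢
  generalize bPhi (ν+1) ((x:ℂ)^2/4) = p1 at hrec ⊢
  generalize bPhi (ν+2) ((x:ℂ)^2/4) = p2 at hrec ⊢
  field_simp
  linear_combination (wA ν x) * (16 * (x:ℂ)^2) * hrec

lemma bw_sq (ν : ℂ) (x : ℝ) (hx : 0 < x) : besselJ ν x ^ 2 = bw ν x ^ 2 / x := by
  have h : Complex.exp ((Real.log x : ℝ) : ℂ) = (x : ℂ) := by
    rw [← Complex.ofReal_exp, Real.exp_log hx]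
  have h2 : wA ν x ^ 2 = Complex.exp (ν * (Real.log (x / 2) : ℂ))^2 * x := by
    unfold wA
    rw [Complex.exp_add, mul_pow, ← Complex.exp_nat_mul ((1/2) * (Real.log x : ℂ)), ← h]
    congr 2; push_cast; ring
  have hxc : (x:ℂ) ≠ 0 := by exact_mod_cast hx.ne'
  rw [besselJ_eq ν x hx, bw, mul_pow, mul_pow, h2]
  field_simp

lemma besselJ_bdd01 (ν : ℂ) (hν : ν.re = 0) : ∃ B, ∀ x : ℝ, 0 < x → x ≤ 1 → ‖besselJ ν x‖ ≤ B := by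
  have hc : Continuous (fun x : ℝ => bPhi ν (((x/2)^2 : ℝ) : ℂ)) :=
    continuous_iff_continuousAt.mpr fun x => (bPhi_real_deriv ν hν.ge x).continuousAt
  obtain ⟨B, hB⟩ := (isCompact_Icc (a := (0:ℝ)) (b := 1)).exists_bound_of_continuousOn hc.continuousOn
  refine ⟨B, fun x hx hx1 => ?_⟩
  rw [besselJ_eq ν x hx, norm_mul, Complex.norm_exp]
  simp only [Complex.mul_re, hν, Complex.ofReal_im, mul_zero, zero_mul, sub_zero, Real.exp_zero, one_mul]
  exact hB x ⟨hx.le, hx1⟩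

lemma besselJ_cont (ν : ℂ) (hν : 0 ≤ ν.re) : ContinuousOn (besselJ ν) (Set.Ioi 0) := by
  have hc : Continuous (fun x : ℝ => bPhi ν (((x/2)^2 : ℝ) : ℂ)) :=
    continuous_iff_continuousAt.mpr fun x => (bPhi_real_deriv ν hν x).continuousAt
  have : ContinuousOn (fun x : ℝ => Complex.exp (ν * (Real.log (x / 2) : ℂ)) * bPhi ν (((x/2)^2 : ℝ) : ℂ)) (Set.Ioi 0) := by
    refine ContinuousOn.mul ?_ hc.continuousOn
    refine Complex.continuous_exp.comp_continuousOn (continuousOn_const.mul ?_)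
    refine Complex.continuous_ofReal.comp_continuousOn ?_
    refine ContinuousOn.log (by fun_prop) ?_
    intro x hx; simp at hx; positivity
  exact this.congr fun x hx => besselJ_eq ν x hx


lemma ode_bound (q : ℝ) (hq : 0 ≤ q) (w w' : ℝ → ℂ) (h1 : ∀ x > 0, HasDerivAt w (w' x) x)
    (h2 : ∀ x > 0, HasDerivAt w' ((-(1 + q / x^2) : ℝ) • w x) x) :
    ∃ B, ∀ x ≥ 1, ‖w x‖ ≤ B ∧ ‖w' x‖ ≤ B := by
  set M : ℝ → ℝ := fun x => (‖w x‖^2 + ‖w' x‖^2) * Real.exp (q / x) with hM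
  have hder : ∀ x > 0, HasDerivAt M ((2 * inner ℝ (w x) (w' x) + 2 * inner ℝ (w' x) ((-(1 + q / x^2) : ℝ) • w x))
      * Real.exp (q/x) + (‖w x‖^2 + ‖w' x‖^2) * (Real.exp (q/x) * (-q/x^2))) x := by
    intro x hx
    have h3 : HasDerivAt (fun x : ℝ => q / x) (-q/x^2) x := by
      have := (hasDerivAt_const x q).div (hasDerivAt_id' x) hx.ne'
      refine this.congr_deriv ?_
      ring
    exact ((h1 x hx).norm_sq.add (h2 x hx).norm_sq).mul h3.exp
  have hanti : AntitoneOn M (Set.Ici 1) := by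
    apply antitoneOn_of_deriv_nonpos (convex_Ici 1)
    · intro x hx
      exact (hder x (lt_of_lt_of_le one_pos hx)).continuousAt.continuousWithinAt
    · intro x hx
      rw [interior_Ici] at hx
      exact (hder x (lt_trans one_pos hx)).differentiableAt.differentiableWithinAt
    · intro x hx
      rw [interior_Ici] at hx
      have hx0 : 0 < x := lt_trans one_pos hx
      rw [(hder x hx0).deriv, real_inner_smul_right, real_inner_comm (w' x) (w x)]
      have hi := abs_real_inner_le_norm (w' x) (w x)
      have hi2 : |inner ℝ (w' x) (w x)| ≤ (‖w x‖^2 + ‖w' x‖^2)/2 := by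
        nlinarith [sq_nonneg (‖w x‖ - ‖w' x‖)]
      have hi3 := neg_abs_le (inner ℝ (w' x) (w x))
      have : (2 * inner ℝ (w' x) (w x) + 2 * (-(1 + q / x^2) * inner ℝ (w' x) (w x)))
      * Real.exp (q/x) + (‖w x‖^2 + ‖w' x‖^2) * (Real.exp (q/x) * (-q/x^2))
        = -(Real.exp (q/x) * (q/x^2) * (2 * inner ℝ (w' x) (w x) + (‖w x‖^2 + ‖w' x‖^2))) := by ring
      rw [this, neg_nonpos]
      refine mul_nonneg (by positivity) (by linarith)
  refine ⟨Real.sqrt (M 1), fun x hx => ?_⟩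
  have hx0 : 0 < x := lt_of_lt_of_le one_pos hx
  have h4 := hanti (Set.self_mem_Ici) (Set.mem_Ici.mpr hx) hx
  have h5 : 1 ≤ Real.exp (q/x) := Real.one_le_exp (by positivity)
  have h6 : ‖w x‖^2 + ‖w' x‖^2 ≤ M 1 := by
    refine le_trans ?_ h4
    exact le_mul_of_one_le_right (by positivity) h5
  constructor <;> apply Real.le_sqrt_of_sq_le <;> nlinarith [sq_nonneg ‖w x‖, sq_nonneg ‖w' x‖]

lemma integrableOn_inv_sq (x : ℝ) (hx : 0 < x) (C : ℝ) : IntegrableOn (fun t : ℝ => C / t^2) (Set.Ioi x) := by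
  have := (integrableOn_Ioi_rpow_of_lt (a := -2) (by norm_num) hx).const_mul C
  refine IntegrableOn.congr_fun this ?_ measurableSet_Ioi
  intro t ht
  have ht0 : 0 < t := lt_trans hx ht
  simp only
  rw [Real.rpow_neg ht0.le]; norm_cast

lemma integral_inv_sq (x : ℝ) (hx : 0 < x) (C : ℝ) : ∫ t in Set.Ioi x, C / t^2 = C / x := by
  have h : ∫ t in Set.Ioi x, C / t^2 = ∫ t in Set.Ioi x, C * t ^ (-2:ℝ) := by
    refine setIntegral_congr_fun measurableSet_Ioi ?_
    intro t ht
    have ht0 : 0 < t := lt_trans hx ht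
    simp only
    rw [Real.rpow_neg ht0.le]; norm_cast
  rw [h, integral_const_mul, integral_Ioi_rpow_of_lt (by norm_num) hx]
  norm_num [Real.rpow_neg_one]
  rfl

lemma ode_asymp (q : ℝ) (hq : 0 ≤ q) (w w' : ℝ → ℂ) (h1 : ∀ x > 0, HasDerivAt w (w' x) x)
    (h2 : ∀ x > 0, HasDerivAt w' ((-(1 + q / x^2) : ℝ) • w x) x) :
    ∃ e l : ℂ, Tendsto (fun T : ℝ => (∫ x in (1:ℝ)..T, w x ^ 2 / x) - e * Real.log T) atTop (𝓝 l) := by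
  obtain ⟨B, hB⟩ := ode_bound q hq w w' h1 h2
  have hB0 : 0 ≤ B := (norm_nonneg _).trans (hB 1 le_rfl).1
  have cw : ContinuousOn w (Set.Ici 1) := fun x hx =>
    (h1 x (lt_of_lt_of_le one_pos hx)).continuousAt.continuousWithinAt
  have cw' : ContinuousOn w' (Set.Ici 1) := fun x hx =>
    (h2 x (lt_of_lt_of_le one_pos hx)).continuousAt.continuousWithinAt
  have cx : ContinuousOn (fun x : ℝ => (x:ℂ)) (Set.Ici 1) := Complex.continuous_ofReal.continuousOn
  have nx : ∀ x ∈ Set.Ici (1:ℝ), (x:ℂ) ≠ 0 := by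
    intro x hx
    have : (0:ℝ) < x := lt_of_lt_of_le one_pos hx
    exact_mod_cast this.ne'
  have nx2 : ∀ x ∈ Set.Ici (1:ℝ), (x:ℂ)^2 ≠ 0 := fun x hx => pow_ne_zero _ (nx x hx)
  have nx3 : ∀ x ∈ Set.Ici (1:ℝ), (x:ℂ)^3 ≠ 0 := fun x hx => pow_ne_zero _ (nx x hx)
  set E : ℝ → ℂ := fun x => w' x ^ 2 + w x ^ 2
  set E' : ℝ → ℂ := fun x => -2 * q * (w x * w' x) / (x:ℂ)^2
  have hE : ∀ x ∈ Set.Ici (1:ℝ), HasDerivAt E (E' x) x := by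
    intro x hx
    have hx0 : 0 < x := lt_of_lt_of_le one_pos hx
    have := ((h2 x hx0).pow 2).add ((h1 x hx0).pow 2)
    refine this.congr_deriv ?_
    have := nx x hx
    simp only [E', Complex.real_smul]
    push_cast
    field_simp
    ring
  have cE' : ContinuousOn E' (Set.Ici 1) := by
    refine ContinuousOn.div ?_ (cx.pow 2) nx2
    exact continuousOn_const.mul (cw.mul cw')
  have bE' : ∀ x ∈ Set.Ici (1:ℝ), ‖E' x‖ ≤ (2*q*B^2) / x^2 := by
    intro x hx
    have hx0 : 0 < x := lt_of_lt_of_le one_pos hx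
    simp only [E', norm_div, norm_mul, norm_neg, norm_pow, Complex.norm_real, Real.norm_eq_abs, abs_of_nonneg hq,
      abs_of_pos hx0, RCLike.norm_ofNat]
    have := hB x hx
    have : ‖w x‖ * ‖w' x‖ ≤ B * B := by gcongr <;> tauto
    gcongr
    nlinarith
  have iE' : ∀ x ∈ Set.Ici (1:ℝ), IntegrableOn E' (Set.Ioi x) := by
    intro x hx
    have hx0 : 0 < x := lt_of_lt_of_le one_pos hx
    have hsub : Set.Ioi x ⊆ Set.Ici 1 := fun y hy => le_trans (Set.mem_Ici.mp hx) (le_of_lt (Set.mem_Ioi.mp hy))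
    refine Integrable.mono' (integrableOn_inv_sq x hx0 (2*q*B^2)) ?_ ?_
    · exact (cE'.mono hsub).aestronglyMeasurable measurableSet_Ioi
    · filter_upwards [ae_restrict_mem measurableSet_Ioi] with y hy using bE' y (hsub hy)
  have hlim := tendsto_limUnder_of_hasDerivAt_of_integrableOn_Ioi (f := E) (a := 1)
    (fun x hx => hE x (Set.mem_Ici.mpr (le_of_lt (Set.mem_Ioi.mp hx)))) (iE' 1 Set.self_mem_Ici)
  set e := limUnder atTop E
  have hEe : ∀ x ∈ Set.Ici (1:ℝ), ‖E x - e‖ ≤ (2*q*B^2) / x := by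
    intro x hx
    have hx0 : 0 < x := lt_of_lt_of_le one_pos hx
    have h := integral_Ioi_of_hasDerivAt_of_tendsto (f := E) (f' := E') (a := x) (m := e)
      (hE x hx).continuousAt.continuousWithinAt (fun y hy => hE y (Set.mem_Ici.mpr (le_trans (Set.mem_Ici.mp hx) (le_of_lt (Set.mem_Ioi.mp hy))))) (iE' x hx) hlim
    rw [norm_sub_rev, ← h, ← integral_inv_sq x hx0 (2*q*B^2)]
    refine norm_integral_le_of_norm_le (integrableOn_inv_sq x hx0 _) ?_
    filter_upwards [ae_restrict_mem measurableSet_Ioi] with y hy using bE' y (Set.mem_Ici.mpr (le_trans (Set.mem_Ici.mp hx) (le_of_lt (Set.mem_Ioi.mp hy))))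
  set r : ℝ → ℂ := fun x => (1/2) * (E x - e) / x - (1/2) * q * w x ^ 2 / (x:ℂ)^3 - (1/2) * (w x * w' x) / (x:ℂ)^2
  set S : ℝ → ℂ := fun x => (e/2) * (Real.log x : ℂ) - (1/2) * (w x * w' x / x)
  have hS : ∀ x ∈ Set.Ici (1:ℝ), HasDerivAt S (w x ^ 2 / x - r x) x := by
    intro x hx
    have hx0 : 0 < x := lt_of_lt_of_le one_pos hx
    have h0 : HasDerivAt (fun x : ℝ => (x:ℂ)) 1 x := (hasDerivAt_id x).ofReal_comp
    have hl : HasDerivAt (fun x : ℝ => (Real.log x : ℂ)) ((x⁻¹ : ℝ) : ℂ) x :=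
      (Real.hasDerivAt_log hx0.ne').ofReal_comp
    have := (hl.const_mul (e/2)).sub ((((h1 x hx0).mul (h2 x hx0)).div h0 (nx x hx)).const_mul (1/2))
    refine this.congr_deriv ?_
    have := nx x hx
    simp only [r, E, Complex.real_smul, Pi.mul_apply]
    push_cast
    field_simp
    ring
  have cE : ContinuousOn E (Set.Ici 1) := (cw'.pow 2).add (cw.pow 2)
  have cr : ContinuousOn r (Set.Ici 1) := by
    refine ContinuousOn.sub (ContinuousOn.sub ?_ ?_) ?_
    · exact ContinuousOn.div (continuousOn_const.mul (cE.sub continuousOn_const)) cx nx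
    · exact ContinuousOn.div (continuousOn_const.mul (cw.pow 2)) (cx.pow 3) nx3
    · exact ContinuousOn.div (continuousOn_const.mul (cw.mul cw')) (cx.pow 2) nx2
  have br : ∀ x ∈ Set.Ici (1:ℝ), ‖r x‖ ≤ (q*B^2 + (1/2)*q*B^2 + (1/2)*B^2) / x^2 := by
    intro x hx
    have hx1 : 1 ≤ x := hx
    have hx0 : 0 < x := lt_of_lt_of_le one_pos hx
    obtain ⟨b1, b2⟩ := hB x hx
    refine (norm_sub_le _ _).trans ?_
    rw [add_div, add_div]
    refine add_le_add ((norm_sub_le _ _).trans (add_le_add ?_ ?_)) ?_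
    · rw [norm_div, norm_mul, Complex.norm_real, Real.norm_eq_abs, abs_of_pos hx0]
      have := hEe x hx
      rw [div_le_iff₀ hx0]
      norm_num
      calc (1/2) * ‖E x - e‖ ≤ (1/2) * ((2*q*B^2) / x) := by gcongr
        _ = _ := by field_simp
    · simp only [norm_div, norm_mul, norm_pow, Complex.norm_real, Real.norm_eq_abs, abs_of_nonneg hq,
        abs_of_pos hx0]
      norm_num
      have : ‖w x‖^2 ≤ B^2 := by gcongr
      have h3 : x^2 ≤ x^3 := by nlinarith [sq_nonneg x]
      gcongr
    · simp only [norm_div, norm_mul, norm_pow, Complex.norm_real, Real.norm_eq_abs,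
        abs_of_pos hx0]
      norm_num
      have : ‖w x‖ * ‖w' x‖ ≤ B ^ 2 := by rw [sq]; gcongr
      gcongr
  have ir : IntegrableOn r (Set.Ioi 1) := by
    have hsub : Set.Ioi (1:ℝ) ⊆ Set.Ici 1 := Set.Ioi_subset_Ici_self
    refine Integrable.mono' (integrableOn_inv_sq 1 one_pos (q*B^2 + (1/2)*q*B^2 + (1/2)*B^2)) ?_ ?_
    · exact (cr.mono hsub).aestronglyMeasurable measurableSet_Ioi
    · filter_upwards [ae_restrict_mem measurableSet_Ioi] with y hy using br y (hsub hy)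
  have tr := intervalIntegral_tendsto_integral_Ioi 1 ir tendsto_id
  have tz : Tendsto (fun T : ℝ => (1/2) * (w T * w' T / (T:ℂ))) atTop (𝓝 0) := by
    have : Tendsto (fun T : ℝ => B^2 / T) atTop (𝓝 0) := tendsto_const_nhds.div_atTop tendsto_id
    refine squeeze_zero_norm' ?_ this
    filter_upwards [eventually_ge_atTop 1] with T hT
    have hx0 : 0 < T := lt_of_lt_of_le one_pos hT
    obtain ⟨b1, b2⟩ := hB T hT
    simp only [norm_div, norm_mul, norm_pow, Complex.norm_real, Real.norm_eq_abs,
        abs_of_pos hx0]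
    norm_num
    have : ‖w T‖ * ‖w' T‖ ≤ B ^ 2 := by rw [sq]; gcongr
    have h4 : ‖w T‖ * ‖w' T‖ / T ≤ B^2 / T := by gcongr
    have h5 : 0 ≤ ‖w T‖ * ‖w' T‖ / T := by positivity
    linarith
  refine ⟨e/2, (∫ x in Set.Ioi 1, r x) - 0 - S 1, ?_⟩
  refine ((tr.sub tz).sub tendsto_const_nhds).congr' ?_
  filter_upwards [eventually_ge_atTop 1] with T hT
  have hsub : Set.uIcc 1 T ⊆ Set.Ici 1 := by
    rw [Set.uIcc_of_le hT]; exact Set.Icc_subset_Ici_self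
  have cf : ContinuousOn (fun x : ℝ => w x ^ 2 / (x:ℂ)) (Set.Ici 1) := (cw.pow 2).div cx nx
  have if1 : IntervalIntegrable (fun x : ℝ => w x ^ 2 / (x:ℂ)) volume 1 T := (cf.mono hsub).intervalIntegrable
  have ir1 : IntervalIntegrable r volume 1 T := (cr.mono hsub).intervalIntegrable
  have := intervalIntegral.integral_eq_sub_of_hasDerivAt (f := S) (a := 1) (b := T)
    (fun x hx => hS x (hsub hx)) (if1.sub ir1)
  rw [intervalIntegral.integral_sub if1 ir1] at this
  simp only [id]
  simp only [S] at this ⊢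
  linear_combination -this

lemma bes_ode (τ : ℝ) : ∀ x > 0, HasDerivAt (bw' (Complex.I * τ))
    ((-(1 + (1/4 + τ^2) / x^2) : ℝ) • bw (Complex.I * τ) x) x := by
  intro x hx
  refine (bw'_deriv (Complex.I * τ) (by simp) x hx).congr_deriv ?_
  rw [Complex.real_smul]
  push_cast
  rw [mul_pow, Complex.I_sq]
  ring

lemma bes_bdd (τ : ℝ) : ∃ B, ∀ x > 0, ‖besselJ (Complex.I * τ) x‖ ≤ B := by
  obtain ⟨B1, hB1⟩ := besselJ_bdd01 (Complex.I * τ) (by simp)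
  obtain ⟨B2, hB2⟩ := ode_bound (1/4 + τ^2) (by positivity) _ _ (bw_deriv (Complex.I * τ) (by simp)) (bes_ode τ)
  refine ⟨max B1 B2, fun x hx => ?_⟩
  by_cases h : x ≤ 1
  · exact (hB1 x hx h).trans (le_max_left _ _)
  · push Not at h
    refine le_trans ?_ (le_max_right _ _)
    have h3 := (hB2 x h.le).1
    have h4 : ‖besselJ (Complex.I * τ) x‖^2 ≤ B2^2 := by
      rw [← norm_pow, bw_sq _ x hx, norm_div, norm_pow, Complex.norm_real, Real.norm_eq_abs, abs_of_pos hx]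
      calc _ ≤ B2^2 / x := by gcongr
        _ ≤ B2^2 := div_le_self (by positivity) h.le
    exact (le_abs_self _).trans (abs_le_of_sq_le_sq h4 ((norm_nonneg _).trans h3))

lemma bes_im_integrable (τ : ℝ) (a b : ℝ) (ha : 0 ≤ a) (hb : 0 ≤ b) :
    IntervalIntegrable (fun x => besselJ (Complex.I * τ) x ^ 2) volume a b := by
  obtain ⟨B, hB⟩ := bes_bdd τ
  have hsub : Set.uIoc a b ⊆ Set.Ioi 0 := by
    intro x hx
    rw [Set.uIoc, Set.mem_Ioc] at hx
    exact lt_of_le_of_lt (le_min ha hb) hx.1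
  rw [intervalIntegrable_iff]
  refine Integrable.mono' (g := fun _ => B^2) (integrableOn_const (by simp [Set.uIoc])) ?_ ?_
  · exact (((besselJ_cont (Complex.I * τ) (by simp)).pow 2).mono hsub).aestronglyMeasurable measurableSet_uIoc
  · filter_upwards [ae_restrict_mem measurableSet_uIoc] with x hx
    rw [norm_pow]
    have := hB x (hsub hx)
    gcongr

lemma bes_asymp (τ : ℝ) : ∃ e l : ℝ, Tendsto (fun T : ℝ =>
    (∫ x in (0:ℝ)..T, (besselJ (Complex.I * τ) x ^ 2).im) - e * Real.log T) atTop (𝓝 l) := by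
  obtain ⟨e, l, h⟩ := ode_asymp (1/4 + τ^2) (by positivity) _ _ (bw_deriv (Complex.I * τ) (by simp)) (bes_ode τ)
  have h' := (Complex.continuous_im.tendsto l).comp h
  refine ⟨e.im, l.im + ∫ x in (0:ℝ)..1, (besselJ (Complex.I * τ) x ^ 2).im, ?_⟩
  refine (h'.add tendsto_const_nhds).congr' ?_
  filter_upwards [eventually_ge_atTop 1] with T hT
  have hT0 : 0 ≤ T := le_trans zero_le_one hT
  have i1 := bes_im_integrable τ 0 1 le_rfl zero_le_one
  have i2 := bes_im_integrable τ 1 T zero_le_one hT0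
  have j1 : IntervalIntegrable (fun x => (besselJ (Complex.I * τ) x ^ 2).im) volume 0 1 := ⟨i1.1.im, i1.2.im⟩
  have j2 : IntervalIntegrable (fun x => (besselJ (Complex.I * τ) x ^ 2).im) volume 1 T := ⟨i2.1.im, i2.2.im⟩
  rw [← intervalIntegral.integral_add_adjacent_intervals j1 j2]
  have e1 : ∫ x in (1:ℝ)..T, (besselJ (Complex.I * τ) x ^ 2).im
      = (∫ x in (1:ℝ)..T, bw (Complex.I * τ) x ^ 2 / (x:ℂ)).im := by
    have := Complex.imCLM.intervalIntegral_comp_comm i2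
    simp only [Complex.imCLM_apply] at this
    rw [this]
    congr 1
    apply intervalIntegral.integral_congr
    intro x hx
    rw [Set.uIcc_of_le hT] at hx
    exact bw_sq _ x (lt_of_lt_of_le one_pos hx.1)
  rw [e1]
  simp
  ring


lemma choose_gamma (s : ℂ) (hs : 0 < s.re) (n : ℕ) :
    Complex.Gamma (s + n) = (n.factorial : ℂ) * Ring.choose (s + n - 1) n * Complex.Gamma s := by
  rw [← Ring.multichoose_eq, ← nsmul_eq_mul, Ring.factorial_nsmul_multichoose_eq_ascPochhammer,
    Polynomial.ascPochhammer_smeval_eq_eval]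
  induction n with
  | zero => simp
  | succ n ih =>
    have h : s + n ≠ 0 := by
      intro h
      have := congrArg Complex.re h
      simp at this
      have h2 : (0:ℝ) ≤ n := Nat.cast_nonneg n
      linarith
    rw [ascPochhammer_succ_eval]
    push_cast
    rw [← add_assoc, Complex.Gamma_add_one _ h, ih]
    ring

/-- coefficients of J² -/
noncomputable def ek (ν : ℂ) (k : ℕ) : ℂ := ∑ ij ∈ Finset.HasAntidiagonal.antidiagonal k,
  (1 / ((Nat.factorial ij.1 : ℂ) * Complex.Gamma (ν + ij.1 + 1))) *
  (1 / ((Nat.factorial ij.2 : ℂ) * Complex.Gamma (ν + ij.2 + 1)))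

lemma ek_eq (ν : ℂ) (hν : 0 ≤ ν.re) (k : ℕ) : ek ν k = Complex.Gamma (2*ν + 2*k + 1) /
    ((k.factorial : ℂ) * Complex.Gamma (ν + k + 1)^2 * Complex.Gamma (2*ν + k + 1)) := by
  have h2 : 0 ≤ (2*ν).re := by simp; linarith
  have hk : (k.factorial : ℂ) ≠ 0 := by exact_mod_cast k.factorial_ne_zero
  have hg := gamma_ne ν hν k
  have hg2 := gamma_ne (2*ν) h2 k
  have key := Ring.add_choose_eq (r := ν + k) (s := ν + k) k (Commute.all _ _)
  have e1 := choose_gamma (2*ν + k + 1) (by simp at h2 ⊢; have : (0:ℝ) ≤ k := Nat.cast_nonneg k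
                                            linarith) k
  have e1' : 2*ν + k + 1 + k - 1 = ν + k + (ν + k) := by ring
  rw [e1', show 2*ν + k + 1 + k = 2*ν + 2*k + 1 by ring, key] at e1
  rw [e1, ek, eq_div_iff (by positivity), Finset.mul_sum, Finset.sum_mul, Finset.sum_mul]
  refine Finset.sum_congr rfl ?_
  rintro ⟨i, j⟩ hij
  rw [Finset.HasAntidiagonal.mem_antidiagonal] at hij
  simp only at hij ⊢
  have hi := choose_gamma (ν + j + 1) (by simp; have : (0:ℝ) ≤ j := Nat.cast_nonneg j
                                          linarith) i
  have hj := choose_gamma (ν + i + 1) (by simp; have : (0:ℝ) ≤ i := Nat.cast_nonneg i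
                                          linarith) j
  have hkc : (k:ℂ) = i + j := by rw [← hij]; push_cast; ring
  rw [show ν + j + 1 + i - 1 = ν + k by rw [hkc]; ring, show ν + j + 1 + i = ν + k + 1 by rw [hkc]; ring] at hi
  rw [show ν + i + 1 + j - 1 = ν + k by rw [hkc]; ring, show ν + i + 1 + j = ν + k + 1 by rw [hkc]; ring] at hj
  have hif : (i.factorial : ℂ) ≠ 0 := by exact_mod_cast i.factorial_ne_zero
  have hjf : (j.factorial : ℂ) ≠ 0 := by exact_mod_cast j.factorial_ne_zero
  have hgi := gamma_ne ν hν i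
  have hgj := gamma_ne ν hν j
  have hp : Complex.Gamma (ν + k + 1)^2 = (i.factorial * Ring.choose (ν + k) i * Complex.Gamma (ν + j + 1)) *
    (j.factorial * Ring.choose (ν + k) j * Complex.Gamma (ν + i + 1)) := by
    rw [← hi, ← hj]; ring
  rw [hp]
  field_simp

lemma ek_bound (ν : ℂ) (hν : 0 ≤ ν.re) (k : ℕ) :
    ‖ek ν k‖ ≤ ‖Complex.Gamma (ν + 1)‖⁻¹^2 * (4^k / (k.factorial : ℝ)^2) := by
  have h1 : ‖ek ν k‖ ≤ ∑ ij ∈ Finset.HasAntidiagonal.antidiagonal k, ‖Complex.Gamma (ν + 1)‖⁻¹^2 *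
      ((ij.1.factorial:ℝ)⁻¹ * (ij.2.factorial : ℝ)⁻¹)^2 := by
    refine (norm_sum_le _ _).trans (Finset.sum_le_sum fun ij _ => ?_)
    rw [norm_mul]
    calc _ ≤ (‖Complex.Gamma (ν + 1)‖⁻¹ * ((Nat.factorial ij.1 : ℝ)⁻¹ * (Nat.factorial ij.1 : ℝ)⁻¹)) *
       (‖Complex.Gamma (ν + 1)‖⁻¹ * ((Nat.factorial ij.2 : ℝ)⁻¹ * (Nat.factorial ij.2 : ℝ)⁻¹)) := by
          have a1 := bterm_bound ν hν ij.1
          have a2 := bterm_bound ν hν ij.2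
          gcongr
      _ = _ := by ring
  refine h1.trans ?_
  rw [← Finset.mul_sum]
  gcongr
  have h2 : ∑ ij ∈ Finset.HasAntidiagonal.antidiagonal k, ((ij.1.factorial:ℝ)⁻¹ * (ij.2.factorial : ℝ)⁻¹) = 2^k / k.factorial := by
    have := Finset.Nat.sum_antidiagonal_eq_sum_range_succ_mk (fun ij : ℕ × ℕ => ((ij.1.factorial:ℝ)⁻¹ * (ij.2.factorial : ℝ)⁻¹)) k
    rw [this]
    rw [eq_div_iff (by positivity), Finset.sum_mul]
    have h3 : (2:ℝ)^k = ∑ i ∈ Finset.range (k+1), (k.choose i : ℝ) := by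
      have := Nat.sum_range_choose k
      exact_mod_cast this.symm
    rw [h3]
    refine Finset.sum_congr rfl fun i hi => ?_
    rw [Nat.cast_choose ℝ (Nat.lt_succ_iff.mp (Finset.mem_range.mp hi))]
    field_simp
  calc _ ≤ (∑ ij ∈ Finset.HasAntidiagonal.antidiagonal k, ((ij.1.factorial:ℝ)⁻¹ * (ij.2.factorial : ℝ)⁻¹))^2 := by
        apply Finset.sum_sq_le_sq_sum_of_nonneg
        intro i _; positivity
    _ = _ := by rw [h2, div_pow, ← pow_mul, mul_comm k 2, pow_mul]; norm_num

lemma bPhi_sq (ν : ℂ) (hν : 0 ≤ ν.re) (z : ℂ) : bPhi ν z ^ 2 = ∑' k : ℕ, (-z)^k * ek ν k := by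
  unfold bPhi
  rw [sq, tsum_mul_tsum_eq_tsum_sum_antidiagonal_of_summable_norm (bsummable ν z hν) (bsummable ν z hν)]
  congr 1; ext k
  rw [ek, Finset.mul_sum]
  refine Finset.sum_congr rfl fun ij hij => ?_
  rw [← Finset.HasAntidiagonal.mem_antidiagonal.mp hij, pow_add]
  ring
lemma bPhi_sq_summable (ν : ℂ) (hν : 0 ≤ ν.re) (z : ℂ) : Summable (fun k : ℕ => (-z)^k * ek ν k) := by
  refine Summable.of_norm_bounded (g := fun k => ‖Complex.Gamma (ν + 1)‖⁻¹^2 * ((4*‖z‖)^k / (k.factorial : ℝ))) ((Real.summable_pow_div_factorial _).mul_left _) fun k => ?_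
  rw [norm_mul, norm_pow, norm_neg]
  have := ek_bound ν hν k
  calc _ ≤ ‖z‖^k * (‖Complex.Gamma (ν + 1)‖⁻¹^2 * (4^k / (k.factorial : ℝ)^2)) := by gcongr
    _ = ‖Complex.Gamma (ν + 1)‖⁻¹^2 * ((4*‖z‖)^k / (k.factorial : ℝ)^2) := by rw [mul_pow]; ring
    _ ≤ _ := by
      have : (1:ℝ) ≤ k.factorial := by exact_mod_cast k.factorial_pos
      gcongr
      nlinarith


lemma exp_log_cpow (y : ℝ) (hy : 0 < y) (w : ℂ) : Complex.exp (w * (Real.log y : ℂ)) = (y:ℂ)^w := by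
  rw [Complex.cpow_def_of_ne_zero (by exact_mod_cast hy.ne'), Complex.ofReal_log hy.le, mul_comm]

lemma lap_term (a : ℝ) (ha : 0 < a) (w : ℂ) (hw : 0 ≤ w.re) :
    ∫ x in Set.Ioi (0:ℝ), Complex.exp (-(a*x)) * Complex.exp (w * (Real.log (x/2) : ℂ))
      = (1/2)^w * (1/a)^(w+1) * Complex.Gamma (w+1) := by
  have h := Complex.integral_cpow_mul_exp_neg_mul_Ioi (a := w+1) (r := a) (by simp; linarith) ha
  rw [mul_assoc, ← h, ← integral_const_mul]
  refine setIntegral_congr_fun measurableSet_Ioi fun x hx => ?_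
  have hx : 0 < x := hx
  rw [exp_log_cpow _ (by positivity), div_eq_mul_inv, mul_comm x, Complex.ofReal_mul,
    Complex.mul_cpow_ofReal_nonneg (by positivity) hx.le]
  simp
  ring

lemma lap_term_int (a : ℝ) (ha : 0 < a) (w : ℂ) (hw : 0 ≤ w.re) :
    IntegrableOn (fun x : ℝ => Complex.exp (-(a*x)) * Complex.exp (w * (Real.log (x/2) : ℂ))) (Set.Ioi 0) := by
  by_contra hc
  have h := lap_term a ha w hw
  rw [integral_undef hc] at h
  have h1 : Complex.Gamma (w+1) ≠ 0 := gamma_ne1 w hw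
  have h2 : ((1:ℂ)/2)^w ≠ 0 := by rw [Complex.cpow_ne_zero_iff]; left; norm_num
  have h3 : ((1:ℂ)/a)^(w+1) ≠ 0 := by
    rw [Complex.cpow_ne_zero_iff]; left
    have : (a:ℂ) ≠ 0 := by exact_mod_cast ha.ne'
    simpa
  exact (mul_ne_zero (mul_ne_zero h2 h3) h1) h.symm

lemma lap_term_norm (a : ℝ) (ha : 0 < a) (w : ℂ) (k : ℕ) (hw : w.re = 2*k) :
    ∫ x in Set.Ioi (0:ℝ), ‖Complex.exp (-(a*x)) * Complex.exp (w * (Real.log (x/2) : ℂ))‖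
      = (1/4)^k * (1/a)^(2*k+1) * ((2*k).factorial : ℝ) := by
  have h := Real.integral_rpow_mul_exp_neg_mul_Ioi (a := 2*k+1) (r := a) (by positivity) ha
  have e1 : Real.Gamma (2*k+1) = ((2*k).factorial : ℝ) := by
    rw [← Real.Gamma_nat_eq_factorial]; push_cast; rfl
  have e2 : (1/a)^(2*(k:ℝ)+1) = (1/a)^(2*k+1) := by
    rw [← Real.rpow_natCast]; push_cast; rfl
  rw [e1, e2] at h
  rw [mul_assoc, ← h, ← integral_const_mul]
  refine setIntegral_congr_fun measurableSet_Ioi fun x hx => ?_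
  have hx : 0 < x := hx
  rw [norm_mul, Complex.norm_exp, Complex.norm_exp]
  simp only [Complex.mul_re, Complex.ofReal_re, Complex.ofReal_im, mul_zero, sub_zero, hw, Complex.neg_re,
    add_sub_cancel_right]
  have e3 : Real.exp (2*k*Real.log (x/2)) = (x/2)^(2*k) := by
    rw [show 2*(k:ℝ) * Real.log (x/2) = ((2*k : ℕ):ℝ) * Real.log (x/2) by push_cast; ring, Real.exp_nat_mul,
      Real.exp_log (by positivity)]
  have e4 : x^(2*(k:ℝ)) = x^(2*k) := by
    rw [← Real.rpow_natCast]; push_cast; rfl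
  rw [e3, e4, div_pow, pow_mul 2 2 k]
  norm_num
  field_simp
  rw [← mul_pow]; norm_num

lemma L_series (ν : ℂ) (hν : ν.re = 0) (a : ℝ) (ha : 2 < a) :
    HasSum (fun k : ℕ => (-1)^k * ek ν k * ((1/2)^(2*ν+2*k) * (1/a)^(2*ν+2*k+1) * Complex.Gamma (2*ν+2*k+1)))
      (∫ x in Set.Ioi (0:ℝ), Complex.exp (-(a*x)) * besselJ ν x ^ 2) := by
  have ha0 : 0 < a := by linarith
  have hre : ∀ k : ℕ, (2*ν+2*k).re = 2*k := by intro k; simp [hν]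
  have hre' : ∀ k : ℕ, 0 ≤ (2*ν+2*k).re := by intro k; rw [hre]; positivity
  have H := hasSum_integral_of_summable_integral_norm (μ := volume.restrict (Set.Ioi (0:ℝ)))
    (F := fun (k : ℕ) (x : ℝ) => (-1)^k * ek ν k * (Complex.exp (-(a*x)) * Complex.exp ((2*ν+2*k) * (Real.log (x/2) : ℂ))))
    (fun k => (lap_term_int a ha0 _ (hre' k)).const_mul _) ?_
  · have e1 : (fun k : ℕ => ∫ x in Set.Ioi (0:ℝ), (-1)^k * ek ν k * (Complex.exp (-(a*x)) * Complex.exp ((2*ν+2*k) * (Real.log (x/2) : ℂ))))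
       = (fun k : ℕ => (-1)^k * ek ν k * ((1/2)^(2*ν+2*k) * (1/a)^(2*ν+2*k+1) * Complex.Gamma (2*ν+2*k+1))) := by
      funext k
      rw [integral_const_mul, lap_term a ha0 _ (hre' k)]
    rw [e1] at H
    refine (congrArg (HasSum _) ?_).mpr H
    refine setIntegral_congr_fun measurableSet_Ioi fun x hx => ?_
    have hx : 0 < x := hx
    rw [besselJ_eq ν x hx, mul_pow, bPhi_sq ν hν.ge, ← Complex.exp_nat_mul, ← tsum_mul_left, ← tsum_mul_left]
    congr 1; ext k
    have h : Complex.exp ((2*ν+2*k) * (Real.log (x/2) : ℂ)) =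
      Complex.exp ((2:ℕ) * (ν * (Real.log (x/2) : ℂ))) * (((x/2)^2 : ℝ):ℂ)^k := by
      have h1 : Complex.exp ((Real.log (x/2) : ℝ) : ℂ) = ((x/2 : ℝ) : ℂ) := by
        rw [← Complex.ofReal_exp, Real.exp_log (by positivity)]
      push_cast
      push_cast at h1
      rw [← h1, ← Complex.exp_nat_mul, ← Complex.exp_nat_mul, ← Complex.exp_add]
      congr 1; push_cast; ring
    rw [h, neg_pow]
    ring
  · set C := ‖Complex.Gamma (ν + 1)‖⁻¹^2
    have hq : (4:ℝ)/a^2 < 1 := by rw [div_lt_one (by positivity)]; nlinarith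
    refine Summable.of_nonneg_of_le (fun k => by positivity) (fun k => ?_)
      ((summable_geometric_of_lt_one (by positivity) hq).mul_left (C / a))
    simp_rw [norm_mul ((-1)^k * ek ν k)]
    rw [integral_const_mul, lap_term_norm a ha0 _ k (hre k), norm_mul, norm_pow, norm_neg, norm_one, one_pow, one_mul]
    have hb := ek_bound ν hν.ge k
    have hc : ((2*k).factorial : ℝ) ≤ 4^k * (k.factorial:ℝ)^2 := by
      have h1 := Nat.centralBinom_le_four_pow k
      have h2 := Nat.choose_mul_factorial_mul_factorial (n := 2*k) (k := k) (by omega)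
      rw [show 2*k-k = k by omega, ← Nat.centralBinom_eq_two_mul_choose] at h2
      have h3 : (2*k).factorial ≤ 4^k * k.factorial^2 := by
        rw [← h2, mul_assoc, ← sq]; exact Nat.mul_le_mul_right _ h1
      exact_mod_cast h3
    calc _ ≤ (C * (4^k / (k.factorial : ℝ)^2)) * ((1/4)^k * (1/a)^(2*k+1) * (4^k * (k.factorial:ℝ)^2)) := by
          gcongr
      _ = _ := by
        rw [div_pow, div_pow, div_pow, pow_succ a (2*k), pow_mul a 2 k, one_pow, one_pow]
        field_simp



noncomputable def Rfun (s v : ℂ) : ℂ := ∫ σ in (0:ℝ)..1, (σ:ℂ)^(s-1) * (1-(σ:ℂ))^(s-1) * ((σ:ℂ)+v)^(-s)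

lemma R_series (s : ℂ) (hs : s.re = 1/2) (v : ℝ) (hv : 1 < v) :
    HasSum (fun k : ℕ => (-1)^k * (v:ℂ)^(-s-k) * Complex.Gamma (s+k)^2 / ((k.factorial:ℂ) * Complex.Gamma (2*s+k)))
      (Rfun s v) := by
  have hs0 : 0 < s.re := by rw [hs]; norm_num
  have hv0 : 0 < v := by linarith
  have hvc : (v:ℂ) ≠ 0 := by exact_mod_cast hv0.ne'
  have hser := Complex.one_div_one_sub_cpow_hasFPowerSeriesOnBall_zero s
  have hsk : ∀ k : ℕ, 0 < (s + k).re := by intro k; simp; positivity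
  have hsums : ∀ σ ∈ Set.Ioc (0:ℝ) 1, HasSum (fun k : ℕ => Ring.choose (s+k-1) k * (-(σ/v : ℂ))^k) (1/(1+σ/v)^s) := by
    intro σ hσ
    have hlt : ‖(-(σ/v : ℂ))‖ < 1 := by
      rw [norm_neg, ← Complex.ofReal_div, Complex.norm_real, Real.norm_eq_abs, abs_of_pos (div_pos hσ.1 hv0), div_lt_one hv0]
      linarith [hσ.2]
    have := hser.hasSum (y := -(σ/v : ℂ)) (by simpa [← ofReal_norm] using hlt)
    simp [FormalMultilinearSeries.ofScalars_apply_eq] at this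
    simpa [sub_neg_eq_add, one_div, mul_comm] using this
  have hsumc : Summable (fun k : ℕ => ‖Ring.choose (s+k-1) k‖ * (1/v)^k) := by
    have h1 : ENNReal.ofReal (1/v) < (FormalMultilinearSeries.ofScalars ℂ fun n : ℕ ↦ Ring.choose (s + n - 1) n).radius := by
      refine lt_of_lt_of_le ?_ hser.r_le
      rw [ENNReal.ofReal_lt_one, div_lt_one hv0]; exact hv
    have := FormalMultilinearSeries.summable_norm_mul_pow _ (r := (1/v).toNNReal) h1
    simp only [FormalMultilinearSeries.ofScalars_norm] at this
    rwa [Real.coe_toNNReal _ (by positivity)] at this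
  have hb0 := Complex.betaIntegral_convergent hs0 hs0
  have hbk : ∀ k : ℕ, IntegrableOn (fun σ : ℝ => (σ:ℂ)^(s+k-1) * (1-(σ:ℂ))^(s-1)) (Set.Ioc 0 1) := by
    intro k
    have := Complex.betaIntegral_convergent (hsk k) hs0
    rwa [intervalIntegrable_iff_integrableOn_Ioc_of_le zero_le_one] at this
  rw [intervalIntegrable_iff_integrableOn_Ioc_of_le zero_le_one] at hb0
  have hpk : ∀ k : ℕ, ∀ σ ∈ Set.Ioc (0:ℝ) 1, (σ:ℂ)^(s+k-1) = (σ:ℂ)^(s-1) * (σ:ℂ)^k := by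
    intro k σ hσ
    rw [show s + k - 1 = (s-1) + k by ring, Complex.cpow_add _ _ (by exact_mod_cast hσ.1.ne'), Complex.cpow_natCast]
  have H := hasSum_integral_of_summable_integral_norm (μ := volume.restrict (Set.Ioc (0:ℝ) 1))
    (F := fun (k : ℕ) (σ : ℝ) => ((v:ℂ)^(-s) * (Ring.choose (s+k-1) k * (-(1/v:ℂ))^k)) * ((σ:ℂ)^(s+k-1) * (1-(σ:ℂ))^(s-1)))
    (fun k => (hbk k).const_mul _) ?_
  · have e1 : ∀ k : ℕ, ∫ σ in Set.Ioc (0:ℝ) 1, ((v:ℂ)^(-s) * (Ring.choose (s+k-1) k * (-(1/v:ℂ))^k)) * ((σ:ℂ)^(s+k-1) * (1-(σ:ℂ))^(s-1))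
      = (-1)^k * (v:ℂ)^(-s-k) * Complex.Gamma (s+k)^2 / ((k.factorial:ℂ) * Complex.Gamma (2*s+k)) := by
      intro k
      rw [integral_const_mul, ← intervalIntegral.integral_of_le zero_le_one]
      change _ * Complex.betaIntegral (s+k) s = _
      have hb := Complex.Gamma_mul_Gamma_eq_betaIntegral (hsk k) hs0
      rw [show s + k + s = 2*s+k by ring] at hb
      have hg : Complex.Gamma (2*s+k) ≠ 0 := Complex.Gamma_ne_zero_of_re_pos (by simp [hs]; positivity)
      have hc := choose_gamma s hs0 k
      have hkf : (k.factorial : ℂ) ≠ 0 := by exact_mod_cast k.factorial_ne_zero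
      rw [Complex.cpow_sub _ _ hvc, Complex.cpow_natCast, eq_div_iff (mul_ne_zero hkf hg), neg_pow, one_div, inv_pow]
      have : Complex.Gamma (s+k)^2 = ((k.factorial : ℂ) * Ring.choose (s + k - 1) k * Complex.Gamma s) * Complex.Gamma (s+k) := by
        rw [← hc]; ring
      rw [this]
      linear_combination (-((v:ℂ)^(-s)) * Ring.choose (s + k - 1) k * (-1)^k * ((v:ℂ)^k)⁻¹ * k.factorial) * hb
    simp only [e1] at H
    refine (congrArg (HasSum _) ?_).mpr H
    rw [Rfun, intervalIntegral.integral_of_le zero_le_one]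
    refine setIntegral_congr_fun measurableSet_Ioc fun σ hσ => ?_
    have h1 := (hsums σ hσ).tsum_eq
    have h2 : ((σ:ℂ)+v)^(-s) = (v:ℂ)^(-s) * (1/(1+σ/v)^s) := by
      have : ((σ:ℂ)+v) = ((v:ℝ):ℂ) * ((1+σ/v : ℝ) : ℂ) := by push_cast; field_simp; ring
      rw [this, Complex.mul_cpow_ofReal_nonneg hv0.le (by have := div_pos hσ.1 hv0; linarith)]
      rw [Complex.cpow_neg _ s, Complex.cpow_neg _ s]; push_cast; ring
    simp only [hpk _ σ hσ]
    rw [h2, ← h1, ← tsum_mul_left, ← tsum_mul_left]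
    congr 1; ext k
    rw [show (-((σ:ℂ)/v))^k = (-(1/v:ℂ))^k * (σ:ℂ)^k by rw [← mul_pow]; congr 1; ring]
    ring
  · set B := ∫ σ in Set.Ioc (0:ℝ) 1, ‖(σ:ℂ)^(s-1) * (1-(σ:ℂ))^(s-1)‖
    refine Summable.of_nonneg_of_le (fun k => by positivity) (fun k => ?_) (hsumc.mul_left (‖(v:ℂ)^(-s)‖ * B))
    simp_rw [norm_mul ((v:ℂ)^(-s) * (Ring.choose (s+k-1) k * (-(1/v:ℂ))^k))]
    rw [integral_const_mul, norm_mul, norm_mul, norm_pow, norm_neg, norm_div, norm_one, Complex.norm_real, Real.norm_eq_abs, abs_of_pos hv0]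
    have : ∫ σ in Set.Ioc (0:ℝ) 1, ‖(σ:ℂ)^(s+k-1) * (1-(σ:ℂ))^(s-1)‖ ≤ B := by
      refine setIntegral_mono_on (hbk k).norm hb0.norm measurableSet_Ioc fun σ hσ => ?_
      rw [hpk k σ hσ, norm_mul, norm_mul, norm_mul, norm_pow, Complex.norm_real, Real.norm_eq_abs, abs_of_pos hσ.1]
      have : σ^k ≤ 1 := pow_le_one₀ hσ.1.le hσ.2
      gcongr
      exact mul_le_of_le_one_right (norm_nonneg _) this
    calc _ ≤ ‖(v:ℂ)^(-s)‖ * (‖Ring.choose (s+k-1) k‖ * (1/v)^k) * B := by gcongr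
      _ = _ := by ring

lemma LR_large (ν : ℂ) (hν : ν.re = 0) (a : ℝ) (ha : 2 < a) :
    (∫ x in Set.Ioi (0:ℝ), Complex.exp (-(a*x)) * besselJ ν x ^ 2) = 1/(2*Real.pi) * Rfun (ν+1/2) (((a:ℂ)/2)^2) := by
  have ha0 : 0 < a := by linarith
  have hv : 1 < (a/2)^2 := by nlinarith
  have h1 := (R_series (ν+1/2) (by simp [hν]) ((a/2)^2) hv).mul_left (1/(2*Real.pi) : ℂ)
  have h2 := L_series ν hν a ha
  have : (((a/2)^2 : ℝ) : ℂ) = ((a:ℂ)/2)^2 := by push_cast; rfl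
  rw [← this]
  refine h2.unique ?_
  refine (congrArg (fun f => HasSum f _) (funext fun k => ?_)).mpr h1
  have hpi : (Real.pi : ℂ) = (Real.sqrt Real.pi : ℂ)^2 := by
    rw [← Complex.ofReal_pow, Real.sq_sqrt Real.pi_pos.le]
  have hsp : (Real.sqrt Real.pi : ℂ) ≠ 0 := by
    exact_mod_cast (Real.sqrt_pos.mpr Real.pi_pos).ne'
  set r : ℂ := (Real.sqrt Real.pi : ℂ)
  have hdup := Complex.Gamma_mul_Gamma_add_half (ν + k + 1/2)
  rw [show ν + k + 1/2 + 1/2 = ν + k + 1 by ring, show 2*(ν + k + 1/2) = 2*ν+2*k+1 by ring,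
    show 1 - (2*ν+2*k+1) = -(2*ν+2*k) by ring, Complex.cpow_neg] at hdup
  rw [ek_eq ν hν.ge, hpi, show ν + 1/2 + (k:ℂ) = ν + k + 1/2 by ring, show 2*(ν+1/2)+(k:ℂ) = 2*ν+k+1 by ring]
  have hp : (2:ℂ)^(2*ν+2*k) ≠ 0 := by rw [Complex.cpow_ne_zero_iff]; left; norm_num
  have hhalf : ((1:ℂ)/2)^(2*ν+2*k) = ((2:ℂ)^(2*ν+2*k))⁻¹ := by
    have : ((1:ℂ)/2) = (((2:ℝ)⁻¹ : ℝ) : ℂ) := by push_cast; norm_num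
    rw [this, Complex.ofReal_inv, Complex.inv_cpow _ _ (by
      rw [Complex.arg_ofReal_of_nonneg (by norm_num)]; exact Real.pi_pos.ne)]
    norm_num
  have hvs : (((a/2)^2 : ℝ):ℂ)^(-(ν+1/2)-(k:ℂ)) = 2 * (2:ℂ)^(2*ν+2*k) * (1/a)^(2*ν+2*k+1) := by
    have hL : (((a/2)^2 : ℝ):ℂ)^(-(ν+1/2)-(k:ℂ)) = Complex.exp ((2*ν+2*k+1) * (Real.log (2/a) : ℂ)) := by
      rw [← exp_log_cpow _ (by positivity)]
      rw [Real.log_pow, show a/2 = (2/a)⁻¹ by field_simp, Real.log_inv]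
      congr 1; push_cast; ring
    rw [hL, exp_log_cpow _ (by positivity), div_eq_mul_inv, Complex.ofReal_mul, Complex.mul_cpow_ofReal_nonneg (by norm_num) (by positivity),
      Complex.cpow_add _ _ (by norm_num), Complex.cpow_one]
    push_cast; ring
  rw [hvs, hhalf]
  set p := (2:ℂ)^(2*ν+2*k)
  set q := (1/(a:ℂ))^(2*ν+2*k+1)
  have h2' : 0 ≤ (2*ν).re := by simp [hν]
  have hk : (k.factorial : ℂ) ≠ 0 := by exact_mod_cast k.factorial_ne_zero
  have hg := gamma_ne ν hν.ge k
  have hg2 := gamma_ne (2*ν) h2' k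
  have hG : Complex.Gamma (2*ν+2*k+1) = Complex.Gamma (ν+k+1/2) * Complex.Gamma (ν+k+1) * p / r := by
    rw [hdup]; simp only [r]; field_simp
  rw [hG]
  field_simp


lemma x_exp_le (b x : ℝ) (hb : 0 < b) (hx : 0 ≤ x) : x * Real.exp (-b*x) ≤ (2/b) * Real.exp (-(b/2)*x) := by
  have h1 : b/2*x ≤ Real.exp (b/2*x) := by linarith [Real.add_one_le_exp (b/2*x)]
  have h2 : Real.exp (-(b/2)*x) = Real.exp (b/2*x) * Real.exp (-b*x) := by rw [← Real.exp_add]; congr 1; ring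
  rw [h2, ← mul_assoc]
  gcongr
  calc x = 2/b*(b/2*x) := by field_simp
    _ ≤ _ := by gcongr

lemma laplace_diff (g : ℝ → ℂ) (B : ℝ) (hg : AEStronglyMeasurable g (volume.restrict (Set.Ioi 0)))
    (hB : ∀ x > 0, ‖g x‖ ≤ B) (a : ℂ) (ha : 0 < a.re) :
    DifferentiableAt ℂ (fun a : ℂ => ∫ x in Set.Ioi (0:ℝ), Complex.exp (-(a*x)) * g x) a := by
  have hB0 : 0 ≤ B := (norm_nonneg _).trans (hB 1 one_pos)
  have hm : ∀ a : ℂ, AEStronglyMeasurable (fun x : ℝ => Complex.exp (-(a*x))) (volume.restrict (Set.Ioi 0)) := by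
    intro a; exact (by fun_prop : Continuous (fun x : ℝ => Complex.exp (-(a*x)))).aestronglyMeasurable
  have hnorm : ∀ (a : ℂ) (x : ℝ), ‖Complex.exp (-(a*x))‖ = Real.exp (-a.re * x) := by
    intro a x; rw [Complex.norm_exp]; simp
  set b := a.re/2 with hb
  have hb0 : 0 < b := by positivity
  refine (hasDerivAt_integral_of_dominated_loc_of_deriv_le (s := Metric.ball a b)
    (F := fun (a : ℂ) (x : ℝ) => Complex.exp (-(a*x)) * g x)
    (F' := fun (a : ℂ) (x : ℝ) => -x * Complex.exp (-(a*x)) * g x)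
    (bound := fun x => B * ((2/b) * Real.exp (-(b/2)*x)))
    (Metric.ball_mem_nhds _ hb0) (Eventually.of_forall fun a => (hm a).mul hg) ?_ ?_ ?_ ?_ ?_).2.differentiableAt
  · refine Integrable.mono' ((exp_neg_integrableOn_Ioi 0 ha).const_mul B) ((hm a).mul hg) ?_
    filter_upwards [ae_restrict_mem measurableSet_Ioi] with x hx
    rw [norm_mul, hnorm, mul_comm]
    gcongr
    exact hB x hx
  · refine AEStronglyMeasurable.mul (AEStronglyMeasurable.mul ?_ (hm a)) hg
    exact (by fun_prop : Continuous (fun x : ℝ => -(x:ℂ))).aestronglyMeasurable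
  · filter_upwards [ae_restrict_mem measurableSet_Ioi] with x hx c hc
    have hx : 0 < x := hx
    rw [norm_mul, norm_mul, hnorm, norm_neg, Complex.norm_real, Real.norm_eq_abs, abs_of_pos hx, mul_comm]
    have hre : b ≤ c.re := by
      have h1 : ‖c - a‖ < b := by simpa [dist_eq_norm] using hc
      have h2 := (Complex.abs_re_le_norm (c-a)).trans h1.le
      rw [Complex.sub_re] at h2
      have := (abs_le.mp h2).1
      linarith
    have h3 := x_exp_le b x hb0 hx.le
    have h4 : Real.exp (-c.re*x) ≤ Real.exp (-b*x) := by
      apply Real.exp_le_exp.mpr; nlinarith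
    have := hB x hx
    calc _ ≤ B * (x * Real.exp (-b*x)) := by gcongr
      _ ≤ _ := by gcongr
  · exact ((exp_neg_integrableOn_Ioi 0 (by positivity : 0 < b/2)).const_mul (2/b)).const_mul B
  · filter_upwards with x c _
    have h1 : HasDerivAt (fun c : ℂ => -(c*x)) (-(1*x)) c := ((hasDerivAt_id' c).mul_const (x:ℂ)).neg
    refine (h1.cexp.mul_const (g x)).congr_deriv ?_
    ring

lemma slit_add (v : ℂ) (hv : v ∈ Complex.slitPlane) (σ : ℝ) (hσ : 0 ≤ σ) : (σ:ℂ) + v ∈ Complex.slitPlane := by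
  rw [Complex.mem_slitPlane_iff] at hv ⊢
  simp
  rcases hv with h | h
  · left; linarith
  · right; exact h

lemma R_diff (s : ℂ) (hs : 0 < s.re) (v : ℂ) (hv : v ∈ Complex.slitPlane) : DifferentiableAt ℂ (Rfun s) v := by
  obtain ⟨ε, hε, hball⟩ := Metric.nhds_basis_closedBall.mem_iff.mp (Complex.isOpen_slitPlane.mem_nhds hv)
  have hcont : ContinuousOn (fun p : ℂ × ℝ => ((p.2:ℂ) + p.1)^(-s-1)) (Metric.closedBall v ε ×ˢ Set.Icc 0 1) := by
    intro p hp
    refine ContinuousAt.continuousWithinAt ?_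
    refine ContinuousAt.cpow (by fun_prop) continuousAt_const ?_
    exact slit_add _ (hball hp.1) _ hp.2.1
  obtain ⟨C, hC⟩ := ((isCompact_closedBall v ε).prod isCompact_Icc).exists_bound_of_continuousOn hcont
  have hW := Complex.betaIntegral_convergent hs hs
  have hcv : ∀ (z : ℂ) (v : ℂ), v ∈ Complex.slitPlane → ContinuousOn (fun σ : ℝ => ((σ:ℂ)+v)^z) (Set.uIcc 0 1) := by
    intro z v hv σ hσ
    refine ContinuousAt.continuousWithinAt ?_
    refine ContinuousAt.cpow (by fun_prop) continuousAt_const ?_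
    rw [Set.uIcc_of_le zero_le_one] at hσ
    exact slit_add _ hv _ hσ.1
  have hint : ∀ v ∈ Complex.slitPlane, IntervalIntegrable (fun σ : ℝ => (σ:ℂ)^(s-1) * (1-(σ:ℂ))^(s-1) * ((σ:ℂ)+v)^(-s)) volume 0 1 :=
    fun v hv => hW.mul_continuousOn (hcv (-s) v hv)
  have hnb : Metric.ball v ε ⊆ Complex.slitPlane := Metric.ball_subset_closedBall.trans hball
  refine (intervalIntegral.hasDerivAt_integral_of_dominated_loc_of_deriv_le (s := Metric.ball v ε)
    (F := fun (v : ℂ) (σ : ℝ) => (σ:ℂ)^(s-1) * (1-(σ:ℂ))^(s-1) * ((σ:ℂ)+v)^(-s))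
    (F' := fun (v : ℂ) (σ : ℝ) => (σ:ℂ)^(s-1) * (1-(σ:ℂ))^(s-1) * (-s * ((σ:ℂ)+v)^(-s-1)))
    (bound := fun σ => ‖(σ:ℂ)^(s-1) * (1-(σ:ℂ))^(s-1)‖ * (‖s‖*C))
    (Metric.ball_mem_nhds _ hε) ?_ (hint v hv) ?_ ?_ ?_ ?_).2.differentiableAt
  · filter_upwards [Metric.ball_mem_nhds v hε] with w hw
    have := hint w (hnb hw)
    rw [intervalIntegrable_iff] at this
    exact this.aestronglyMeasurable
  · have := hW.mul_continuousOn (continuousOn_const.mul (hcv (-s-1) v hv) : ContinuousOn (fun σ : ℝ => -s * ((σ:ℂ)+v)^(-s-1)) _)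
    rw [intervalIntegrable_iff] at this
    exact this.aestronglyMeasurable
  · filter_upwards with σ hσ w hw
    rw [Set.uIoc_of_le zero_le_one] at hσ
    rw [norm_mul, norm_mul (-s), norm_neg]
    have := hC (w, σ) ⟨Metric.ball_subset_closedBall hw, hσ.1.le, hσ.2⟩
    simp only at this
    gcongr
  · exact hW.norm.mul_const _
  · filter_upwards with σ hσ w hw
    rw [Set.uIoc_of_le zero_le_one] at hσ
    have h1 : HasDerivAt (fun w : ℂ => (σ:ℂ) + w) 1 w := (hasDerivAt_id' w).const_add _
    have h2 := h1.cpow_const (c := -s) (slit_add w (hnb hw) σ hσ.1.le)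
    refine (h2.const_mul _).congr_deriv ?_
    ring

lemma LR_all (τ : ℝ) (a : ℝ) (ha : 0 < a) :
    (∫ x in Set.Ioi (0:ℝ), Complex.exp (-(a*x)) * besselJ (Complex.I*τ) x ^ 2) = 1/(2*Real.pi) * Rfun (Complex.I*τ+1/2) (((a:ℂ)/2)^2) := by
  set U : Set ℂ := {z : ℂ | 0 < z.re}
  have hUo : IsOpen U := isOpen_lt continuous_const Complex.continuous_re
  have hUc : IsPreconnected U := (convex_halfSpace_re_gt 0).isPreconnected
  obtain ⟨B, hB⟩ := bes_bdd τ
  have hmeas : AEStronglyMeasurable (fun x => besselJ (Complex.I*τ) x ^ 2) (volume.restrict (Set.Ioi 0)) :=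
    ((besselJ_cont (Complex.I * τ) (by simp)).pow 2).aestronglyMeasurable measurableSet_Ioi
  have h1 : DifferentiableOn ℂ (fun a : ℂ => ∫ x in Set.Ioi (0:ℝ), Complex.exp (-(a*x)) * besselJ (Complex.I*τ) x ^ 2) U := by
    intro z hz
    refine (laplace_diff _ (B^2) hmeas ?_ z hz).differentiableWithinAt
    intro x hx
    rw [norm_pow]; have := hB x hx; gcongr
  have h2 : DifferentiableOn ℂ (fun a : ℂ => 1/(2*Real.pi) * Rfun (Complex.I*τ+1/2) ((a/2)^2)) U := by
    intro z hz
    refine DifferentiableAt.differentiableWithinAt ?_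
    refine DifferentiableAt.const_mul ?_ _
    refine DifferentiableAt.comp (f := fun a : ℂ => (a/2)^2) z (R_diff _ (by simp) _ ?_) (by fun_prop)
    have hz : 0 < z.re := hz
    rw [Complex.mem_slitPlane_iff]
    by_cases him : z.im = 0
    · left; simp [sq, him]; positivity
    · right; simp [sq]
      intro h
      have h0 : z.re * z.im = 0 := by linarith
      rcases mul_eq_zero.mp h0 with h1 | h1
      · exact hz.ne' h1
      · exact him h1
  have key := (h1.analyticOnNhd hUo).eqOn_of_preconnected_of_frequently_eq (h2.analyticOnNhd hUo) hUc
    (z₀ := 3) (by simp [U]) ?_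
  · exact key (show (a:ℂ) ∈ U by simpa [U] using ha)
  · have ht : Tendsto (fun t : ℝ => (t:ℂ)) (𝓝[>] 3) (𝓝[≠] 3) := by
      refine tendsto_nhdsWithin_iff.mpr ⟨?_, ?_⟩
      · exact (Complex.continuous_ofReal.tendsto' 3 3 (by simp)).mono_left nhdsWithin_le_nhds
      · filter_upwards [self_mem_nhdsWithin] with t ht
        simp only [Set.mem_compl_iff, Set.mem_singleton_iff]
        intro h
        have : t = 3 := by exact_mod_cast h
        exact (Set.mem_Ioi.mp ht).ne' this
    refine ht.frequently (Eventually.frequently ?_)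
    filter_upwards [self_mem_nhdsWithin] with t ht
    exact LR_large (Complex.I*τ) (by simp) t (by linarith [Set.mem_Ioi.mp ht])


noncomputable def hY (τ Y : ℝ) : ℝ := -Real.sin (τ * Real.log Y) * Real.exp (-(Real.log Y)/2)

lemma hY_meas (τ : ℝ) : Measurable (hY τ) := by
  unfold hY; fun_prop

lemma R_im_pt (τ σ v : ℝ) (h0 : 0 < σ) (h1 : σ < 1) (hv : 0 < v) :
    ((σ:ℂ)^(Complex.I*τ+1/2-1) * (1-(σ:ℂ))^(Complex.I*τ+1/2-1) * ((σ:ℂ)+v)^(-(Complex.I*τ+1/2))).im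
      = hY τ ((σ+v)/(σ*(1-σ))) / (σ*(1-σ)) := by
  have h2 : 0 < 1 - σ := by linarith
  have h3 : 0 < σ + v := by linarith
  have e1 : (1-(σ:ℂ)) = ((1-σ : ℝ):ℂ) := by push_cast; rfl
  have e2 : ((σ:ℂ)+v) = ((σ+v : ℝ):ℂ) := by push_cast; rfl
  rw [e1, e2, ← exp_log_cpow σ h0, ← exp_log_cpow _ h2, ← exp_log_cpow _ h3, ← Complex.exp_add, ← Complex.exp_add,
    Complex.exp_im]
  have hl : Real.log ((σ+v)/(σ*(1-σ))) = Real.log (σ+v) - Real.log σ - Real.log (1-σ) := by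
    rw [Real.log_div h3.ne' (by positivity), Real.log_mul h0.ne' h2.ne']; ring
  have hd : σ*(1-σ) = Real.exp (Real.log σ + Real.log (1-σ)) := by
    rw [Real.exp_add, Real.exp_log h0, Real.exp_log h2]
  rw [hY, hl]
  conv_rhs => rw [hd]
  rw [mul_div_assoc, ← Real.exp_sub, ← Real.sin_neg, mul_comm]
  congr 1
  · congr 1; simp; ring
  · congr 1; simp; ring

lemma R_im (τ a : ℝ) (ha : 0 < a) :
    ∫ x in Set.Ioi (0:ℝ), Real.exp (-(a*x)) * (besselJ (Complex.I*τ) x ^ 2).im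
      = 1/(2*Real.pi) * ∫ σ in Set.Ioo (0:ℝ) 1, hY τ ((σ+(a/2)^2)/(σ*(1-σ))) / (σ*(1-σ)) := by
  have h := congrArg Complex.im (LR_all τ a ha)
  obtain ⟨B, hB⟩ := bes_bdd τ
  have hmeas : AEStronglyMeasurable (fun x => besselJ (Complex.I*τ) x ^ 2) (volume.restrict (Set.Ioi 0)) :=
    ((besselJ_cont (Complex.I * τ) (by simp)).pow 2).aestronglyMeasurable measurableSet_Ioi
  have hi : IntegrableOn (fun x : ℝ => Complex.exp (-(a*x)) * besselJ (Complex.I*τ) x ^ 2) (Set.Ioi 0) := by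
    refine Integrable.mono' ((exp_neg_integrableOn_Ioi 0 ha).const_mul (B^2)) ?_ ?_
    · exact ((by fun_prop : Continuous (fun x : ℝ => Complex.exp (-(a*x)))).aestronglyMeasurable).mul hmeas
    · filter_upwards [ae_restrict_mem measurableSet_Ioi] with x hx
      rw [norm_mul, norm_pow, Complex.norm_exp, mul_comm]
      have := hB x hx
      simp
      gcongr
  have e1 : (∫ x in Set.Ioi (0:ℝ), Complex.exp (-(a*x)) * besselJ (Complex.I*τ) x ^ 2).im
     = ∫ x in Set.Ioi (0:ℝ), Real.exp (-(a*x)) * (besselJ (Complex.I*τ) x ^ 2).im := by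
    have := Complex.imCLM.integral_comp_comm hi
    simp only [Complex.imCLM_apply] at this
    rw [← this]
    congr 1; ext x
    rw [show Complex.exp (-(a*x)) = ((Real.exp (-(a*x)) : ℝ):ℂ) by push_cast; rfl, Complex.im_ofReal_mul]
  rw [← e1, h]
  have hs : (Complex.I*τ+1/2 : ℂ).re = 1/2 := by simp
  have hpi : (1/(2*Real.pi) : ℂ) = ((1/(2*Real.pi) : ℝ):ℂ) := by push_cast; rfl
  rw [hpi, Complex.im_ofReal_mul]
  congr 1
  rw [Rfun, intervalIntegral.integral_of_le zero_le_one]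
  have hsl : ((a:ℂ)/2)^2 ∈ Complex.slitPlane := by
    have : ((a:ℂ)/2)^2 = (((a/2)^2 : ℝ):ℂ) := by push_cast; rfl
    rw [this, Complex.ofReal_mem_slitPlane]; positivity
  have hi2 : IntegrableOn (fun σ : ℝ => (σ:ℂ)^(Complex.I*τ+1/2-1) * (1-(σ:ℂ))^(Complex.I*τ+1/2-1) * ((σ:ℂ)+((a:ℂ)/2)^2)^(-(Complex.I*τ+1/2)))
      (Set.Ioc 0 1) := by
    rw [← intervalIntegrable_iff_integrableOn_Ioc_of_le zero_le_one]
    have h0 : (0:ℝ) < (Complex.I*τ+1/2 : ℂ).re := by rw [hs]; norm_num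
    refine (Complex.betaIntegral_convergent h0 h0).mul_continuousOn ?_
    intro σ hσ
    refine ContinuousAt.continuousWithinAt ?_
    refine ContinuousAt.cpow (by fun_prop) continuousAt_const ?_
    rw [Set.uIcc_of_le zero_le_one] at hσ
    exact slit_add _ hsl _ hσ.1
  have := Complex.imCLM.integral_comp_comm hi2
  simp only [Complex.imCLM_apply] at this
  rw [← this, integral_Ioc_eq_integral_Ioo]
  refine setIntegral_congr_fun measurableSet_Ioo fun σ hσ => ?_
  have h4 := R_im_pt τ σ ((a/2)^2) hσ.1 hσ.2 (by positivity)
  rw [← h4]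
  push_cast
  rfl


noncomputable def w3 (t : ℝ) : ℝ := 1/(t*√t)

lemma w3_meas : Measurable w3 := by unfold w3; fun_prop
lemma w3_nonneg (t : ℝ) (ht : 0 ≤ t) : 0 ≤ w3 t := by unfold w3; positivity
lemma w3_cont (t : ℝ) (ht : 0 < t) : ContinuousAt w3 t := by
  unfold w3
  refine ContinuousAt.div (by fun_prop) (by fun_prop) ?_
  have := Real.sqrt_pos.mpr ht
  positivity

noncomputable def gY (c Y : ℝ) : ℝ := 4*(Y-1)/(c*(4*Y*c^2+(Y-1)^2))

lemma inner_sigma (c Y : ℝ) (hc : 0 < c) (hY : 1 < Y) :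
    IntegrableOn (fun σ => w3 (c^2 + Y*(σ*(1-σ)) - σ)) (Set.Ioo 0 (1-1/Y)) ∧
    ∫ σ in Set.Ioo 0 (1-1/Y), w3 (c^2 + Y*(σ*(1-σ)) - σ) = gY c Y := by
  have hY0 : 0 < Y := by linarith
  have hy : 0 ≤ 1 - 1/Y := by rw [sub_nonneg, div_le_one hY0]; exact hY.le
  have hQ : ∀ σ ∈ Set.Icc 0 (1-1/Y), 0 < c^2 + Y*(σ*(1-σ)) - σ := by
    intro σ hσ
    have h1 : Y*σ ≤ Y - 1 := by
      have := mul_le_mul_of_nonneg_left hσ.2 hY0.le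
      have e : Y*(1-1/Y) = Y-1 := by field_simp
      linarith
    have : 0 ≤ σ*(Y-1-Y*σ) := mul_nonneg hσ.1 (by linarith)
    nlinarith [sq_pos_of_pos hc]
  have hcont : ContinuousOn (fun σ => w3 (c^2 + Y*(σ*(1-σ)) - σ)) (Set.uIcc 0 (1-1/Y)) := by
    rw [Set.uIcc_of_le hy]
    intro σ hσ
    exact ((w3_cont _ (hQ σ hσ)).comp (f := fun σ => c^2 + Y*(σ*(1-σ)) - σ) (by fun_prop)).continuousWithinAt
  have hii := hcont.intervalIntegrable (μ := volume)
  constructor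
  · have := (intervalIntegrable_iff_integrableOn_Ioc_of_le hy).mp hii
    exact this.mono_set Set.Ioo_subset_Ioc_self
  · rw [← integral_Ioc_eq_integral_Ioo, ← intervalIntegral.integral_of_le hy]
    have hD : 0 < 4*Y*c^2+(Y-1)^2 := by positivity
    set D := 4*Y*c^2+(Y-1)^2 with hDd
    rw [intervalIntegral.integral_eq_sub_of_hasDerivAt (f := fun σ => 2*(2*Y*σ-(Y-1))/(D*√(c^2 + Y*(σ*(1-σ)) - σ))) ?_ hii]
    · have e1 : c^2 + Y*((1-1/Y)*(1-(1-1/Y))) - (1-1/Y) = c^2 := by field_simp; ring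
      have e2 : c^2 + Y*((0:ℝ)*(1-0)) - 0 = c^2 := by ring
      simp only [e1, e2, Real.sqrt_sq hc.le, gY]
      rw [← hDd]
      field_simp
      ring
    · intro σ hσ
      rw [Set.uIcc_of_le hy] at hσ
      have hq := hQ σ hσ
      have h1 : HasDerivAt (fun σ => c^2 + Y*(σ*(1-σ)) - σ) (Y*(1-2*σ)-1) σ := by
        have := (((hasDerivAt_id' σ).mul ((hasDerivAt_id' σ).const_sub 1)).const_mul Y).const_add (c^2)
        refine (this.sub (hasDerivAt_id' σ)).congr_deriv ?_
        ring
      have h2 : HasDerivAt (fun σ => 2*(2*Y*σ-(Y-1))) (2*(2*Y)) σ := by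
        refine ((((hasDerivAt_id' σ).const_mul (2*Y)).sub_const (Y-1)).const_mul 2).congr_deriv ?_
        ring
      have hsq := Real.sqrt_pos.mpr hq
      have h3 := h2.div ((h1.sqrt hq.ne').const_mul D) (by positivity)
      refine h3.congr_deriv ?_
      unfold w3
      have hs2 : √(c^2 + Y*(σ*(1-σ)) - σ)^2 = c^2 + Y*(σ*(1-σ)) - σ := Real.sq_sqrt hq.le
      set S := √(c^2 + Y*(σ*(1-σ)) - σ)
      rw [← hs2]
      field_simp
      rw [hs2, hDd]
      ring

lemma inner_v (c σ : ℝ) (h0 : 0 < σ) (h1 : σ < 1) (f : ℝ → ℝ) :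
    (IntegrableOn (fun v => w3 (c^2+v) * (f ((σ+v)/(σ*(1-σ)))/(σ*(1-σ)))) (Set.Ioi 0) ↔
      IntegrableOn (fun Y => w3 (c^2 + Y*(σ*(1-σ)) - σ) * f Y) (Set.Ioi (1/(1-σ)))) ∧
    ∫ v in Set.Ioi (0:ℝ), w3 (c^2+v) * (f ((σ+v)/(σ*(1-σ)))/(σ*(1-σ)))
      = ∫ Y in Set.Ioi (1/(1-σ)), w3 (c^2 + Y*(σ*(1-σ)) - σ) * f Y := by
  have h2 : 0 < 1 - σ := by linarith
  have hp : 0 < σ*(1-σ) := by positivity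
  have himg : (fun v => (σ+v)/(σ*(1-σ))) '' Set.Ioi 0 = Set.Ioi (1/(1-σ)) := by
    ext y
    simp only [Set.mem_image, Set.mem_Ioi]
    constructor
    · rintro ⟨v, hv, rfl⟩
      rw [div_lt_div_iff₀ h2 hp]; nlinarith
    · intro hy
      refine ⟨y*(σ*(1-σ)) - σ, ?_, ?_⟩
      · rw [div_lt_iff₀ h2] at hy; nlinarith
      · field_simp; ring
  have hder : ∀ v ∈ Set.Ioi (0:ℝ), HasDerivWithinAt (fun v => (σ+v)/(σ*(1-σ))) (1/(σ*(1-σ))) (Set.Ioi 0) v := by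
    intro v _
    exact (((hasDerivAt_id' v).const_add σ).div_const _).hasDerivWithinAt
  have hinj : Set.InjOn (fun v => (σ+v)/(σ*(1-σ))) (Set.Ioi 0) := by
    intro x _ y _ hxy
    simp only at hxy
    rw [div_left_inj' hp.ne'] at hxy
    linarith
  have heq : (fun v => |1/(σ*(1-σ))| • (fun Y => w3 (c^2 + Y*(σ*(1-σ)) - σ) * f Y) ((σ+v)/(σ*(1-σ))))
      = (fun v => w3 (c^2+v) * (f ((σ+v)/(σ*(1-σ)))/(σ*(1-σ)))) := by
    funext v
    rw [abs_of_pos (by positivity)]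
    have : c^2 + (σ+v)/(σ*(1-σ))*(σ*(1-σ)) - σ = c^2+v := by field_simp; ring
    simp only [this, smul_eq_mul]
    ring
  constructor
  · rw [← himg, integrableOn_image_iff_integrableOn_abs_deriv_smul measurableSet_Ioi hder hinj, heq]
  · rw [← himg, integral_image_eq_integral_abs_deriv_smul measurableSet_Ioi hder hinj]
    exact congrArg (fun F : ℝ → ℝ => ∫ v in Set.Ioi (0:ℝ), F v) heq.symm

noncomputable def K2 (c : ℝ) (f : ℝ → ℝ) (σ Y : ℝ) : ℝ :=
  {p : ℝ × ℝ | 1 < p.2 * (1-p.1)}.indicator (fun p => w3 (c^2 + p.2*(p.1*(1-p.1)) - p.1) * f p.2) (σ, Y)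

lemma K2_meas (c : ℝ) (f : ℝ → ℝ) (hf : Measurable f) : Measurable (fun p : ℝ × ℝ => K2 c f p.1 p.2) := by
  unfold K2
  refine Measurable.indicator ?_ ?_
  · refine Measurable.mul (w3_meas.comp ?_) (hf.comp measurable_snd)
    fun_prop
  · exact measurableSet_lt measurable_const (by fun_prop)

lemma K2_sigma (c σ : ℝ) (h1 : σ < 1) (f : ℝ → ℝ) :
    (fun Y => K2 c f σ Y) = (Set.Ioi (1/(1-σ))).indicator (fun Y => w3 (c^2 + Y*(σ*(1-σ)) - σ) * f Y) := by
  funext Y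
  simp only [K2, Set.indicator, Set.mem_ofPred_eq, Set.mem_Ioi]
  congr 1
  rw [div_lt_iff₀ (by linarith)]

lemma K2_Y (c Y : ℝ) (hY : 1 < Y) (f : ℝ → ℝ) :
    (fun σ => K2 c f σ Y) = (Set.Iio (1-1/Y)).indicator (fun σ => w3 (c^2 + Y*(σ*(1-σ)) - σ) * f Y) := by
  funext σ
  simp only [K2, Set.indicator, Set.mem_ofPred_eq, Set.mem_Iio]
  congr 1
  have : 0 < Y := by linarith
  rw [eq_iff_iff, lt_sub_comm, div_lt_iff₀ this, mul_comm]

lemma K2_int_Y (c Y : ℝ) (hc : 0 < c) (hY : 1 < Y) (f : ℝ → ℝ) :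
    IntegrableOn (fun σ => K2 c f σ Y) (Set.Ioo 0 1) ∧ ∫ σ in Set.Ioo (0:ℝ) 1, K2 c f σ Y = gY c Y * f Y := by
  have hY0 : 0 < Y := by linarith
  have hs : Set.Ioo (0:ℝ) 1 ∩ Set.Iio (1-1/Y) = Set.Ioo 0 (1-1/Y) := by
    ext x; simp only [Set.mem_inter_iff, Set.mem_Ioo, Set.mem_Iio]
    have : 0 < 1/Y := by positivity
    constructor
    · rintro ⟨⟨a, b⟩, d⟩; exact ⟨a, d⟩
    · rintro ⟨a, b⟩; exact ⟨⟨a, by linarith⟩, b⟩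
  obtain ⟨i1, i2⟩ := inner_sigma c Y hc hY
  rw [K2_Y c Y hY f]
  constructor
  · rw [IntegrableOn, integrable_indicator_iff measurableSet_Iio, IntegrableOn, Measure.restrict_restrict measurableSet_Iio, Set.inter_comm, hs]
    exact i1.mul_const _
  · rw [setIntegral_indicator measurableSet_Iio, hs, integral_mul_const, i2]

lemma K2_abs (c : ℝ) (f : ℝ → ℝ) (σ Y : ℝ) (h0 : 0 < σ) (hσ : σ < 1) : ‖K2 c f σ Y‖ = K2 c (fun Y => |f Y|) σ Y := by
  unfold K2 Set.indicator
  split_ifs with h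
  · rw [norm_mul, Real.norm_eq_abs, Real.norm_eq_abs, abs_of_nonneg]
    apply w3_nonneg
    have h : 1 < Y * (1-σ) := h
    simp only
    nlinarith [sq_nonneg c]
  · simp

lemma fub (c : ℝ) (hc : 0 < c) (f : ℝ → ℝ) (hf : Measurable f) (hfi : IntegrableOn (fun Y => gY c Y * |f Y|) (Set.Ioi 1)) :
    ∫ v in Set.Ioi (0:ℝ), w3 (c^2+v) * ∫ σ in Set.Ioo (0:ℝ) 1, f ((σ+v)/(σ*(1-σ)))/(σ*(1-σ))
     = ∫ Y in Set.Ioi (1:ℝ), gY c Y * f Y := by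
  set μ := volume.restrict (Set.Ioo (0:ℝ) 1)
  set ν := volume.restrict (Set.Ioi (1:ℝ))
  set ρ := volume.restrict (Set.Ioi (0:ℝ))
  have hK : Integrable (fun p : ℝ × ℝ => K2 c f p.1 p.2) (μ.prod ν) := by
    rw [integrable_prod_iff' (K2_meas c f hf).aestronglyMeasurable]
    constructor
    · filter_upwards [ae_restrict_mem measurableSet_Ioi] with Y hY
      exact (K2_int_Y c Y hc hY f).1
    · refine hfi.congr ?_
      filter_upwards [ae_restrict_mem measurableSet_Ioi] with Y hY
      rw [← (K2_int_Y c Y hc hY (fun Y => |f Y|)).2]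
      refine setIntegral_congr_fun measurableSet_Ioo fun σ hσ => ?_
      exact (K2_abs c f σ Y hσ.1 hσ.2).symm
  have hsub : ∀ σ ∈ Set.Ioo (0:ℝ) 1, Set.Ioi (1:ℝ) ∩ Set.Ioi (1/(1-σ)) = Set.Ioi (1/(1-σ)) := by
    intro σ hσ
    rw [Set.inter_eq_right]
    apply Set.Ioi_subset_Ioi
    rw [le_div_iff₀ (by linarith [hσ.2])]; linarith [hσ.1]
  have hsig : ∀ g : ℝ → ℝ, ∀ σ ∈ Set.Ioo (0:ℝ) 1, ∫ Y in Set.Ioi (1:ℝ), K2 c g σ Y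
      = ∫ v in Set.Ioi (0:ℝ), w3 (c^2+v) * (g ((σ+v)/(σ*(1-σ)))/(σ*(1-σ))) := by
    intro g σ hσ
    rw [(inner_v c σ hσ.1 hσ.2 g).2]
    have e := congrFun (K2_sigma c σ hσ.2 g)
    simp only [e]
    rw [setIntegral_indicator measurableSet_Ioi, hsub σ hσ]
  set K1 : ℝ × ℝ → ℝ := fun p => w3 (c^2+p.2) * (f ((p.1+p.2)/(p.1*(1-p.1)))/(p.1*(1-p.1)))
  have hK1m : Measurable K1 := by
    refine Measurable.mul (w3_meas.comp (by fun_prop)) (Measurable.div (hf.comp (by fun_prop)) (by fun_prop))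
  have hK1 : Integrable K1 (μ.prod ρ) := by
    rw [integrable_prod_iff hK1m.aestronglyMeasurable]
    have h2 := (integrable_prod_iff (K2_meas c f hf).aestronglyMeasurable).mp hK
    constructor
    · filter_upwards [h2.1, ae_restrict_mem measurableSet_Ioo] with σ h hσ
      simp only [K2_sigma c σ hσ.2 f] at h
      have h : Integrable ((Set.Ioi (1/(1-σ))).indicator (fun Y => w3 (c^2 + Y*(σ*(1-σ)) - σ) * f Y)) ν := h
      rw [integrable_indicator_iff measurableSet_Ioi, IntegrableOn, Measure.restrict_restrict measurableSet_Ioi, Set.inter_comm, hsub σ hσ] at h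
      exact (inner_v c σ hσ.1 hσ.2 f).1.mpr h
    · refine h2.2.congr ?_
      filter_upwards [ae_restrict_mem measurableSet_Ioo] with σ hσ
      have e1 : ∀ Y, ‖K2 c f σ Y‖ = K2 c (fun Y => |f Y|) σ Y := fun Y => K2_abs c f σ Y hσ.1 hσ.2
      simp only [e1]
      rw [hsig _ σ hσ]
      refine setIntegral_congr_fun measurableSet_Ioi fun v hv => ?_
      have hp : 0 < σ*(1-σ) := mul_pos hσ.1 (by linarith [hσ.2])
      have hv : 0 < v := hv
      simp only [K1, norm_mul, norm_div, Real.norm_eq_abs]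
      rw [abs_of_nonneg (w3_nonneg (c^2+v) (by positivity)), ← abs_mul, abs_of_pos hp]
  calc _ = ∫ v, ∫ σ, K1 (σ, v) ∂μ ∂ρ := by
        congr 1; ext v; rw [← integral_const_mul]
    _ = ∫ σ, ∫ v, K1 (σ, v) ∂ρ ∂μ := (integral_integral_swap (f := fun σ v => K1 (σ, v)) hK1).symm
    _ = ∫ σ, ∫ Y, K2 c f σ Y ∂ν ∂μ := by
        refine setIntegral_congr_fun measurableSet_Ioo fun σ hσ => ?_
        exact (hsig f σ hσ).symm
    _ = ∫ Y, ∫ σ, K2 c f σ Y ∂μ ∂ν := integral_integral_swap (f := fun σ Y => K2 c f σ Y) hK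
    _ = _ := by
        refine setIntegral_congr_fun measurableSet_Ioi fun Y hY => ?_
        exact (K2_int_Y c Y hc hY f).2


noncomputable def gG (τ a : ℝ) : ℝ := ∫ x in Set.Ioi (0:ℝ), Real.exp (-(a*x)) * (besselJ (Complex.I*τ) x ^ 2).im

noncomputable def wt (c a : ℝ) : ℝ := 2*c*(a*w3 (4*c^2+a^2))

noncomputable def VV (τ c : ℝ) : ℝ := ∫ a in Set.Ioi (0:ℝ), wt c a * gG τ a

lemma sc_bound (c s : ℝ) (hc : 0 < c) (hs : 0 < s) :
    Real.sinh s / (c^2+Real.sinh s^2) ≤ 2/(min 1 (c^2)) * Real.exp (-(1*s)) := by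
  have h1 : 0 < Real.sinh s := Real.sinh_pos_iff.mpr hs
  have h2 : Real.sinh s < Real.cosh s := Real.sinh_lt_cosh s
  have hm : 0 < min 1 (c^2) := by positivity
  have hm1 := min_le_left 1 (c^2)
  have hm2 := min_le_right 1 (c^2)
  set m := min 1 (c^2)
  have h3 : m * Real.cosh s^2 ≤ c^2+Real.sinh s^2 := by
    rw [Real.cosh_sq]; nlinarith [sq_nonneg (Real.sinh s)]
  have hcp : 0 < Real.cosh s := Real.cosh_pos s
  have h5 : Real.exp s ≤ 2 * Real.cosh s := by rw [Real.cosh_eq]; linarith [Real.exp_pos (-s)]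
  calc _ ≤ Real.cosh s / (m * Real.cosh s^2) := by gcongr
    _ = 1/(m*Real.cosh s) := by field_simp
    _ ≤ 1/(m*(Real.exp s/2)) := by gcongr; linarith
    _ = _ := by rw [one_mul, Real.exp_neg]; field_simp

lemma sc_int (c : ℝ) (hc : 0 < c) (f : ℝ → ℝ) (hf : Continuous f) (hb : ∀ s, |f s| ≤ 1) :
    IntegrableOn (fun s => f s * (Real.sinh s / (c^2+Real.sinh s^2))) (Set.Ioi 0) := by
  refine Integrable.mono' ((exp_neg_integrableOn_Ioi 0 one_pos).const_mul (2/(min 1 (c^2)))) ?_ ?_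
  · refine Continuous.aestronglyMeasurable ?_
    refine hf.mul (Continuous.div (by fun_prop) (by fun_prop) ?_)
    intro s; positivity
  · filter_upwards [ae_restrict_mem measurableSet_Ioi] with s hs
    have hs : 0 < s := hs
    have h1 : 0 < Real.sinh s := Real.sinh_pos_iff.mpr hs
    rw [norm_mul, Real.norm_eq_abs, Real.norm_eq_abs, abs_of_pos (a := Real.sinh s / _) (by positivity)]
    have := sc_bound c s hc hs
    have h0 : 0 ≤ Real.sinh s / (c^2+Real.sinh s^2) := by positivity
    rw [neg_mul]
    nlinarith [hb s, abs_nonneg (f s)]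

lemma Y_sub (c : ℝ) (hc : 0 < c) (f : ℝ → ℝ) :
    (IntegrableOn (fun Y => gY c Y * (f (Real.log Y) * Real.exp (-(Real.log Y)/2))) (Set.Ioi 1) ↔
      IntegrableOn (fun s => 4/c * (f (2*s) * (Real.sinh s / (c^2+Real.sinh s^2)))) (Set.Ioi 0)) ∧
    ∫ Y in Set.Ioi 1, gY c Y * (f (Real.log Y) * Real.exp (-(Real.log Y)/2)) =
      ∫ s in Set.Ioi 0, 4/c * (f (2*s) * (Real.sinh s / (c^2+Real.sinh s^2))) := by
  have himg : (fun s : ℝ => Real.exp (2*s)) '' Set.Ioi 0 = Set.Ioi 1 := by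
    ext y; simp only [Set.mem_image, Set.mem_Ioi]
    constructor
    · rintro ⟨s, hs, rfl⟩; exact Real.one_lt_exp_iff.mpr (by linarith)
    · intro hy
      refine ⟨Real.log y / 2, by have := Real.log_pos hy; linarith, ?_⟩
      rw [mul_div_cancel₀ _ two_ne_zero, Real.exp_log (by linarith)]
  have hder : ∀ s ∈ Set.Ioi (0:ℝ), HasDerivWithinAt (fun s : ℝ => Real.exp (2*s)) (2*Real.exp (2*s)) (Set.Ioi 0) s := by
    intro s _
    refine HasDerivAt.hasDerivWithinAt ?_
    refine ((hasDerivAt_id' s).const_mul 2).exp.congr_deriv ?_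
    ring
  have hinj : Set.InjOn (fun s : ℝ => Real.exp (2*s)) (Set.Ioi 0) := by
    intro a _ b _ h
    have := Real.exp_injective h
    linarith
  have heq : ∀ s : ℝ, |2*Real.exp (2*s)| • (gY c (Real.exp (2*s)) * (f (Real.log (Real.exp (2*s))) * Real.exp (-(Real.log (Real.exp (2*s)))/2))) = 4/c * (f (2*s) * (Real.sinh s / (c^2+Real.sinh s^2))) := by
    intro s
    rw [Real.log_exp, abs_of_pos (by positivity), smul_eq_mul, gY]
    have e1 : Real.exp (-(2*s)/2) = (Real.exp s)⁻¹ := by rw [← Real.exp_neg]; congr 1; ring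
    have e2 : Real.exp (2*s) = Real.exp s^2 := by rw [← Real.exp_nat_mul]; norm_num
    have hE := Real.exp_pos s
    rw [e1, e2]
    have e3 : Real.sinh s = (Real.exp s^2 - 1)/(2*Real.exp s) := by
      rw [Real.sinh_eq, Real.exp_neg]; field_simp
    rw [e3]
    set E := Real.exp s
    have d1 : 4*E^2*c^2+(E^2-1)^2 ≠ 0 := by positivity
    have d2 : c^2+((E^2-1)/(2*E))^2 = (4*E^2*c^2+(E^2-1)^2)/(4*E^2) := by field_simp; ring
    rw [d2]
    field_simp
    ring
  constructor
  · rw [← himg, integrableOn_image_iff_integrableOn_abs_deriv_smul measurableSet_Ioi hder hinj]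
    simp only [heq]
  · rw [← himg, integral_image_eq_integral_abs_deriv_smul measurableSet_Ioi hder hinj]
    simp only [heq]

lemma a_sub (g : ℝ → ℝ) : ∫ v in Set.Ioi (0:ℝ), g v = ∫ a in Set.Ioi (0:ℝ), (a/2) * g ((a/2)^2) := by
  have himg : (fun s : ℝ => (s/2)^2) '' Set.Ioi 0 = Set.Ioi 0 := by
    ext y; simp only [Set.mem_image, Set.mem_Ioi]
    constructor
    · rintro ⟨s, hs, rfl⟩; positivity
    · intro hy
      refine ⟨2*√y, by positivity, ?_⟩
      rw [mul_div_cancel_left₀ _ two_ne_zero, Real.sq_sqrt hy.le]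
  have hder : ∀ s ∈ Set.Ioi (0:ℝ), HasDerivWithinAt (fun s : ℝ => (s/2)^2) (s/2) (Set.Ioi 0) s := by
    intro s _
    refine HasDerivAt.hasDerivWithinAt ?_
    refine (((hasDerivAt_id' s).div_const 2).pow 2).congr_deriv ?_
    norm_num
    ring
  have hinj : Set.InjOn (fun s : ℝ => (s/2)^2) (Set.Ioi 0) := by
    intro a ha b hb h
    have ha : 0 < a := ha
    have hb : 0 < b := hb
    have : a/2 = b/2 := by
      exact (pow_left_inj₀ (by positivity) (by positivity) two_ne_zero).mp h
    linarith
  conv_lhs => rw [← himg, integral_image_eq_integral_abs_deriv_smul measurableSet_Ioi hder hinj]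
  refine setIntegral_congr_fun measurableSet_Ioi fun a ha => ?_
  have ha : 0 < a := ha
  rw [abs_of_pos (by positivity), smul_eq_mul]

lemma w3_scale (c a : ℝ) (hc : 0 < c) : w3 (c^2+(a/2)^2) = 8 * w3 (4*c^2+a^2) := by
  unfold w3
  have h : 4*c^2+a^2 = 4*(c^2+(a/2)^2) := by ring
  have h2 : √(4*(c^2+(a/2)^2)) = 2*√(c^2+(a/2)^2) := by
    rw [Real.sqrt_mul (by norm_num), show (4:ℝ) = 2^2 by norm_num, Real.sqrt_sq (by norm_num)]
  rw [h, h2]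
  have : 0 < √(c^2+(a/2)^2) := Real.sqrt_pos.mpr (by positivity)
  field_simp
  norm_num

lemma VV_eq (τ c : ℝ) (hc : 0 < c) :
    VV τ c = -(1/Real.pi) * ∫ s in Set.Ioi (0:ℝ), Real.sin (2*τ*s) * (Real.sinh s / (c^2+Real.sinh s^2)) := by
  have hfi : IntegrableOn (fun Y => gY c Y * |hY τ Y|) (Set.Ioi 1) := by
    have h := (Y_sub c hc (fun t => |Real.sin (τ*t)|)).1.mpr
      ((sc_int c hc (fun s => |Real.sin (τ*(2*s))|) (by fun_prop) (fun s => by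
        rw [abs_abs]; exact Real.abs_sin_le_one _)).const_mul _)
    refine h.congr_fun (fun Y hY => ?_) measurableSet_Ioi
    simp only [_root_.hY, abs_mul, abs_neg, Real.abs_exp]
  have h1 := fub c hc (hY τ) (hY_meas τ) hfi
  rw [a_sub] at h1
  have h2 := (Y_sub c hc (fun t => -Real.sin (τ*t))).2
  have h3 : VV τ c = c/(4*Real.pi) * ∫ Y in Set.Ioi (1:ℝ), gY c Y * hY τ Y := by
    rw [← h1, VV, ← integral_const_mul]
    refine setIntegral_congr_fun measurableSet_Ioi fun a ha => ?_

    rw [gG, R_im τ a ha, wt, w3_scale c a hc]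
    field_simp
    ring
  rw [h3]
  simp only [hY]
  rw [h2, ← integral_const_mul, ← integral_const_mul]
  congr 1; ext s
  rw [show τ*(2*s) = 2*τ*s by ring]
  field_simp


lemma sech_le (s : ℝ) : 1/Real.cosh s ≤ 2*Real.exp (-(1*|s|)) := by
  have h5 : Real.exp |s| ≤ 2 * Real.cosh s := by
    rw [← Real.cosh_abs, Real.cosh_eq]; linarith [Real.exp_pos (-|s|)]
  rw [div_le_iff₀ (Real.cosh_pos s), one_mul, Real.exp_neg]
  have := Real.exp_pos |s|
  field_simp
  exact h5

lemma sech_int : Integrable (fun s : ℝ => 1/Real.cosh s) := by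
  have h : Integrable (fun s : ℝ => 2*Real.exp (-(1*|s|))) := by
    refine Integrable.const_mul ?_ 2
    rw [← integrableOn_univ, ← Set.Iic_union_Ioi (a := (0:ℝ)), integrableOn_union]
    constructor
    · refine (integrableOn_exp_Iic 0).congr_fun (fun s hs => ?_) measurableSet_Iic
      beta_reduce
      rw [abs_of_nonpos hs]; ring_nf
    · refine (exp_neg_integrableOn_Ioi 0 one_pos).congr_fun (fun s hs => ?_) measurableSet_Ioi
      have hs : 0 < s := hs
      simp only
      rw [abs_of_pos hs]; ring_nf
  refine Integrable.mono' h ?_ (ae_of_all _ fun s => ?_)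
  · exact (Continuous.div continuous_const Real.continuous_cosh (fun s => (Real.cosh_pos s).ne')).aestronglyMeasurable
  · have := Real.cosh_pos s
    rw [Real.norm_eq_abs, abs_of_pos (by positivity)]
    exact sech_le s

lemma esech_int (n : ℝ) : Integrable (fun s : ℝ => Complex.exp (Complex.I*n*s) / (Real.cosh s : ℂ)) := by
  refine Integrable.mono' sech_int ?_ (ae_of_all _ fun s => ?_)
  · refine (Continuous.div (by fun_prop) ?_ (fun s => ?_)).aestronglyMeasurable
    · exact Complex.continuous_ofReal.comp Real.continuous_cosh
    · exact_mod_cast (Real.cosh_pos s).ne'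
  · rw [norm_div, Complex.norm_exp, Complex.norm_real, Real.norm_eq_abs, abs_of_pos (Real.cosh_pos s)]
    simp

noncomputable def lg (s : ℝ) : ℝ := 1/(1+Real.exp (-(2*s)))

lemma lg_image : lg '' Set.univ = Set.Ioo 0 1 := by
  ext y; simp only [Set.mem_image, Set.mem_univ, true_and, Set.mem_Ioo]
  constructor
  · rintro ⟨s, rfl⟩
    have := Real.exp_pos (-(2*s))
    unfold lg
    refine ⟨by positivity, ?_⟩
    rw [div_lt_one (by positivity)]; linarith
  · rintro ⟨h0, h1⟩
    refine ⟨-(Real.log (1/y-1))/2, ?_⟩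
    have : 0 < 1/y - 1 := by rw [sub_pos, one_lt_div h0]; exact h1
    unfold lg
    rw [show -(2*(-(Real.log (1/y-1))/2)) = Real.log (1/y-1) by ring, Real.exp_log this]
    field_simp
    ring

lemma esech_val (n : ℝ) : ∫ s : ℝ, Complex.exp (Complex.I*n*s) / (Real.cosh s : ℂ) = ((Real.pi / Real.cosh (Real.pi*n/2) : ℝ) : ℂ) := by
  set p : ℂ := 1/2 + Complex.I*n/2
  have hp : p.re = 1/2 := by simp [p]
  have hq : (1-p).re = 1/2 := by simp [p]; norm_num
  have hB := Complex.Gamma_mul_Gamma_eq_betaIntegral (s := p) (t := 1-p) (by rw [hp]; norm_num) (by rw [hq]; norm_num)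
  rw [Complex.Gamma_mul_Gamma_one_sub, show p + (1-p) = 1 by ring, Complex.Gamma_one, one_mul] at hB
  have hs : Complex.sin (Real.pi * p) = ((Real.cosh (Real.pi*n/2) : ℝ):ℂ) := by
    rw [show (Real.pi:ℂ)*p = (Real.pi*n/2)*Complex.I + Real.pi/2 by simp only [p]; ring, Complex.sin_add_pi_div_two, Complex.cos_mul_I]
    push_cast; rfl
  rw [hs] at hB
  push_cast
  rw [Complex.ofReal_cosh] at hB
  push_cast at hB
  rw [hB, Complex.betaIntegral, intervalIntegral.integral_of_le zero_le_one, integral_Ioc_eq_integral_Ioo, ← lg_image]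
  have hder : ∀ s ∈ (Set.univ : Set ℝ), HasDerivWithinAt lg (2*(lg s * (1-lg s))) Set.univ s := by
    intro s _
    refine HasDerivAt.hasDerivWithinAt ?_
    have hE := Real.exp_pos (-(2*s))
    have h1 : HasDerivAt (fun s : ℝ => 1+Real.exp (-(2*s))) (Real.exp (-(2*s))*(-(2*1))) s :=
      (((hasDerivAt_id' s).const_mul 2).neg.exp).const_add 1
    refine ((hasDerivAt_const s (1:ℝ)).div h1 (by positivity)).congr_deriv ?_
    unfold lg
    field_simp
    ring
  have hinj : Set.InjOn lg Set.univ := by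
    intro a _ b _ h
    unfold lg at h
    have ha := Real.exp_pos (-(2*a))
    have hb := Real.exp_pos (-(2*b))
    have : Real.exp (-(2*a)) = Real.exp (-(2*b)) := by
      field_simp at h; linarith
    have := Real.exp_injective this
    linarith
  rw [integral_image_eq_integral_abs_deriv_smul MeasurableSet.univ hder hinj, setIntegral_univ]
  congr 1; ext s
  have hE := Real.exp_pos (-(2*s))
  have hl0 : 0 < lg s := by unfold lg; positivity
  have hl1 : 0 < 1 - lg s := by
    have : lg s ∈ Set.Ioo (0:ℝ) 1 := lg_image ▸ Set.mem_image_of_mem _ (Set.mem_univ s)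
    linarith [this.2]
  have e1 : (1-(lg s:ℂ)) = ((1-lg s : ℝ):ℂ) := by push_cast; rfl
  have hlog : Real.log (lg s) = s - Real.log (2*Real.cosh s) := by
    have : lg s = Real.exp s / (2*Real.cosh s) := by
      unfold lg; rw [Real.cosh_eq, show -(2*s) = -s + -s by ring, Real.exp_add, Real.exp_neg]
      have := Real.exp_pos s
      field_simp
    rw [this, Real.log_div (Real.exp_pos s).ne' (by have := Real.cosh_pos s; positivity), Real.log_exp]
  have hlog2 : Real.log (1-lg s) = -s - Real.log (2*Real.cosh s) := by
    have : 1-lg s = Real.exp (-s) / (2*Real.cosh s) := by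
      unfold lg; rw [Real.cosh_eq, show -(2*s) = -s + -s by ring, Real.exp_add, Real.exp_neg]
      have := Real.exp_pos s
      field_simp
      ring
    rw [this, Real.log_div (Real.exp_pos _).ne' (by have := Real.cosh_pos s; positivity), Real.log_exp]
  rw [e1, ← exp_log_cpow _ hl0, ← exp_log_cpow _ hl1, abs_of_pos (by positivity), Complex.real_smul]
  have hd : lg s*(1-lg s) = Real.exp (Real.log (lg s) + Real.log (1-lg s)) := by
    rw [Real.exp_add, Real.exp_log hl0, Real.exp_log hl1]
  rw [hd, hlog, hlog2]
  have hc2 : (Real.cosh s : ℂ) = ((Real.exp (Real.log (2*Real.cosh s))/2 : ℝ):ℂ) := by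
    rw [Real.exp_log (by have := Real.cosh_pos s; positivity)]; push_cast; ring
  conv_lhs => rw [← Complex.ofReal_cosh, hc2]
  push_cast
  set Lc := ((Real.log (2*Real.cosh s) : ℝ) : ℂ)
  rw [← Complex.exp_add, mul_assoc 2, ← Complex.exp_add, div_div_eq_mul_div, mul_div_right_comm, ← Complex.exp_sub, mul_comm]
  congr 2
  simp only [p]
  ring

lemma ss_val (n u : ℝ) (hu : u ≠ 0) :
    ∫ s in Set.Ioi (0:ℝ), Real.sin (n*s) * (Real.sinh s / (Real.cosh u^2+Real.sinh s^2))
      = Real.pi * Real.sin (n*u) / (2*Real.sinh u*Real.cosh (Real.pi*n/2)) := by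
  have hsu : Real.sinh u ≠ 0 := by rwa [Ne, Real.sinh_eq_zero]
  set f : ℝ → ℝ := fun s => Real.sin (n*s) * (Real.sinh s / (Real.cosh u^2+Real.sinh s^2)) with hf
  have hA := integral_comp_abs (f := f)
  have hev : ∀ x, f |x| = f x := by
    intro x
    rcases abs_choice x with h | h <;> rw [h]
    simp only [hf, Real.sinh_neg, mul_neg, Real.sin_neg]
    ring
  simp only [hev] at hA
  have hcx : ∀ s : ℝ, f s = 1/(2*Real.sinh u) * (Complex.exp (Complex.I*n*u) * (Complex.exp (Complex.I*n*((s-u : ℝ):ℂ)) / (Real.cosh (s-u) : ℂ))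
      - Complex.exp (-(Complex.I*n*u)) * (Complex.exp (Complex.I*n*((s+u:ℝ):ℂ)) / (Real.cosh (s+u) : ℂ))).im := by
    intro s
    rw [← mul_div_assoc, ← mul_div_assoc, ← Complex.exp_add, ← Complex.exp_add,
      show Complex.I*n*u + Complex.I*n*((s-u:ℝ):ℂ) = ((n*s:ℝ):ℂ)*Complex.I by push_cast; ring,
      show -(Complex.I*n*u) + Complex.I*n*((s+u:ℝ):ℂ) = ((n*s:ℝ):ℂ)*Complex.I by push_cast; ring,
      Complex.sub_im, Complex.div_ofReal_im, Complex.div_ofReal_im, Complex.exp_ofReal_mul_I_im]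
    have h1 := Real.cosh_pos (s-u)
    have h2 := Real.cosh_pos (s+u)
    have h3 : Real.cosh u^2+Real.sinh s^2 = Real.cosh (s-u) * Real.cosh (s+u) := by
      rw [Real.cosh_sub, Real.cosh_add]
      have := Real.cosh_sq u
      have := Real.cosh_sq s
      nlinarith
    simp only [hf]
    rw [h3]
    have h4 : Real.sinh s * (2*Real.sinh u) = Real.cosh (s+u) - Real.cosh (s-u) := by
      rw [Real.cosh_sub, Real.cosh_add]; ring
    field_simp
    linear_combination h4 * Real.sin (n*s)
  have hi1 : Integrable (fun s : ℝ => Complex.exp (Complex.I*n*u) * (Complex.exp (Complex.I*n*((s-u : ℝ):ℂ)) / (Real.cosh (s-u) : ℂ))) :=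
    ((esech_int n).comp_sub_right u).const_mul _
  have hi2 : Integrable (fun s : ℝ => Complex.exp (-(Complex.I*n*u)) * (Complex.exp (Complex.I*n*((s+u : ℝ):ℂ)) / (Real.cosh (s+u) : ℂ))) :=
    ((esech_int n).comp_add_right u).const_mul _
  have hfull : ∫ s, f s = 1/(2*Real.sinh u) * (2*Real.sin (n*u)*(Real.pi / Real.cosh (Real.pi*n/2))) := by
    simp only [hcx]
    rw [integral_const_mul]
    congr 1
    have := integral_im (hi1.sub hi2)
    simp only [RCLike.im_to_complex, Pi.sub_apply] at this
    rw [this, integral_sub hi1 hi2, integral_const_mul, integral_const_mul,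
      integral_sub_right_eq_self (fun s : ℝ => Complex.exp (Complex.I*n*s) / (Real.cosh s : ℂ)) u,
      integral_add_right_eq_self (fun s : ℝ => Complex.exp (Complex.I*n*s) / (Real.cosh s : ℂ)) u, esech_val,
      show Complex.I*n*u = ((n*u:ℝ):ℂ)*Complex.I by push_cast; ring, ← neg_mul, ← Complex.ofReal_neg]
    rw [Complex.sub_im, Complex.im_mul_ofReal, Complex.im_mul_ofReal, Complex.exp_ofReal_mul_I_im, Complex.exp_ofReal_mul_I_im, Real.sin_neg]
    ring
  have hcp := Real.cosh_pos (Real.pi*n/2)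
  rw [hfull] at hA
  have : ∫ s in Set.Ioi (0:ℝ), f s = 1/2 * (1/(2*Real.sinh u) * (2*Real.sin (n*u)*(Real.pi / Real.cosh (Real.pi*n/2)))) := by linarith
  rw [this]
  field_simp


lemma coth_sum (y : ℝ) (hy : 0 < y) :
    HasSum (fun k : ℕ => 2*y/(y^2+((k:ℝ)+1)^2)) (Real.pi * Real.cosh (Real.pi*y)/Real.sinh (Real.pi*y) - 1/y) := by
  have hz : Complex.I*y ∈ Complex.integerComplement := by
    rw [Complex.mem_integerComplement_iff]
    rintro ⟨m, hm⟩
    have := congrArg Complex.im hm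
    simp at this
    linarith
  have h1 := (summable_cotTerm hz).hasSum
  rw [show (∑' k, cotTerm (Complex.I*y) k) = _ from (cot_series_rep' hz).symm] at h1
  have h2 := h1.mul_left Complex.I
  rw [← Complex.hasSum_ofReal]
  have hyc : (y:ℂ) ≠ 0 := by exact_mod_cast hy.ne'
  have ef : ∀ k : ℕ, ((2*y/(y^2+((k:ℝ)+1)^2) : ℝ) : ℂ) = Complex.I * cotTerm (Complex.I*y) k := by
    intro k
    simp only [cotTerm]
    have a1 : Complex.I*y - ((k:ℂ)+1) ≠ 0 := by
      intro h; have := congrArg Complex.im h; simp at this; linarith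
    have a2 : Complex.I*y + ((k:ℂ)+1) ≠ 0 := by
      intro h; have := congrArg Complex.im h; simp at this; linarith
    have a3 : (y:ℂ)^2+((k:ℂ)+1)^2 ≠ 0 := by
      have : y^2+((k:ℝ)+1)^2 ≠ 0 := by positivity
      exact_mod_cast this
    push_cast
    rw [div_add_div _ _ a1 a2, ← mul_div_assoc, div_eq_div_iff a3 (mul_ne_zero a1 a2)]
    ring_nf
    simp only [Complex.I_sq, show Complex.I^3 = -Complex.I by rw [pow_succ, Complex.I_sq]; ring, show Complex.I^4 = 1 from Complex.I_pow_four]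
    ring
  have ev : ((Real.pi * Real.cosh (Real.pi*y)/Real.sinh (Real.pi*y) - 1/y : ℝ) : ℂ) = Complex.I * (Real.pi * Complex.cot (Real.pi * (Complex.I*y)) - 1/(Complex.I*y)) := by
    have hs : Complex.sinh (Real.pi*y) ≠ 0 := by
      have : Real.sinh (Real.pi*y) ≠ 0 := (Real.sinh_pos_iff.mpr (by positivity)).ne'
      exact_mod_cast this
    rw [Complex.cot_eq_cos_div_sin, show (Real.pi:ℂ)*(Complex.I*y) = (Real.pi*y)*Complex.I by ring, Complex.cos_mul_I, Complex.sin_mul_I]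
    push_cast
    field_simp
  rw [ev]
  exact h2.congr_fun ef

lemma tanh_sum (y : ℝ) (hy : 0 < y) :
    HasSum (fun k : ℕ => 2*y/(y^2+(2*(k:ℝ)+1)^2)) (Real.pi/2 * Real.tanh (Real.pi*y/2)) := by
  have hA := coth_sum y hy
  have hB := (coth_sum (y/2) (by positivity)).mul_left (1/2)
  have hE : Summable (fun k : ℕ => 2*y/(y^2+(2*(k:ℝ)+1)^2)) := by
    have := hA.summable.comp_injective (i := fun k : ℕ => 2*k) (fun a b h => by simpa using h)
    refine this.congr fun k => ?_
    simp
  have hS := HasSum.even_add_odd (f := fun k : ℕ => 2*y/(y^2+((k:ℝ)+1)^2))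
    (m := ∑' k : ℕ, 2*y/(y^2+(2*(k:ℝ)+1)^2)) (m' := 1/2 * (Real.pi * Real.cosh (Real.pi*(y/2))/Real.sinh (Real.pi*(y/2)) - 1/(y/2)))
    (by refine hE.hasSum.congr_fun ?_; intro k; simp) (by
      refine hB.congr_fun ?_
      intro k
      push_cast
      field_simp
      ring)
  have := hS.unique hA
  have key : ∑' k : ℕ, 2*y/(y^2+(2*(k:ℝ)+1)^2) = Real.pi/2 * Real.tanh (Real.pi*y/2) := by
    have e : Real.pi*y = 2*(Real.pi*y/2) := by ring
    have e' : Real.pi*(y/2) = Real.pi*y/2 := by ring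
    rw [e', e, Real.cosh_two_mul, Real.sinh_two_mul] at this
    rw [← e] at this
    rw [Real.tanh_eq_sinh_div_cosh]
    have h1 := Real.cosh_pos (Real.pi*y/2)
    have h2 : 0 < Real.sinh (Real.pi*y/2) := Real.sinh_pos_iff.mpr (by positivity)
    set C := Real.cosh (Real.pi*y/2)
    set S := Real.sinh (Real.pi*y/2)
    rw [← eq_sub_iff_add_eq] at this
    rw [this]
    field_simp
    ring
  rw [← key]
  exact hE.hasSum

lemma sin_exp_int (n b : ℝ) (hb : 0 < b) :
    ∫ s in Set.Ioi (0:ℝ), Real.sin (n*s) * Real.exp (-(b*s)) = n/(n^2+b^2) := by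
  have hd : 0 < n^2+b^2 := by positivity
  have hder : ∀ s ∈ Set.Ici (0:ℝ), HasDerivAt (fun s => -(Real.exp (-(b*s)) * (b*Real.sin (n*s) + n*Real.cos (n*s)))/(n^2+b^2))
      (Real.sin (n*s) * Real.exp (-(b*s))) s := by
    intro s _
    have h1 : HasDerivAt (fun s : ℝ => Real.exp (-(b*s))) (Real.exp (-(b*s)) * -(b*1)) s := ((hasDerivAt_id' s).const_mul b).neg.exp
    have h2 := (((hasDerivAt_id' s).const_mul n).sin.const_mul b).add (((hasDerivAt_id' s).const_mul n).cos.const_mul n)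
    refine ((h1.mul h2).neg.div_const (n^2+b^2)).congr_deriv ?_
    simp only [Pi.add_apply]
    field_simp
    ring
  have hlim : Tendsto (fun s => -(Real.exp (-(b*s)) * (b*Real.sin (n*s) + n*Real.cos (n*s)))/(n^2+b^2)) atTop (𝓝 0) := by
    have h0 : Tendsto (fun s : ℝ => Real.exp (-(b*s)) * (b + |n|)) atTop (𝓝 0) := by
      have : Tendsto (fun s : ℝ => Real.exp (-(b*s))) atTop (𝓝 0) :=
        Real.tendsto_exp_neg_atTop_nhds_zero.comp (tendsto_id.const_mul_atTop hb)
      simpa using this.mul_const (b+|n|)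
    have h1 : Tendsto (fun s : ℝ => Real.exp (-(b*s)) * (b*Real.sin (n*s) + n*Real.cos (n*s))) atTop (𝓝 0) := by
      refine squeeze_zero_norm (fun s => ?_) h0
      rw [norm_mul, Real.norm_eq_abs, Real.abs_exp]
      refine mul_le_mul_of_nonneg_left ?_ (Real.exp_pos _).le
      refine (norm_add_le _ _).trans ?_
      rw [norm_mul, norm_mul]
      simp only [Real.norm_eq_abs]
      rw [abs_of_pos hb]
      refine add_le_add ?_ ?_
      · exact mul_le_of_le_one_right hb.le (Real.abs_sin_le_one _)
      · exact mul_le_of_le_one_right (abs_nonneg n) (Real.abs_cos_le_one _)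
    simpa using h1.neg.div_const (n^2+b^2)
  have hint : IntegrableOn (fun s => Real.sin (n*s) * Real.exp (-(b*s))) (Set.Ioi 0) := by
    refine Integrable.mono' (exp_neg_integrableOn_Ioi 0 hb) (by fun_prop) (ae_of_all _ fun s => ?_)
    rw [norm_mul, Real.norm_eq_abs, Real.norm_eq_abs, Real.abs_exp, neg_mul]
    exact mul_le_of_le_one_left (Real.exp_pos _).le (Real.abs_sin_le_one _)
  rw [integral_Ioi_of_hasDerivAt_of_tendsto' hder hint hlim]
  simp
  ring

lemma id_exp_int (b : ℝ) (hb : 0 < b) :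
    IntegrableOn (fun s : ℝ => s * Real.exp (-(b*s))) (Set.Ioi 0) ∧ ∫ s in Set.Ioi (0:ℝ), s * Real.exp (-(b*s)) = 1/b^2 := by
  have h := integrableOn_rpow_mul_exp_neg_mul_rpow (s := 1) (p := 1) (b := b) (by norm_num) one_pos hb
  have h2 := Real.integral_rpow_mul_exp_neg_mul_Ioi (a := 2) (r := b) (by norm_num) hb
  constructor
  · refine h.congr_fun (fun s hs => ?_) measurableSet_Ioi
    simp
  · have e : (2:ℝ)-1 = 1 := by norm_num
    rw [e] at h2
    simp only [Real.rpow_one] at h2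
    rw [h2, Real.Gamma_two]
    simp

lemma sin_sinh_val (n : ℝ) (hn : 0 < n) :
    ∫ s in Set.Ioi (0:ℝ), Real.sin (n*s) / Real.sinh s = Real.pi/2 * Real.tanh (Real.pi*n/2) := by
  have hb : ∀ k : ℕ, (0:ℝ) < 2*k+1 := fun k => by positivity
  have hbound : ∀ k : ℕ, ∀ s ∈ Set.Ioi (0:ℝ), ‖2*(Real.sin (n*s) * Real.exp (-((2*(k:ℝ)+1)*s)))‖ ≤ 2*n*(s * Real.exp (-((2*(k:ℝ)+1)*s))) := by
    intro k s hs
    have hs : 0 < s := hs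
    rw [norm_mul, norm_mul, Real.norm_eq_abs, Real.norm_eq_abs, Real.norm_eq_abs, Real.abs_exp]
    have : |Real.sin (n*s)| ≤ n*s := by
      refine (Real.abs_sin_le_abs).trans ?_
      rw [abs_of_pos (by positivity)]
    have := mul_le_mul_of_nonneg_right this (Real.exp_pos (-((2*(k:ℝ)+1)*s))).le
    norm_num
    linarith
  have hi : ∀ k : ℕ, IntegrableOn (fun s : ℝ => 2*(Real.sin (n*s) * Real.exp (-((2*(k:ℝ)+1)*s)))) (Set.Ioi 0) := by
    intro k
    refine Integrable.mono' ((id_exp_int _ (hb k)).1.const_mul (2*n)) (by fun_prop) ?_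
    filter_upwards [ae_restrict_mem measurableSet_Ioi] with s hs
    exact hbound k s hs
  have hsum : Summable (fun k : ℕ => ∫ s in Set.Ioi (0:ℝ), ‖2*(Real.sin (n*s) * Real.exp (-((2*(k:ℝ)+1)*s)))‖) := by
    have hc : Summable (fun k : ℕ => 2*n*(1/(2*(k:ℝ)+1)^2)) := by
      refine Summable.mul_left _ ?_
      have := (Real.summable_one_div_nat_pow (p := 2)).mpr (by norm_num)
      have := this.comp_injective (i := fun k : ℕ => 2*k+1) (fun a b h => by simpa using h)
      refine this.congr fun k => ?_
      simp
    refine Summable.of_nonneg_of_le (fun k => integral_nonneg fun s => norm_nonneg _) (fun k => ?_) hc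
    rw [← (id_exp_int _ (hb k)).2, ← integral_const_mul]
    exact setIntegral_mono_on (hi k).norm ((id_exp_int _ (hb k)).1.const_mul (2*n)) measurableSet_Ioi (hbound k)
  have h := hasSum_integral_of_summable_integral_norm hi hsum
  have h2 := (tanh_sum n hn)
  have h3 : HasSum (fun k : ℕ => ∫ s in Set.Ioi (0:ℝ), 2*(Real.sin (n*s) * Real.exp (-((2*(k:ℝ)+1)*s)))) (Real.pi/2 * Real.tanh (Real.pi*n/2)) := by
    refine h2.congr_fun fun k => ?_
    rw [integral_const_mul, sin_exp_int _ _ (hb k)]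
    ring
  rw [← h.unique h3]
  refine setIntegral_congr_fun measurableSet_Ioi fun s hs => ?_
  have hs : 0 < s := hs
  have hr : Real.exp (-(2*s)) < 1 := by rw [Real.exp_lt_one_iff]; linarith
  have hg := (hasSum_geometric_of_lt_one (Real.exp_pos (-(2*s))).le hr).mul_left (2*Real.sin (n*s)*Real.exp (-s))
  have hh : HasSum (fun k : ℕ => 2*(Real.sin (n*s) * Real.exp (-((2*(k:ℝ)+1)*s)))) (2*Real.sin (n*s)*Real.exp (-s)*(1-Real.exp (-(2*s)))⁻¹) := by
    refine hg.congr_fun fun k => ?_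
    rw [← Real.exp_nat_mul, mul_assoc _ (Real.exp (-s)), ← Real.exp_add, mul_assoc]
    congr 3; ring
  rw [hh.tsum_eq, Real.sinh_eq, show -(2*s) = -s + -s by ring, Real.exp_add]
  have h1 : Real.exp (-s) < 1 := by rw [Real.exp_lt_one_iff]; linarith
  have h0 := Real.exp_pos (-s)
  have he : Real.exp s = 1/Real.exp (-s) := by rw [Real.exp_neg]; simp
  rw [he]
  set E := Real.exp (-s)
  have : 1 - E*E ≠ 0 := by nlinarith
  have : 1 - E^2 ≠ 0 := by nlinarith
  field_simp


lemma id_div_sinh_le (s : ℝ) (hs : 0 < s) : s / Real.sinh s ≤ Real.exp (-(1*s)) + 2*(s * Real.exp (-(1*s))) := by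
  have h1 : 0 < Real.sinh s := Real.sinh_pos_iff.mpr hs
  rw [div_le_iff₀ h1, Real.sinh_eq, one_mul]
  have h2 := Real.add_one_le_exp (2*s)
  have h0 := Real.exp_pos (-s)
  have e1 : Real.exp s * Real.exp (-s) = 1 := by rw [← Real.exp_add]; simp
  have e2 : Real.exp (2*s) * (Real.exp (-s)*Real.exp (-s)) = 1 := by rw [← Real.exp_add, ← Real.exp_add]; ring_nf; simp
  set E := Real.exp (-s)
  have : (1+2*s)*(E*E) ≤ 1 := by rw [← e2]; gcongr; linarith
  nlinarith

lemma VV_lim (τ : ℝ) (hτ : 0 < τ) : Tendsto (VV τ) (𝓝[>] 0) (𝓝 (-(1/2) * Real.tanh (Real.pi*τ))) := by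
  have h1 : Tendsto (fun c : ℝ => ∫ s in Set.Ioi (0:ℝ), Real.sin (2*τ*s) * (Real.sinh s / (c^2+Real.sinh s^2))) (𝓝[>] 0)
      (𝓝 (∫ s in Set.Ioi (0:ℝ), Real.sin (2*τ*s) / Real.sinh s)) := by
    refine tendsto_integral_filter_of_dominated_convergence
      (fun s => 2*τ*(Real.exp (-1*s) + 2*(s * Real.exp (-(1*s))))) ?_ ?_ ?_ ?_
    · refine Eventually.of_forall fun c => ?_
      exact (by fun_prop : Measurable (fun s : ℝ => Real.sin (2*τ*s) * (Real.sinh s / (c^2+Real.sinh s^2)))).aestronglyMeasurable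
    · refine Eventually.of_forall fun c => ?_
      filter_upwards [ae_restrict_mem measurableSet_Ioi] with s hs
      have hs : 0 < s := hs
      have h1 : 0 < Real.sinh s := Real.sinh_pos_iff.mpr hs
      rw [norm_mul, Real.norm_eq_abs, Real.norm_eq_abs, abs_of_nonneg (a := _ / _) (by positivity)]
      have hsin : |Real.sin (2*τ*s)| ≤ 2*τ*s := by
        refine (Real.abs_sin_le_abs).trans ?_
        rw [abs_of_pos (by positivity)]
      have h2 : Real.sinh s / (c^2+Real.sinh s^2) ≤ 1/Real.sinh s := by
        rw [div_le_div_iff₀ (by positivity) h1]; nlinarith [sq_nonneg c]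
      have h3 := id_div_sinh_le s hs
      rw [neg_mul]
      calc _ ≤ (2*τ*s)*(1/Real.sinh s) := by gcongr
        _ = 2*τ*(s/Real.sinh s) := by ring
        _ ≤ _ := by gcongr
    · refine Integrable.const_mul ?_ _
      exact (exp_neg_integrableOn_Ioi 0 one_pos).add ((id_exp_int 1 one_pos).1.const_mul 2)
    · filter_upwards [ae_restrict_mem measurableSet_Ioi] with s hs
      have hs : 0 < s := hs
      have h1 : 0 < Real.sinh s := Real.sinh_pos_iff.mpr hs
      have hc : ContinuousAt (fun c : ℝ => Real.sin (2*τ*s) * (Real.sinh s / (c^2+Real.sinh s^2))) 0 := by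
        refine ContinuousAt.mul continuousAt_const (ContinuousAt.div continuousAt_const (by fun_prop) (by positivity))
      have := hc.tendsto.mono_left (nhdsWithin_le_nhds (s := Set.Ioi 0))
      refine (congrArg (Tendsto _ _) (congrArg 𝓝 ?_)).mp this
      field_simp
      simp
  rw [sin_sinh_val (2*τ) (by positivity)] at h1
  have h2 := h1.const_mul (-(1/Real.pi))
  refine ((congrArg (Tendsto _ _) (congrArg 𝓝 ?_)).mp h2).congr' ?_
  · rw [show Real.pi*(2*τ)/2 = Real.pi*τ by ring]
    have := Real.pi_pos
    field_simp
  · filter_upwards [self_mem_nhdsWithin] with c hc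
    exact (VV_eq τ c hc).symm

noncomputable def kk (y : ℝ) : ℝ := ∫ t in Set.Ioi (0:ℝ), Real.exp (-y * Real.sinh t)

lemma kk_pt (y t : ℝ) (hy : 0 < y) (ht : 0 < t) : Real.exp (-y*Real.sinh t) ≤ 1/(1+y*Real.sinh t) := by
  have h1 : 0 < Real.sinh t := Real.sinh_pos_iff.mpr ht
  rw [neg_mul, Real.exp_neg, ← one_div]
  have := Real.add_one_le_exp (y*Real.sinh t)
  gcongr
  linarith

lemma one_add_sinh (t : ℝ) (ht : 0 < t) : 1/(1+Real.sinh t) ≤ 2*Real.exp (-1*t) := by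
  have h1 : 0 < Real.sinh t := Real.sinh_pos_iff.mpr ht
  rw [div_le_iff₀ (by positivity), Real.sinh_eq]
  have e1 : Real.exp t * Real.exp (-t) = 1 := by rw [← Real.exp_add]; simp
  have h2 : Real.exp (-t) ≤ 1 := by rw [Real.exp_le_one_iff]; linarith
  have h0 := Real.exp_pos (-t)
  rw [neg_mul, one_mul]
  nlinarith

lemma kk_lim : Tendsto (fun y => y * kk y) (𝓝[>] 0) (𝓝 0) := by
  have h : Tendsto (fun y : ℝ => ∫ t in Set.Ioi (0:ℝ), y * Real.exp (-y*Real.sinh t)) (𝓝[>] 0) (𝓝 (∫ t in Set.Ioi (0:ℝ), (0:ℝ))) := by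
    refine tendsto_integral_filter_of_dominated_convergence (fun t => 2*Real.exp (-1*t)) ?_ ?_ ?_ ?_
    · refine Eventually.of_forall fun c => ?_
      exact (by fun_prop : Measurable (fun t : ℝ => c*Real.exp (-c*Real.sinh t))).aestronglyMeasurable
    · have : Set.Ioo (0:ℝ) 1 ∈ 𝓝[>] (0:ℝ) := Ioo_mem_nhdsGT one_pos
      filter_upwards [this] with y hy
      filter_upwards [ae_restrict_mem measurableSet_Ioi] with t ht
      have hy0 := hy.1
      have h1 : 0 < Real.sinh t := Real.sinh_pos_iff.mpr ht
      rw [norm_mul, Real.norm_eq_abs, Real.norm_eq_abs, Real.abs_exp, abs_of_pos hy0]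
      refine le_trans ?_ (one_add_sinh t ht)
      refine (mul_le_mul_of_nonneg_left (kk_pt y t hy0 ht) hy0.le).trans ?_
      rw [mul_one_div, div_le_div_iff₀ (by positivity) (by positivity)]
      nlinarith [hy.2]
    · exact (exp_neg_integrableOn_Ioi 0 one_pos).const_mul 2
    · refine ae_of_all _ fun t => ?_
      have hc : Continuous (fun y : ℝ => y * Real.exp (-y*Real.sinh t)) := by fun_prop
      have := (hc.tendsto 0).mono_left (nhdsWithin_le_nhds (s := Set.Ioi 0))
      simpa using this
  simpa [integral_const_mul, kk] using h

noncomputable def rr (c a : ℝ) : ℝ := 1/√(4*c^2+a^2)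

lemma rr_deriv (c a : ℝ) (hc : 0 < c) : HasDerivAt (rr c) (-(a*w3 (4*c^2+a^2))) a := by
  have hp : 0 < 4*c^2+a^2 := by positivity
  have h1 : HasDerivAt (fun a : ℝ => 4*c^2+a^2) (2*a) a := by
    refine ((hasDerivAt_pow 2 a).const_add (4*c^2)).congr_deriv ?_
    norm_num
  have h2 := h1.sqrt hp.ne'
  have hs := Real.sqrt_pos.mpr hp
  refine ((hasDerivAt_const a (1:ℝ)).div h2 hs.ne').congr_deriv ?_
  unfold w3
  rw [Real.sq_sqrt hp.le]
  field_simp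
  ring

lemma rr_zero (c : ℝ) (hc : 0 < c) : rr c 0 = 1/(2*c) := by
  unfold rr
  rw [show 4*c^2+0^2 = (2*c)^2 by ring, Real.sqrt_sq (by positivity)]

lemma rr_lim (c : ℝ) (hc : 0 < c) : Tendsto (rr c) atTop (𝓝 0) := by
  have h : Tendsto (fun a : ℝ => 1/a) atTop (𝓝 0) := by simpa using tendsto_inv_atTop_zero (𝕜 := ℝ)
  refine squeeze_zero' (Eventually.of_forall fun a => by unfold rr; positivity) ?_ h
  filter_upwards [eventually_gt_atTop 0] with a ha
  unfold rr
  refine one_div_le_one_div_of_le ha ?_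
  exact Real.le_sqrt_of_sq_le (by nlinarith [sq_nonneg c])

lemma rr_nonneg (c a : ℝ) : 0 ≤ rr c a := by unfold rr; positivity
lemma rr_le (c a : ℝ) (hc : 0 < c) : rr c a ≤ 1/(2*c) := by
  unfold rr
  refine one_div_le_one_div_of_le (by positivity) (Real.le_sqrt_of_sq_le (by nlinarith [sq_nonneg a]))

lemma wt_nonneg (c a : ℝ) (hc : 0 < c) (ha : 0 < a) : 0 ≤ wt c a := by
  unfold wt
  have := w3_nonneg (4*c^2+a^2) (by positivity)
  positivity

lemma wt_meas (c : ℝ) : Measurable (wt c) := by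
  unfold wt
  exact measurable_const.mul (measurable_id.mul (w3_meas.comp (by fun_prop)))

lemma wt_deriv (c a : ℝ) (hc : 0 < c) : HasDerivAt (fun a => -(2*c)*rr c a) (wt c a) a := by
  refine ((rr_deriv c a hc).const_mul (-(2*c))).congr_deriv ?_
  unfold wt; ring

lemma wt_int (c : ℝ) (hc : 0 < c) : IntegrableOn (wt c) (Set.Ioi 0) :=
  integrableOn_Ioi_deriv_of_nonneg' (fun a _ => wt_deriv c a hc) (fun a ha => wt_nonneg c a hc ha) ((rr_lim c hc).const_mul _)

lemma wt_int_val (c : ℝ) (hc : 0 < c) : ∫ a in Set.Ioi (0:ℝ), wt c a = 1 := by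
  rw [integral_Ioi_of_hasDerivAt_of_tendsto' (fun a _ => wt_deriv c a hc) (wt_int c hc) ((rr_lim c hc).const_mul _), rr_zero c hc]
  field_simp
  ring

lemma wt_exp_int (c x : ℝ) (hc : 0 < c) (hx : 0 ≤ x) : IntegrableOn (fun a => wt c a * Real.exp (-(a*x))) (Set.Ioi 0) := by
  refine Integrable.mono' (wt_int c hc) ?_ ?_
  · exact ((wt_meas c).mul (by fun_prop)).aestronglyMeasurable
  · filter_upwards [ae_restrict_mem measurableSet_Ioi] with a ha
    have ha : 0 < a := ha
    rw [norm_mul, Real.norm_eq_abs, Real.norm_eq_abs, Real.abs_exp, abs_of_nonneg (wt_nonneg c a hc ha)]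
    refine mul_le_of_le_one_right (wt_nonneg c a hc ha) ?_
    rw [Real.exp_le_one_iff, neg_nonpos]; positivity

noncomputable def MM (c x : ℝ) : ℝ := ∫ a in Set.Ioi (0:ℝ), wt c a * Real.exp (-(a*x))

lemma kk_sub (c x : ℝ) (hc : 0 < c) : kk (2*c*x) = ∫ a in Set.Ioi (0:ℝ), Real.exp (-(a*x)) * rr c a := by
  have himg : (fun t : ℝ => 2*c*Real.sinh t) '' Set.Ioi 0 = Set.Ioi 0 := by
    ext y; simp only [Set.mem_image, Set.mem_Ioi]
    constructor
    · rintro ⟨s, hs, rfl⟩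
      have := Real.sinh_pos_iff.mpr hs
      positivity
    · intro hy
      refine ⟨Real.arsinh (y/(2*c)), Real.arsinh_pos_iff.mpr (by positivity), ?_⟩
      rw [Real.sinh_arsinh]; field_simp
  have hder : ∀ s ∈ Set.Ioi (0:ℝ), HasDerivWithinAt (fun t : ℝ => 2*c*Real.sinh t) (2*c*Real.cosh s) (Set.Ioi 0) s := by
    intro s _
    exact ((Real.hasDerivAt_sinh s).const_mul (2*c)).hasDerivWithinAt
  have hinj : Set.InjOn (fun t : ℝ => 2*c*Real.sinh t) (Set.Ioi 0) := by
    intro a ha b hb h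
    have h2 : (2*c) ≠ 0 := by positivity
    exact Real.sinh_injective (mul_left_cancel₀ h2 h)
  rw [kk]
  conv_rhs => rw [← himg, integral_image_eq_integral_abs_deriv_smul measurableSet_Ioi hder hinj]
  refine setIntegral_congr_fun measurableSet_Ioi fun a ha => ?_
  have hcp := Real.cosh_pos a
  simp only [smul_eq_mul]
  rw [abs_of_pos (by positivity), rr, show 4*c^2+(2*c*Real.sinh a)^2 = (2*c*Real.cosh a)^2 by
    rw [mul_pow, mul_pow _ (Real.cosh a), Real.cosh_sq]; ring, Real.sqrt_sq (by positivity)]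
  rw [show -(2*c*x)*Real.sinh a = -(2*c*Real.sinh a*x) by ring]
  field_simp

lemma kk_MM (c x : ℝ) (hc : 0 < c) (hx : 0 < x) : 2*c*x*kk (2*c*x) = 1 - MM c x := by
  have hr : Continuous (rr c) := continuous_iff_continuousAt.mpr fun a => (rr_deriv c a hc).continuousAt
  have hi : IntegrableOn (fun a => Real.exp (-(a*x)) * rr c a) (Set.Ioi 0) := by
    refine Integrable.mono' ((exp_neg_integrableOn_Ioi 0 hx).const_mul (1/(2*c))) ?_ (ae_of_all _ fun a => ?_)
    · exact (Continuous.mul (by fun_prop) hr).aestronglyMeasurable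
    · rw [norm_mul, Real.norm_eq_abs, Real.norm_eq_abs, Real.abs_exp, abs_of_nonneg (rr_nonneg c a), mul_comm, mul_comm a x, neg_mul]
      gcongr
      exact rr_le c a hc
  have hder : ∀ a ∈ Set.Ici (0:ℝ), HasDerivAt (fun a => -(2*c)*(Real.exp (-(a*x)) * rr c a))
      (2*c*x*(Real.exp (-(a*x)) * rr c a) + wt c a * Real.exp (-(a*x))) a := by
    intro a _
    have h1 : HasDerivAt (fun a : ℝ => Real.exp (-(a*x))) (Real.exp (-(a*x)) * -(1*x)) a := ((hasDerivAt_id' a).mul_const x).neg.exp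
    refine ((h1.mul (rr_deriv c a hc)).const_mul (-(2*c))).congr_deriv ?_
    unfold wt; ring
  have hlim : Tendsto (fun a => -(2*c)*(Real.exp (-(a*x)) * rr c a)) atTop (𝓝 (-(2*c)*0)) := by
    refine Tendsto.const_mul _ ?_
    refine squeeze_zero' (Eventually.of_forall fun a => mul_nonneg (Real.exp_pos _).le (rr_nonneg c a)) ?_ (rr_lim c hc)
    filter_upwards [eventually_ge_atTop 0] with a ha
    refine mul_le_of_le_one_left (rr_nonneg c a) ?_
    rw [Real.exp_le_one_iff, neg_nonpos]; positivity
  have := integral_Ioi_of_hasDerivAt_of_tendsto' hder ((hi.const_mul (2*c*x)).add (wt_exp_int c x hc hx.le)) hlim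
  rw [integral_add (hi.const_mul (2*c*x)) (wt_exp_int c x hc hx.le), integral_const_mul, ← kk_sub c x hc, rr_zero c hc] at this
  rw [MM]
  have e : -(2*c)*0 - -(2*c)*(Real.exp (-(0*x))*(1/(2*c))) = 1 := by
    simp; field_simp
  rw [e] at this
  linarith

lemma MM_lim (x : ℝ) (hx : 0 < x) : Tendsto (fun c => MM c x) (𝓝[>] 0) (𝓝 1) := by
  have h1 : Tendsto (fun c : ℝ => 2*c*x) (𝓝[>] 0) (𝓝[>] 0) := by
    refine tendsto_nhdsWithin_iff.mpr ⟨?_, ?_⟩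
    · have : Continuous (fun c : ℝ => 2*c*x) := by fun_prop
      have := (this.tendsto 0).mono_left (nhdsWithin_le_nhds (s := Set.Ioi 0))
      simpa using this
    · filter_upwards [self_mem_nhdsWithin] with c hc
      have hc : 0 < c := hc
      exact Set.mem_Ioi.mpr (by positivity)
  have h2 := (kk_lim.comp h1).const_sub 1
  rw [sub_zero] at h2
  refine h2.congr' ?_
  filter_upwards [self_mem_nhdsWithin] with c hc
  have := kk_MM c x hc hx
  simp only [Function.comp]
  linarith


noncomputable def PP (F : ℝ → ℝ) (T : ℝ) : ℝ := ∫ x in (0:ℝ)..T, F x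
noncomputable def LG (F : ℝ → ℝ) (a : ℝ) : ℝ := ∫ x in Set.Ioi (0:ℝ), Real.exp (-(a*x)) * F x
noncomputable def VF (F : ℝ → ℝ) (c : ℝ) : ℝ := ∫ a in Set.Ioi (0:ℝ), wt c a * LG F a

lemma F_int (F : ℝ → ℝ) (hc : ContinuousOn F (Set.Ioi 0)) (B : ℝ) (hB : ∀ x > 0, |F x| ≤ B) (T : ℝ) (hT : 0 ≤ T) :
    IntervalIntegrable F volume 0 T := by
  rw [intervalIntegrable_iff_integrableOn_Ioc_of_le hT]
  refine Integrable.mono' (g := fun _ => B) (integrable_const B) ?_ ?_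
  · exact (hc.mono Set.Ioc_subset_Ioi_self).aestronglyMeasurable measurableSet_Ioc
  · filter_upwards [ae_restrict_mem measurableSet_Ioc] with x hx
    exact hB x hx.1

lemma PP_deriv (F : ℝ → ℝ) (hc : ContinuousOn F (Set.Ioi 0)) (B : ℝ) (hB : ∀ x > 0, |F x| ≤ B) (x : ℝ) (hx : 0 < x) :
    HasDerivAt (PP F) (F x) x := by
  have hca : ContinuousAt F x := hc.continuousAt (Ioi_mem_nhds hx)
  refine intervalIntegral.integral_hasDerivAt_right (F_int F hc B hB x hx.le) ?_ hca
  exact ContinuousOn.stronglyMeasurableAtFilter isOpen_Ioi hc x hx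

lemma PP_le (F : ℝ → ℝ) (B : ℝ) (hB : ∀ x > 0, |F x| ≤ B) (x : ℝ) (hx : 0 ≤ x) : |PP F x| ≤ B*x := by
  have := intervalIntegral.norm_integral_le_of_norm_le_const (a := 0) (b := x) (f := F) (C := B) (fun y hy => by
    rw [Set.uIoc_of_le hx] at hy; exact hB y hy.1)
  rw [sub_zero, abs_of_nonneg hx] at this
  exact this

lemma PP_zero (F : ℝ → ℝ) : PP F 0 = 0 := by simp [PP]

lemma PP_cont (F : ℝ → ℝ) (hc : ContinuousOn F (Set.Ioi 0)) (B : ℝ) (hB : ∀ x > 0, |F x| ≤ B) : ContinuousOn (PP F) (Set.Ici 0) := by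
  intro x hx
  rcases eq_or_lt_of_le (Set.mem_Ici.mp hx) with h | h
  · subst h
    rw [ContinuousWithinAt, PP_zero]
    have h0 : Tendsto (fun x : ℝ => B*x) (𝓝[≥] 0) (𝓝 0) := by
      have : Continuous (fun x : ℝ => B*x) := by fun_prop
      simpa using (this.tendsto 0).mono_left (nhdsWithin_le_nhds (s := Set.Ici 0))
    refine squeeze_zero_norm' ?_ h0
    filter_upwards [self_mem_nhdsWithin] with x hx
    exact PP_le F B hB x hx
  · exact (PP_deriv F hc B hB x h).continuousAt.continuousWithinAt

lemma PP_exp_deriv (F : ℝ → ℝ) (hc : ContinuousOn F (Set.Ioi 0)) (B : ℝ) (hB : ∀ x > 0, |F x| ≤ B) (a x : ℝ) (hx : 0 < x) :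
    HasDerivAt (fun x => Real.exp (-(a*x)) * PP F x) (Real.exp (-(a*x)) * F x - a*Real.exp (-(a*x)) * PP F x) x := by
  have h1 : HasDerivAt (fun x : ℝ => Real.exp (-(a*x))) (Real.exp (-(a*x)) * -(a*1)) x := ((hasDerivAt_id' x).const_mul a).neg.exp
  refine (h1.mul (PP_deriv F hc B hB x hx)).congr_deriv ?_
  ring

lemma LG_int1 (F : ℝ → ℝ) (hc : ContinuousOn F (Set.Ioi 0)) (B : ℝ) (hB : ∀ x > 0, |F x| ≤ B) (a : ℝ) (ha : 0 < a) :
    IntegrableOn (fun x => Real.exp (-(a*x)) * F x) (Set.Ioi 0) := by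
  refine Integrable.mono' ((exp_neg_integrableOn_Ioi 0 ha).const_mul B) ?_ ?_
  · exact (ContinuousOn.mul (by fun_prop) hc).aestronglyMeasurable measurableSet_Ioi
  · filter_upwards [ae_restrict_mem measurableSet_Ioi] with x hx
    rw [norm_mul, Real.norm_eq_abs, Real.norm_eq_abs, Real.abs_exp, mul_comm, neg_mul]
    exact mul_le_mul_of_nonneg_right (hB x hx) (Real.exp_pos _).le

lemma LG_int2 (F : ℝ → ℝ) (hc : ContinuousOn F (Set.Ioi 0)) (B : ℝ) (hB : ∀ x > 0, |F x| ≤ B) (a : ℝ) (ha : 0 < a) :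
    IntegrableOn (fun x => a*Real.exp (-(a*x)) * PP F x) (Set.Ioi 0) := by
  refine Integrable.mono' ((id_exp_int a ha).1.const_mul (a*B)) ?_ ?_
  · exact (ContinuousOn.mul (by fun_prop) ((PP_cont F hc B hB).mono Set.Ioi_subset_Ici_self)).aestronglyMeasurable measurableSet_Ioi
  · filter_upwards [ae_restrict_mem measurableSet_Ioi] with x hx
    have hx : 0 < x := hx
    rw [norm_mul, norm_mul, Real.norm_eq_abs, Real.norm_eq_abs, Real.norm_eq_abs, Real.abs_exp, abs_of_pos ha]
    have := mul_le_mul_of_nonneg_left (PP_le F B hB x hx.le) (by positivity : 0 ≤ a*Real.exp (-(a*x)))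
    linarith

lemma LG_eq (F : ℝ → ℝ) (hc : ContinuousOn F (Set.Ioi 0)) (B : ℝ) (hB : ∀ x > 0, |F x| ≤ B) (a : ℝ) (ha : 0 < a) :
    LG F a = ∫ x in Set.Ioi (0:ℝ), a*Real.exp (-(a*x)) * PP F x := by
  have hcont : ContinuousWithinAt (fun x => Real.exp (-(a*x)) * PP F x) (Set.Ici 0) 0 :=
    ContinuousWithinAt.mul (by fun_prop) (PP_cont F hc B hB 0 (Set.mem_Ici.mpr le_rfl))
  have hlim : Tendsto (fun x => Real.exp (-(a*x)) * PP F x) atTop (𝓝 0) := by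
    have h0 : Tendsto (fun x : ℝ => B/a*((a*x)^1*Real.exp (-(a*x)))) atTop (𝓝 0) := by
      have := ((Real.tendsto_pow_mul_exp_neg_atTop_nhds_zero 1).comp (tendsto_id.const_mul_atTop ha)).const_mul (B/a)
      simpa using this
    refine squeeze_zero_norm' ?_ h0
    filter_upwards [eventually_ge_atTop 0] with x hx
    rw [norm_mul, Real.norm_eq_abs, Real.norm_eq_abs, Real.abs_exp]
    have := mul_le_mul_of_nonneg_left (PP_le F B hB x hx) (Real.exp_pos (-(a*x))).le
    refine this.trans (le_of_eq ?_)
    field_simp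
  have := integral_Ioi_of_hasDerivAt_of_tendsto hcont (fun x hx => PP_exp_deriv F hc B hB a x hx)
    ((LG_int1 F hc B hB a ha).sub (LG_int2 F hc B hB a ha)) hlim
  rw [integral_sub (LG_int1 F hc B hB a ha) (LG_int2 F hc B hB a ha), PP_zero] at this
  rw [LG]
  linarith

lemma aexp_int (a X : ℝ) (ha : 0 < a) : IntegrableOn (fun x => a*Real.exp (-(a*x))) (Set.Ioi X) ∧ ∫ x in Set.Ioi X, a*Real.exp (-(a*x)) = Real.exp (-(a*X)) := by
  have h := exp_neg_integrableOn_Ioi X ha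
  simp only [neg_mul] at h
  refine ⟨h.const_mul a, ?_⟩
  rw [integral_const_mul]
  have := integral_exp_mul_Ioi (a := -a) (by linarith) X
  simp only [neg_mul] at this
  rw [this]
  field_simp

/-- lower bound -/
lemma LG_lower (F : ℝ → ℝ) (hc : ContinuousOn F (Set.Ioi 0)) (B : ℝ) (hB : ∀ x > 0, |F x| ≤ B) (a : ℝ) (ha : 0 < a)
    (m K X : ℝ) (hX : 0 < X) (hm : ∀ x ≥ X, m ≤ PP F x) (hK : ∀ x > 0, -K ≤ PP F x) :
    -K + (m+K)*Real.exp (-(a*X)) ≤ LG F a := by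
  rw [LG_eq F hc B hB a ha]
  obtain ⟨i0, v0⟩ := aexp_int a 0 ha
  obtain ⟨iX, vX⟩ := aexp_int a X ha
  have h1 : ∫ x in Set.Ioi X, (a*Real.exp (-(a*x)))*(m+K) ≤ ∫ x in Set.Ioi (0:ℝ), (a*Real.exp (-(a*x)) * PP F x + a*Real.exp (-(a*x))*K) := by
    have hint := (LG_int2 F hc B hB a ha).add (i0.mul_const K)
    calc _ ≤ ∫ x in Set.Ioi X, (a*Real.exp (-(a*x)) * PP F x + a*Real.exp (-(a*x))*K) := by
          refine setIntegral_mono_on (iX.mul_const _) (hint.mono_set (Set.Ioi_subset_Ioi hX.le)) measurableSet_Ioi fun x hx => ?_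
          have := hm x (Set.mem_Ioi.mp hx).le
          have hp : 0 ≤ a*Real.exp (-(a*x)) := by positivity
          nlinarith
      _ ≤ _ := by
          refine setIntegral_mono_set hint ?_ (Set.Ioi_subset_Ioi hX.le).eventuallyLE
          filter_upwards [ae_restrict_mem measurableSet_Ioi] with x hx
          have := hK x hx
          have hp : 0 ≤ a*Real.exp (-(a*x)) := by positivity
          simp only [Pi.zero_apply]
          nlinarith
  rw [integral_add (LG_int2 F hc B hB a ha) (i0.mul_const K), integral_mul_const, integral_mul_const, v0, vX] at h1
  simp at h1
  linarith

lemma LG_le (F : ℝ → ℝ) (B : ℝ) (hB : ∀ x > 0, |F x| ≤ B) (a : ℝ) (ha : 0 < a) : |LG F a| ≤ B/a := by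
  have h := exp_neg_integrableOn_Ioi 0 ha
  simp only [neg_mul] at h
  have := norm_integral_le_of_norm_le (μ := volume.restrict (Set.Ioi 0)) (f := fun x => Real.exp (-(a*x)) * F x) (h.const_mul B) (by
    filter_upwards [ae_restrict_mem measurableSet_Ioi] with x hx
    rw [norm_mul, Real.norm_eq_abs, Real.norm_eq_abs, Real.abs_exp, mul_comm]
    exact mul_le_mul_of_nonneg_right (hB x hx) (Real.exp_pos _).le)
  refine this.trans (le_of_eq ?_)
  rw [integral_const_mul]
  have := (aexp_int a 0 ha).2
  rw [integral_const_mul] at this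
  have : ∫ x in Set.Ioi (0:ℝ), Real.exp (-(a*x)) = 1/a := by
    rw [eq_div_iff ha.ne', mul_comm, this]; simp
  rw [this]; ring

lemma LGT_meas (F : ℝ → ℝ) (hc : ContinuousOn F (Set.Ioi 0)) (s : Set ℝ) (hs : s ⊆ Set.Ioi 0) (hsm : MeasurableSet s) :
    AEStronglyMeasurable (fun p : ℝ × ℝ => Real.exp (-(p.1*p.2)) * F p.2) ((volume.restrict (Set.Ioi 0)).prod (volume.restrict s)) := by
  refine AEStronglyMeasurable.mul (by fun_prop) ?_
  exact ((hc.mono hs).aestronglyMeasurable hsm).comp_snd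

lemma LG_meas (F : ℝ → ℝ) (hc : ContinuousOn F (Set.Ioi 0)) : AEStronglyMeasurable (LG F) (volume.restrict (Set.Ioi 0)) :=
  (LGT_meas F hc (Set.Ioi 0) subset_rfl measurableSet_Ioi).integral_prod_right'

lemma VF_int (F : ℝ → ℝ) (hc : ContinuousOn F (Set.Ioi 0)) (B : ℝ) (hB : ∀ x > 0, |F x| ≤ B) (c : ℝ) (hc0 : 0 < c) :
    IntegrableOn (fun a => wt c a * LG F a) (Set.Ioi 0) := by
  have hB0 : 0 ≤ B := (abs_nonneg _).trans (hB 1 one_pos)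
  have hm : 0 < min 1 (4*c^2) := by positivity
  have hm1 := min_le_left 1 (4*c^2)
  have hm2 := min_le_right 1 (4*c^2)
  set m := min 1 (4*c^2)
  refine Integrable.mono' (integrable_inv_one_add_sq.integrableOn.const_mul (B/m)) ?_ ?_
  · exact (wt_meas c).aestronglyMeasurable.mul (LG_meas F hc)
  · filter_upwards [ae_restrict_mem measurableSet_Ioi] with a ha
    have ha : 0 < a := ha
    rw [norm_mul, Real.norm_eq_abs, Real.norm_eq_abs, abs_of_nonneg (wt_nonneg c a hc0 ha)]
    refine (mul_le_mul_of_nonneg_left (LG_le F B hB a ha) (wt_nonneg c a hc0 ha)).trans ?_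
    unfold wt w3
    have h1 : 2*c ≤ √(4*c^2+a^2) := Real.le_sqrt_of_sq_le (by nlinarith [sq_nonneg a])
    have h2 : m*(1+a^2) ≤ 4*c^2+a^2 := by nlinarith [sq_nonneg a]
    calc _ = 2*c*B*(1/((4*c^2+a^2)*√(4*c^2+a^2))) := by field_simp
      _ ≤ 2*c*B*(1/((m*(1+a^2))*(2*c))) := by gcongr
      _ = _ := by field_simp

lemma VF_lower (F : ℝ → ℝ) (hc : ContinuousOn F (Set.Ioi 0)) (B : ℝ) (hB : ∀ x > 0, |F x| ≤ B)
    (m : ℝ) (hm : ∀ᶠ x in atTop, m ≤ PP F x) (Λ : ℝ) (hΛ : Tendsto (VF F) (𝓝[>] 0) (𝓝 Λ)) : m ≤ Λ := by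
  obtain ⟨X0, hX0⟩ := eventually_atTop.mp hm
  set X := max X0 1
  have hX : 0 < X := lt_of_lt_of_le one_pos (le_max_right _ _)
  have hmX : ∀ x ≥ X, m ≤ PP F x := fun x hx => hX0 x ((le_max_left _ _).trans hx)
  have hB0 : 0 ≤ B := (abs_nonneg _).trans (hB 1 one_pos)
  have hK : ∀ x > 0, -(B*X+|m|) ≤ PP F x := by
    intro x hx
    rcases le_total x X with h | h
    · have h1 := (abs_le.mp (PP_le F B hB x hx.le)).1
      have : B*x ≤ B*X := by gcongr
      linarith [abs_nonneg m]
    · have := hmX x h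
      have : 0 ≤ B*X := by positivity
      linarith [neg_abs_le m]
  set K := B*X+|m|
  have hlow : ∀ c > 0, -K + (m+K)*MM c X ≤ VF F c := by
    intro c hc0
    have h1 : ∫ a in Set.Ioi (0:ℝ), (wt c a * (-K) + (m+K)*(wt c a * Real.exp (-(a*X)))) ≤ VF F c := by
      refine setIntegral_mono_on (((wt_int c hc0).mul_const _).add ((wt_exp_int c X hc0 hX.le).const_mul _)) (VF_int F hc B hB c hc0) measurableSet_Ioi fun a ha => ?_
      have := mul_le_mul_of_nonneg_left (LG_lower F hc B hB a ha m K X hX hmX hK) (wt_nonneg c a hc0 ha)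
      refine le_trans (le_of_eq ?_) this
      ring
    rw [integral_add ((wt_int c hc0).mul_const _) ((wt_exp_int c X hc0 hX.le).const_mul _), integral_mul_const, integral_const_mul, wt_int_val c hc0] at h1
    rw [MM]; linarith
  have ht : Tendsto (fun c => -K + (m+K)*MM c X) (𝓝[>] 0) (𝓝 (-K + (m+K)*1)) := ((MM_lim X hX).const_mul _).const_add _
  have := le_of_tendsto_of_tendsto ht hΛ (by filter_upwards [self_mem_nhdsWithin] with c hc using hlow c hc)
  linarith

lemma VF_upper (F : ℝ → ℝ) (hc : ContinuousOn F (Set.Ioi 0)) (B : ℝ) (hB : ∀ x > 0, |F x| ≤ B)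
    (m : ℝ) (hm : ∀ᶠ x in atTop, PP F x ≤ m) (Λ : ℝ) (hΛ : Tendsto (VF F) (𝓝[>] 0) (𝓝 Λ)) : Λ ≤ m := by
  have h := VF_lower (fun x => -F x) hc.neg B (by simpa using hB) (-m) (by
    filter_upwards [hm] with x hx
    have : PP (fun x => -F x) x = -PP F x := by simp [PP]
    rw [this]; linarith) (-Λ) (by
    have : VF (fun x => -F x) = fun c => -VF F c := by
      funext c
      simp [VF, LG, integral_neg]
    rw [this]
    exact hΛ.neg)
  linarith

lemma abel_concl (F : ℝ → ℝ) (hc : ContinuousOn F (Set.Ioi 0)) (B : ℝ) (hB : ∀ x > 0, |F x| ≤ B)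
    (Λ : ℝ) (hΛ : Tendsto (VF F) (𝓝[>] 0) (𝓝 Λ)) (e l : ℝ)
    (hP : Tendsto (fun T => PP F T - e*Real.log T) atTop (𝓝 l)) : Tendsto (PP F) atTop (𝓝 Λ) := by
  have he : e = 0 := by
    rcases lt_trichotomy e 0 with h | h | h
    · exfalso
      have h1 : Tendsto (fun T => e*Real.log T) atTop atBot := Real.tendsto_log_atTop.const_mul_atTop_of_neg h
      have h2 : Tendsto (PP F) atTop atBot := by
        have := hP.add_atBot h1
        simpa using this
      have := VF_upper F hc B hB (Λ-1) (h2.eventually_le_atBot _) Λ hΛ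
      linarith
    · exact h
    · exfalso
      have h1 : Tendsto (fun T => e*Real.log T) atTop atTop := Real.tendsto_log_atTop.const_mul_atTop h
      have h2 : Tendsto (PP F) atTop atTop := by
        have := hP.add_atTop h1
        simpa using this
      have := VF_lower F hc B hB (Λ+1) (h2.eventually_ge_atTop _) Λ hΛ
      linarith
  subst he
  simp only [zero_mul, sub_zero] at hP
  have : l = Λ := by
    refine le_antisymm ?_ ?_
    · refine le_of_forall_pos_sub_le fun ε hε => ?_
      exact VF_lower F hc B hB (l-ε) (hP.eventually (Ici_mem_nhds (by linarith : l-ε < l))) Λ hΛ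
    · refine le_of_forall_pos_le_add fun ε hε => ?_
      exact VF_upper F hc B hB (l+ε) (hP.eventually (Iic_mem_nhds (by linarith : l < l+ε))) Λ hΛ
  rw [← this]
  exact hP


lemma LGT_bound (F : ℝ → ℝ) (hc : ContinuousOn F (Set.Ioi 0)) (B : ℝ) (hB : ∀ x > 0, |F x| ≤ B) (a T S : ℝ) (ha : 0 < a) (hT : 0 ≤ T)
    (hS : ∀ x ≥ 0, |PP F x| ≤ S) : |∫ x in (0:ℝ)..T, Real.exp (-(a*x)) * F x| ≤ S := by
  have hPc := (PP_cont F hc B hB).mono ((fun x hx => hx.1 : Set.Icc 0 T ⊆ Set.Ici 0))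
  have i1 : IntervalIntegrable (fun x => Real.exp (-(a*x)) * F x) volume 0 T :=
    (F_int F hc B hB T hT).continuousOn_mul (by fun_prop)
  have i0 : IntervalIntegrable (fun x => a*Real.exp (-(a*x))) volume 0 T := Continuous.intervalIntegrable (by fun_prop) _ _
  have i2 : IntervalIntegrable (fun x => a*Real.exp (-(a*x)) * PP F x) volume 0 T := by
    refine ContinuousOn.intervalIntegrable ?_
    rw [Set.uIcc_of_le hT]
    exact ContinuousOn.mul (by fun_prop) hPc
  have h := intervalIntegral.integral_eq_sub_of_hasDerivAt_of_le hT
    (f := fun x => Real.exp (-(a*x)) * PP F x) (ContinuousOn.mul (by fun_prop) hPc)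
    (fun x hx => PP_exp_deriv F hc B hB a x hx.1) (i1.sub i2)
  rw [intervalIntegral.integral_sub i1 i2, PP_zero, mul_zero, sub_zero] at h
  have hder : ∀ x ∈ Set.uIcc 0 T, HasDerivAt (fun x : ℝ => -Real.exp (-(a*x))) (a*Real.exp (-(a*x))) x := by
    intro x _
    refine ((hasDerivAt_id' x).const_mul a).neg.exp.neg.congr_deriv ?_
    simp only [Pi.neg_apply]
    ring
  have h0 := intervalIntegral.integral_eq_sub_of_hasDerivAt hder i0
  simp only [mul_zero, neg_zero, Real.exp_zero] at h0
  have hb : |∫ x in (0:ℝ)..T, a*Real.exp (-(a*x)) * PP F x| ≤ S * (1-Real.exp (-(a*T))) := by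
    have := intervalIntegral.norm_integral_le_of_norm_le hT (f := fun x => a*Real.exp (-(a*x)) * PP F x) (g := fun x => S*(a*Real.exp (-(a*x)))) (μ := volume) (ae_of_all _ fun x hx => by
      rw [norm_mul, Real.norm_eq_abs, Real.norm_eq_abs, abs_of_pos (by positivity), mul_comm]
      exact mul_le_mul_of_nonneg_right (hS x hx.1.le) (by positivity)) (i0.const_mul S)
    rw [intervalIntegral.integral_const_mul, h0] at this
    refine this.trans (le_of_eq ?_)
    ring
  have e : ∫ x in (0:ℝ)..T, Real.exp (-(a*x)) * F x = Real.exp (-(a*T)) * PP F T + ∫ x in (0:ℝ)..T, a*Real.exp (-(a*x)) * PP F x := by linarith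
  rw [e]
  refine (abs_add_le _ _).trans ?_
  rw [abs_mul, Real.abs_exp]
  have := mul_le_mul_of_nonneg_left (hS T hT) (Real.exp_pos (-(a*T))).le
  linarith

lemma PP_bdd (F : ℝ → ℝ) (B : ℝ) (hB : ∀ x > 0, |F x| ≤ B) (Λ : ℝ) (hP : Tendsto (PP F) atTop (𝓝 Λ)) :
    ∃ S, ∀ x ≥ 0, |PP F x| ≤ S := by
  have hB0 : 0 ≤ B := (abs_nonneg _).trans (hB 1 one_pos)
  have := hP.abs.eventually (Iic_mem_nhds (by linarith : |Λ| < |Λ|+1))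
  obtain ⟨X0, hX0⟩ := eventually_atTop.mp this
  refine ⟨B*|X0| + (|Λ|+1), fun x hx => ?_⟩
  have h1 : 0 ≤ B*|X0| := by positivity
  rcases le_total x X0 with h | h
  · have := PP_le F B hB x hx
    have : B*x ≤ B*|X0| := by gcongr; exact h.trans (le_abs_self _)
    linarith [abs_nonneg Λ]
  · have : |PP F x| ≤ |Λ|+1 := hX0 x h
    linarith

lemma fubT (F : ℝ → ℝ) (hc : ContinuousOn F (Set.Ioi 0)) (B : ℝ) (hB : ∀ x > 0, |F x| ≤ B) (c : ℝ) (hc0 : 0 < c) (T : ℝ) (hT : 0 ≤ T) :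
    IntegrableOn (fun x => MM c x * F x) (Set.Ioc 0 T) ∧
    ∫ x in Set.Ioc 0 T, MM c x * F x = ∫ a in Set.Ioi (0:ℝ), wt c a * ∫ x in (0:ℝ)..T, Real.exp (-(a*x)) * F x := by
  have hF : IntegrableOn F (Set.Ioc 0 T) := (intervalIntegrable_iff_integrableOn_Ioc_of_le hT).mp (F_int F hc B hB T hT)
  have hK : Integrable (fun p : ℝ × ℝ => wt c p.1 * (Real.exp (-(p.1*p.2)) * F p.2)) ((volume.restrict (Set.Ioi 0)).prod (volume.restrict (Set.Ioc 0 T))) := by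
    refine Integrable.mono ((wt_int c hc0).mul_prod hF) ?_ ?_
    · exact ((wt_meas c).comp measurable_fst).aestronglyMeasurable.mul (LGT_meas F hc (Set.Ioc 0 T) Set.Ioc_subset_Ioi_self measurableSet_Ioc)
    · rw [Measure.prod_restrict]
      filter_upwards [ae_restrict_mem (measurableSet_Ioi.prod measurableSet_Ioc)] with p hp
      have h1 : 0 < p.1 := hp.1
      have h2 : 0 < p.2 := hp.2.1
      rw [norm_mul, norm_mul, norm_mul, Real.norm_eq_abs (Real.exp _), Real.abs_exp]
      refine mul_le_mul_of_nonneg_left ?_ (norm_nonneg _)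
      refine mul_le_of_le_one_left (norm_nonneg _) ?_
      rw [Real.exp_le_one_iff, neg_nonpos]; positivity
  have hMM : ∀ x, MM c x * F x = ∫ a in Set.Ioi (0:ℝ), wt c a * (Real.exp (-(a*x)) * F x) := by
    intro x
    rw [MM, ← integral_mul_const]
    simp only [mul_assoc]
  constructor
  · refine hK.integral_prod_right.congr (ae_of_all _ fun x => ?_)
    exact (hMM x).symm
  · simp only [hMM]
    rw [← integral_integral_swap (f := fun a x => wt c a * (Real.exp (-(a*x)) * F x)) hK]
    congr 1; ext a
    rw [integral_const_mul, intervalIntegral.integral_of_le hT]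

lemma final_abs (F : ℝ → ℝ) (hc : ContinuousOn F (Set.Ioi 0)) (B : ℝ) (hB : ∀ x > 0, |F x| ≤ B)
    (Λ : ℝ) (hP : Tendsto (PP F) atTop (𝓝 Λ)) (c : ℝ) (hc0 : 0 < c) :
    Tendsto (fun T => ∫ x in (0:ℝ)..T, x * (2/Real.pi * kk (2*x*c)) * F x) atTop (𝓝 (1/(Real.pi*c) * (Λ - VF F c))) := by
  obtain ⟨S, hS⟩ := PP_bdd F B hB Λ hP
  have hD : Tendsto (fun T => ∫ a in Set.Ioi (0:ℝ), wt c a * ∫ x in (0:ℝ)..T, Real.exp (-(a*x)) * F x) atTop (𝓝 (VF F c)) := by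
    refine tendsto_integral_filter_of_dominated_convergence (fun a => wt c a * S) ?_ ?_ ((wt_int c hc0).mul_const S) ?_
    · filter_upwards [eventually_ge_atTop 0] with T hT
      simp only [intervalIntegral.integral_of_le hT]
      exact (wt_meas c).aestronglyMeasurable.mul (LGT_meas F hc (Set.Ioc 0 T) Set.Ioc_subset_Ioi_self measurableSet_Ioc).integral_prod_right'
    · filter_upwards [eventually_ge_atTop 0] with T hT
      filter_upwards [ae_restrict_mem measurableSet_Ioi] with a ha
      rw [norm_mul, Real.norm_eq_abs, Real.norm_eq_abs, abs_of_nonneg (wt_nonneg c a hc0 ha)]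
      exact mul_le_mul_of_nonneg_left (LGT_bound F hc B hB a T S ha hT hS) (wt_nonneg c a hc0 ha)
    · filter_upwards [ae_restrict_mem measurableSet_Ioi] with a ha
      exact (intervalIntegral_tendsto_integral_Ioi 0 (LG_int1 F hc B hB a ha) tendsto_id).const_mul _
  refine ((hP.sub hD).const_mul (1/(Real.pi*c))).congr' ?_
  filter_upwards [eventually_ge_atTop 0] with T hT
  obtain ⟨j1, j2⟩ := fubT F hc B hB c hc0 T hT
  have hF : IntegrableOn F (Set.Ioc 0 T) := (intervalIntegrable_iff_integrableOn_Ioc_of_le hT).mp (F_int F hc B hB T hT)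
  rw [← j2, PP, intervalIntegral.integral_of_le hT, intervalIntegral.integral_of_le hT, ← integral_sub hF j1, ← integral_const_mul]
  refine setIntegral_congr_fun measurableSet_Ioc fun x hx => ?_
  have := kk_MM c x hc0 hx.1
  have hpi := Real.pi_pos
  rw [show 2*x*c = 2*c*x by ring]
  have e : MM c x = 1 - 2*c*x*kk (2*c*x) := by linarith
  simp only [e]
  field_simp
  ring

theorem main_thm (u : ℝ) (hu0 : u ≠ 0) (n : ℕ) (hn : 1 ≤ n) :
    Tendsto (fun T => ∫ x in (0:ℝ)..T, x * struveK0 (2*x*Real.cosh u) * ((besselJ (Complex.I * n / 2) x)^2).im) atTop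
      (𝓝 (Real.sinh (Real.pi*n/2) * (2*Real.sin (n*u)/(Real.pi*Real.sinh (Real.pi*n)*Real.sinh (2*u)) - 1/(2*Real.pi*Real.cosh (Real.pi*n/2)*Real.cosh u)))) := by
  have hn0 : (0:ℝ) < n := by exact_mod_cast hn
  set τ : ℝ := n/2 with hτ
  have hτ0 : 0 < τ := by positivity
  have hI : Complex.I * n / 2 = Complex.I * (τ:ℂ) := by rw [hτ]; push_cast; ring
  rw [hI]
  set F : ℝ → ℝ := fun x => ((besselJ (Complex.I * (τ:ℂ)) x)^2).im with hF
  have hc : ContinuousOn F (Set.Ioi 0) := Complex.continuous_im.comp_continuousOn ((besselJ_cont (Complex.I * τ) (by simp)).pow 2)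
  obtain ⟨B, hB⟩ := bes_bdd τ
  have hB2 : ∀ x > 0, |F x| ≤ B^2 := by
    intro x hx
    refine (Complex.abs_im_le_norm _).trans ?_
    rw [norm_pow]
    exact pow_le_pow_left₀ (norm_nonneg _) (hB x hx) 2
  have hVF : VF F = VV τ := rfl
  have hlim := VV_lim τ hτ0
  rw [← hVF] at hlim
  obtain ⟨e, l, hel⟩ := bes_asymp τ
  have hP := abel_concl F hc (B^2) hB2 _ hlim e l hel
  have h := final_abs F hc (B^2) hB2 _ hP (Real.cosh u) (Real.cosh_pos u)
  rw [hVF, VV_eq τ _ (Real.cosh_pos u), ss_val (2*τ) u hu0] at h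
  refine (congrArg (Tendsto _ _) (congrArg 𝓝 ?_)).mp h
  have e1 : Real.pi*(n:ℝ) = 2*(Real.pi*τ) := by rw [hτ]; ring
  have e2 : Real.pi*(n:ℝ)/2 = Real.pi*τ := by rw [hτ]; ring
  have e3 : (n:ℝ) = 2*τ := by rw [hτ]; ring
  rw [e2, e1, e3, show Real.pi*(2*τ)/2 = Real.pi*τ by ring, Real.sinh_two_mul, Real.sinh_two_mul, Real.tanh_eq_sinh_div_cosh]
  have a1 : Real.sinh u ≠ 0 := by rwa [Ne, Real.sinh_eq_zero]
  have a2 := Real.cosh_pos u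
  have a3 := Real.cosh_pos (Real.pi*τ)
  have a4 : 0 < Real.sinh (Real.pi*τ) := Real.sinh_pos_iff.mpr (by positivity)
  have a5 := Real.pi_pos
  field_simp
  ring

theorem statement18 (u : ℝ) (hu : u ∈ Set.Icc (-Real.pi) Real.pi) (hu0 : u ≠ 0)
    (n : ℕ) (hn : 1 ≤ n) :
    Filter.Tendsto (fun T : ℝ => ∫ x in (0 : ℝ)..T,
        x * struveK0 (2 * x * Real.cosh u) * ((besselJ (Complex.I * n / 2) x) ^ 2).im)
      Filter.atTop
      (𝓝 (Real.sinh (Real.pi * n / 2) *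
        (2 * Real.sin (n * u) / (Real.pi * Real.sinh (Real.pi * n) * Real.sinh (2 * u)) -
          1 / (2 * Real.pi * Real.cosh (Real.pi * n / 2) * Real.cosh u)))) := by
  exact main_thm u hu0 n hn
end

section
/- For every u ∈ [−π, π] with u ≠ 0 and every n ∈ ℕ, n ≥ 1, ∫₀^∞ cos(nt) / (cosh t · (cosh t + cosh u)) dt = π/(2·cosh(πn/2)·cosh u) − 2π·sin(nu)/(sinh(πn)·sinh(2u)). -/
open MeasureTheory Filter Topology

lemma aux_pt (c w x : ℝ) :
    |Real.sigmoid x * (1 - Real.sigmoid x)| • (((Real.sigmoid x : ℝ) : ℂ) ^ ((c + Complex.I * w : ℂ) - 1)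
      * (1 - ((Real.sigmoid x : ℝ) : ℂ)) ^ ((c - Complex.I * w : ℂ) - 1))
    = (((Real.sigmoid x * (1 - Real.sigmoid x)) ^ c : ℝ) : ℂ) * Complex.exp (Complex.I * w * x) := by
  have h0 := Real.sigmoid_pos x
  have h1 : 0 < 1 - Real.sigmoid x := by linarith [Real.sigmoid_lt_one x]
  have hx : x = Real.log (Real.sigmoid x) - Real.log (1 - Real.sigmoid x) := by
    rw [← Real.sigmoid_neg, ← Real.sigmoid_mul_rexp_neg, Real.log_mul h0.ne' (Real.exp_pos _).ne',
      Real.log_exp]; ring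
  have e0 : ((Real.sigmoid x : ℝ) : ℂ) = Complex.exp (Real.log (Real.sigmoid x) : ℝ) := by
    rw [← Complex.ofReal_exp, Real.exp_log h0]
  have e1 : ((1 - Real.sigmoid x : ℝ) : ℂ) = Complex.exp (Real.log (1 - Real.sigmoid x) : ℝ) := by
    rw [← Complex.ofReal_exp, Real.exp_log h1]
  rw [abs_of_pos (mul_pos h0 h1), Real.rpow_def_of_pos (mul_pos h0 h1), Real.log_mul h0.ne' h1.ne']
  have e2 : (1 - ((Real.sigmoid x : ℝ) : ℂ)) = ((1 - Real.sigmoid x : ℝ) : ℂ) := by push_cast; rfl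
  rw [e2, Complex.cpow_def_of_ne_zero (by exact_mod_cast h0.ne'),
    Complex.cpow_def_of_ne_zero (by exact_mod_cast h1.ne'), ← Complex.ofReal_log h0.le,
    ← Complex.ofReal_log h1.le, Complex.real_smul, Complex.ofReal_mul, e0, e1]
  have hx' : (x : ℂ) = (Real.log (Real.sigmoid x) : ℝ) - (Real.log (1 - Real.sigmoid x) : ℝ) := by
    exact_mod_cast hx
  rw [hx', Complex.ofReal_exp, ← Complex.exp_add, ← Complex.exp_add, ← Complex.exp_add,
    ← Complex.exp_add]
  congr 1
  push_cast
  ring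

lemma aux_key (c w : ℝ) (hc : 0 < c) :
    Integrable (fun x : ℝ => (((Real.sigmoid x * (1 - Real.sigmoid x)) ^ c : ℝ) : ℂ)
      * Complex.exp (Complex.I * w * x)) ∧
    ∫ x : ℝ, (((Real.sigmoid x * (1 - Real.sigmoid x)) ^ c : ℝ) : ℂ)
      * Complex.exp (Complex.I * w * x)
      = Complex.betaIntegral (c + Complex.I * w) (c - Complex.I * w) := by
  have hd : ∀ x ∈ (Set.univ : Set ℝ), HasDerivWithinAt Real.sigmoid
      (Real.sigmoid x * (1 - Real.sigmoid x)) Set.univ x :=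
    fun x _ => (Real.hasDerivAt_sigmoid x).hasDerivWithinAt
  have hi : Set.InjOn Real.sigmoid Set.univ := Real.sigmoid_injective.injOn
  have H := Complex.betaIntegral_convergent (u := c + Complex.I * w) (v := c - Complex.I * w)
    (by simpa using hc) (by simpa using hc)
  rw [intervalIntegrable_iff_integrableOn_Ioo_of_le zero_le_one, ← Real.range_sigmoid,
    ← Set.image_univ, integrableOn_image_iff_integrableOn_abs_deriv_smul MeasurableSet.univ hd hi] at H
  have G := integral_image_eq_integral_abs_deriv_smul MeasurableSet.univ hd hi
    (fun x : ℝ => (x : ℂ) ^ ((c + Complex.I * w : ℂ) - 1) * (1 - (x : ℂ)) ^ ((c - Complex.I * w : ℂ) - 1))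
  simp only [aux_pt, integrableOn_univ, Measure.restrict_univ] at H G
  refine ⟨H, ?_⟩
  rw [← G, Complex.betaIntegral, Set.image_univ, Real.range_sigmoid,
    intervalIntegral.integral_of_le zero_le_one, integral_Ioc_eq_integral_Ioo]

lemma aux_sig (x : ℝ) : Real.sigmoid (2*x) * (1 - Real.sigmoid (2*x)) = (2 * Real.cosh x)⁻¹ ^ 2 := by
  rw [← Real.sigmoid_neg, Real.sigmoid_def, Real.sigmoid_def, Real.cosh_eq, neg_neg,
    show -(2*x) = -x + -x by ring, show 2 * x = x + x by ring, Real.exp_add, Real.exp_add, Real.exp_neg]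
  have := Real.exp_pos x
  field_simp
  ring

lemma aux_one (n : ℝ) :
    Integrable (fun t : ℝ => ((Real.cosh t)⁻¹ : ℂ) * Complex.exp (Complex.I * n * t)) ∧
    ∫ t : ℝ, ((Real.cosh t)⁻¹ : ℂ) * Complex.exp (Complex.I * n * t)
      = ((Real.pi / Real.cosh (Real.pi * n / 2) : ℝ) : ℂ) := by
  obtain ⟨H, G⟩ := aux_key (1/2) (n/2) (by norm_num)
  have e : ∀ t : ℝ, (((Real.sigmoid (2*t) * (1 - Real.sigmoid (2*t))) ^ (1/2 : ℝ) : ℝ) : ℂ)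
      * Complex.exp (Complex.I * (n/2 : ℝ) * (2 * t : ℝ))
      = 2⁻¹ * (((Real.cosh t)⁻¹ : ℂ) * Complex.exp (Complex.I * n * t)) := by
    intro t
    rw [aux_sig, ← Real.sqrt_eq_rpow, Real.sqrt_sq (by have := Real.cosh_pos t; positivity)]
    rw [show Complex.I * (n/2 : ℝ) * (2 * t : ℝ) = Complex.I * n * t by push_cast; ring]
    push_cast; rw [mul_inv]; ring
  constructor
  · have := (integrable_comp_mul_left_iff _ (R := 2) two_ne_zero).2 H
    simp only [e] at this
    have := this.const_mul 2
    simpa [← mul_assoc] using this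
  · have := Measure.integral_comp_mul_left (fun x : ℝ => (((Real.sigmoid x * (1 - Real.sigmoid x)) ^ (1/2:ℝ) : ℝ) : ℂ)
      * Complex.exp (Complex.I * (n/2:ℝ) * x)) 2
    simp only [e] at this
    rw [G, integral_const_mul] at this
    have B := Complex.Gamma_mul_Gamma_eq_betaIntegral (s := ((1/2:ℝ):ℂ) + Complex.I * (n/2:ℝ))
      (t := ((1/2:ℝ):ℂ) - Complex.I * (n/2:ℝ)) (by simp) (by simp)
    rw [show ((1/2:ℝ):ℂ) - Complex.I * (n/2:ℝ) = 1 - (((1/2:ℝ):ℂ) + Complex.I * (n/2:ℝ)) by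
      push_cast; ring, Complex.Gamma_mul_Gamma_one_sub, add_sub_cancel, Complex.Gamma_one, one_mul] at B
    rw [show ((1/2:ℝ):ℂ) - Complex.I * (n/2:ℝ) = 1 - (((1/2:ℝ):ℂ) + Complex.I * (n/2:ℝ)) by
      push_cast; ring, ← B, show (Real.pi : ℂ) * (((1/2:ℝ):ℂ) + Complex.I * (n/2:ℝ)) =
        ((Real.pi * n / 2 : ℝ) : ℂ) * Complex.I + Real.pi / 2 by push_cast; ring, Complex.sin_add_pi_div_two,
        Complex.cos_mul_I] at this
    have h2 : |(2:ℝ)⁻¹| = 2⁻¹ := by norm_num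
    rw [h2, Complex.real_smul] at this
    push_cast at this ⊢
    exact mul_left_cancel₀ (by norm_num) this

lemma aux_two (n : ℝ) (hn : n ≠ 0) :
    Integrable (fun t : ℝ => ((Real.sigmoid t * (1 - Real.sigmoid t) : ℝ) : ℂ) * Complex.exp (Complex.I * n * t)) ∧
    ∫ t : ℝ, ((Real.sigmoid t * (1 - Real.sigmoid t) : ℝ) : ℂ) * Complex.exp (Complex.I * n * t)
      = ((Real.pi * n / Real.sinh (Real.pi * n) : ℝ) : ℂ) := by
  obtain ⟨H, G⟩ := aux_key 1 n (by norm_num)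
  simp only [Real.rpow_one] at H G
  refine ⟨H, ?_⟩
  rw [G]
  have B := Complex.Gamma_mul_Gamma_eq_betaIntegral (s := ((1:ℝ):ℂ) + Complex.I * n)
      (t := ((1:ℝ):ℂ) - Complex.I * n) (by simp) (by simp)
  have hI : Complex.I * n ≠ 0 := mul_ne_zero Complex.I_ne_zero (by exact_mod_cast hn)
  have h2 : ((1:ℝ):ℂ) + Complex.I * n + (((1:ℝ):ℂ) - Complex.I * n) = 1 + 1 := by push_cast; ring
  have h3 : Complex.Gamma (1 + 1) = 1 := by rw [Complex.Gamma_add_one _ one_ne_zero]; simp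
  rw [h2, h3, one_mul] at B
  rw [← B, Complex.ofReal_one, add_comm, Complex.Gamma_add_one _ hI, mul_assoc,
    Complex.Gamma_mul_Gamma_one_sub, show (Real.pi : ℂ) * (Complex.I * n) = ((Real.pi * n : ℝ) : ℂ) * Complex.I by
      push_cast; ring, Complex.sin_mul_I]
  push_cast
  have := Complex.I_ne_zero
  rw [mul_div_assoc', mul_comm (Complex.sinh _), mul_assoc, mul_div_mul_left _ _ this, mul_comm (n : ℂ)]

lemma aux_diff (t u : ℝ) : Real.sigmoid (t + u) - Real.sigmoid (t - u)
    = Real.sinh u / (Real.cosh t + Real.cosh u) := by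
  rw [Real.sigmoid_def, Real.sigmoid_def, Real.sinh_eq, Real.cosh_eq, Real.cosh_eq,
    show -(t+u) = -t + -u by ring, show -(t-u) = -t + u by ring, Real.exp_add, Real.exp_add,
    Real.exp_neg, Real.exp_neg]
  have := Real.exp_pos t
  have := Real.exp_pos u
  field_simp
  ring

lemma aux_three (n u : ℝ) (hn : n ≠ 0) (hu : u ≠ 0) :
    Integrable (fun t : ℝ => (((Real.cosh t + Real.cosh u)⁻¹ : ℝ) : ℂ) * Complex.exp (Complex.I * n * t)) ∧
    ∫ t : ℝ, (((Real.cosh t + Real.cosh u)⁻¹ : ℝ) : ℂ) * Complex.exp (Complex.I * n * t)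
      = ((2 * Real.pi * Real.sin (n * u) / (Real.sinh (Real.pi * n) * Real.sinh u) : ℝ) : ℂ) := by
  have H1 : Integrable (fun t : ℝ => (((Real.cosh t + Real.cosh u)⁻¹ : ℝ) : ℂ) * Complex.exp (Complex.I * n * t)) := by
    refine (aux_one n).1.mono ?_ ?_
    · refine Continuous.aestronglyMeasurable ?_
      have : Continuous fun t : ℝ => (Real.cosh t + Real.cosh u)⁻¹ :=
        (Real.continuous_cosh.add continuous_const).inv₀ fun t => by
          exact (add_pos (Real.cosh_pos t) (Real.cosh_pos u)).ne'
      fun_prop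
    · refine Eventually.of_forall fun t => ?_
      have h1 := Real.cosh_pos t
      have h2 := Real.cosh_pos u
      rw [norm_mul, norm_mul, ← Complex.ofReal_inv, Complex.norm_real, Complex.norm_real,
        Real.norm_of_nonneg (by positivity), Real.norm_of_nonneg (by positivity)]
      gcongr
      linarith
  refine ⟨H1, ?_⟩
  obtain ⟨K1, K2⟩ := aux_two n hn
  have hs : Real.sinh u ≠ 0 := by simpa using hu
  have hsp : Real.sinh (Real.pi * n) ≠ 0 := by
    simpa [Real.pi_ne_zero] using hn
  have hI : Complex.I * n ≠ 0 := mul_ne_zero Complex.I_ne_zero (by exact_mod_cast hn)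
  -- shifted integrals
  have S : ∀ v : ℝ, Integrable (fun t : ℝ => ((Real.sigmoid (t+v) * (1 - Real.sigmoid (t+v)) : ℝ) : ℂ) * Complex.exp (Complex.I * n * t)) ∧
      ∫ t : ℝ, ((Real.sigmoid (t+v) * (1 - Real.sigmoid (t+v)) : ℝ) : ℂ) * Complex.exp (Complex.I * n * t)
      = Complex.exp (-(Complex.I * n * v)) * ((Real.pi * n / Real.sinh (Real.pi * n) : ℝ) : ℂ) := by
    intro v
    have e : ∀ t : ℝ, ((Real.sigmoid (t+v) * (1 - Real.sigmoid (t+v)) : ℝ) : ℂ) * Complex.exp (Complex.I * n * t)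
       = Complex.exp (-(Complex.I * n * v)) * (((Real.sigmoid (t+v) * (1 - Real.sigmoid (t+v)) : ℝ) : ℂ) * Complex.exp (Complex.I * n * (t + v : ℝ))) := by
      intro t
      rw [mul_left_comm, ← Complex.exp_add]
      congr 2
      push_cast; ring
    simp only [e]
    refine ⟨(K1.comp_add_right v).const_mul _, ?_⟩
    rw [integral_const_mul, integral_add_right_eq_self (fun t : ℝ => ((Real.sigmoid t * (1 - Real.sigmoid t) : ℝ) : ℂ) * Complex.exp (Complex.I * n * t)), K2]
  obtain ⟨P1, P2⟩ := S u
  obtain ⟨M1, M2⟩ := S (-u)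
  have ibp := integral_mul_deriv_eq_deriv_mul_of_integrable
    (u := fun t : ℝ => ((Real.sigmoid (t + u) - Real.sigmoid (t + -u) : ℝ) : ℂ))
    (u' := fun t : ℝ => ((Real.sigmoid (t + u) * (1 - Real.sigmoid (t+u)) - Real.sigmoid (t + -u) * (1 - Real.sigmoid (t + -u)) : ℝ) : ℂ))
    (v := fun t : ℝ => Complex.exp (Complex.I * n * t))
    (v' := fun t : ℝ => Complex.exp (Complex.I * n * t) * (Complex.I * n))
    (fun x _ => (((Real.hasDerivAt_sigmoid (x+u)).comp_add_const x u).sub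
       ((Real.hasDerivAt_sigmoid (x+ -u)).comp_add_const x (-u))).ofReal_comp)
    (fun x _ => by
      have := ((hasDerivAt_id (x:ℂ)).const_mul (Complex.I * n)).cexp.comp_ofReal
      simpa using this)
  have e1 : ∀ t : ℝ, ((Real.sigmoid (t + u) - Real.sigmoid (t + -u) : ℝ) : ℂ)
      = Real.sinh u * (((Real.cosh t + Real.cosh u)⁻¹ : ℝ) : ℂ) := by
    intro t
    rw [← sub_eq_add_neg, aux_diff, div_eq_mul_inv, Complex.ofReal_mul]
  have e2 : ∀ t : ℝ, ((Real.sigmoid (t + u) * (1 - Real.sigmoid (t+u)) - Real.sigmoid (t + -u) * (1 - Real.sigmoid (t + -u)) : ℝ) : ℂ) * Complex.exp (Complex.I * n * t)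
     = ((Real.sigmoid (t+u) * (1 - Real.sigmoid (t+u)) : ℝ) : ℂ) * Complex.exp (Complex.I * n * t) -
     ((Real.sigmoid (t+ -u) * (1 - Real.sigmoid (t+ -u)) : ℝ) : ℂ) * Complex.exp (Complex.I * n * t) := by
    intro t; rw [Complex.ofReal_sub, sub_mul]
  have e3 : ∀ t : ℝ, Real.sinh u * (((Real.cosh t + Real.cosh u)⁻¹ : ℝ) : ℂ) * (Complex.exp (Complex.I * n * t) * (Complex.I * n))
     = (Real.sinh u * (Complex.I * n)) * ((((Real.cosh t + Real.cosh u)⁻¹ : ℝ) : ℂ) * Complex.exp (Complex.I * n * t)) := by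
    intro t; ring
  simp only [e1, e2, Pi.mul_def, e3, mul_assoc (Real.sinh u : ℂ) (((Real.cosh _ + Real.cosh u)⁻¹ : ℝ) : ℂ) (Complex.exp _)] at ibp
  have ibp := ibp (H1.const_mul _) (P1.sub M1) (H1.const_mul _)
  rw [integral_const_mul, integral_sub P1 M1, P2, M2] at ibp
  have hs' : (Real.sinh u : ℂ) ≠ 0 := by exact_mod_cast hs
  have hsp' : (Real.sinh (Real.pi * n) : ℂ) ≠ 0 := by exact_mod_cast hsp
  apply mul_left_cancel₀ (mul_ne_zero hs' hI)
  rw [ibp]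
  have hsin : Complex.exp (-(Complex.I * n * u)) - Complex.exp (-(Complex.I * n * (-u : ℝ)))
     = - (2 * Complex.I * (Real.sin (n * u) : ℝ)) := by
    rw [Complex.ofReal_sin, Complex.sin]
    push_cast
    rw [show -(Complex.I * n * u) = - (n * u : ℂ) * Complex.I by ring,
     show -(Complex.I * n * -u) = (n * u : ℂ) * Complex.I by ring]
    linear_combination ((Complex.exp (- (n * u : ℂ) * Complex.I) - Complex.exp ((n * u : ℂ) * Complex.I))) * Complex.I_sq
  rw [← sub_mul, hsin]
  rw [Complex.ofReal_div, Complex.ofReal_div, Complex.ofReal_mul (Real.sinh _)]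
  field_simp
  push_cast
  ring

lemma aux_real (n : ℝ) (f : ℝ → ℝ) (hf : ∀ t, f |t| = f t) (r : ℝ)
    (h : Integrable (fun t : ℝ => (f t : ℂ) * Complex.exp (Complex.I * n * t)))
    (hr : ∫ t : ℝ, (f t : ℂ) * Complex.exp (Complex.I * n * t) = (r : ℂ)) :
    IntegrableOn (fun t => f t * Real.cos (n * t)) (Set.Ioi 0) ∧
    ∫ t in Set.Ioi (0:ℝ), f t * Real.cos (n * t) = r / 2 := by
  have e : ∀ t : ℝ, RCLike.re ((f t : ℂ) * Complex.exp (Complex.I * n * t)) = f t * Real.cos (n * t) := by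
    intro t
    rw [show Complex.I * n * t = ((n * t : ℝ) : ℂ) * Complex.I by push_cast; ring]
    simp [Complex.exp_ofReal_mul_I_re, -Complex.ofReal_mul]
  have h1 := integral_re h
  have h2 := h.re
  simp only [e] at h1 h2
  refine ⟨h2.integrableOn, ?_⟩
  have h3 := integral_comp_abs (f := fun t => f t * Real.cos (n * t))
  have e2 : ∀ t : ℝ, f |t| * Real.cos (n * |t|) = f t * Real.cos (n * t) := by
    intro t
    rw [hf]
    rcases abs_choice t with h | h <;> rw [h]
    rw [mul_neg, Real.cos_neg]
  simp only [e2] at h3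
  rw [h1, hr] at h3
  have : (RCLike.re (r : ℂ) : ℝ) = r := Complex.ofReal_re r
  linarith

theorem statement19 (u : ℝ) (hu : u ∈ Set.Icc (-Real.pi) Real.pi) (hu0 : u ≠ 0)
    (n : ℕ) (hn : 1 ≤ n) :
    ∫ t in Set.Ioi (0 : ℝ), Real.cos (n * t) / (Real.cosh t * (Real.cosh t + Real.cosh u))
      = Real.pi / (2 * Real.cosh (Real.pi * n / 2) * Real.cosh u) -
        2 * Real.pi * Real.sin (n * u) / (Real.sinh (Real.pi * n) * Real.sinh (2 * u)) := by
  have hn' : (n : ℝ) ≠ 0 := by positivity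
  obtain ⟨A1, A2⟩ := aux_one n
  obtain ⟨B1, B2⟩ := aux_three n u hn' hu0
  simp only [← Complex.ofReal_inv] at A1 A2
  obtain ⟨C1, C2⟩ := aux_real n (fun t => (Real.cosh t)⁻¹) (by simp) _ A1 A2
  obtain ⟨D1, D2⟩ := aux_real n (fun t => (Real.cosh t + Real.cosh u)⁻¹) (by simp) _ B1 B2
  have hc := Real.cosh_pos u
  have e : ∀ t : ℝ, Real.cos (n * t) / (Real.cosh t * (Real.cosh t + Real.cosh u))
     = (Real.cosh u)⁻¹ * ((Real.cosh t)⁻¹ * Real.cos (n * t) - (Real.cosh t + Real.cosh u)⁻¹ * Real.cos (n * t)) := by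
    intro t
    have := Real.cosh_pos t
    field_simp
    ring
  simp only [e]
  rw [integral_const_mul, integral_sub C1 D1, C2, D2, Real.sinh_two_mul]
  have hs : Real.sinh u ≠ 0 := by simpa using hu0
  have hsp : Real.sinh (Real.pi * n) ≠ 0 := by
    simpa [Real.pi_ne_zero] using hn'
  have := Real.cosh_pos (Real.pi * n / 2)
  field_simp
end
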